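/- Let d ≥ 1, f ∈ C^∞([0,∞); ℝ), a₀ ∈ 𝒮(ℝ^d), and let V, φ₀ satisfy Assumption (A). Let T > 0 and let φ ∈ C^∞([0,T]×ℝ^d; ℝ) solve ∂_t φ + (1/2)|∇_x φ|² + V = 0 with φ(0,·) = φ₀ and ∂_x^α φ bounded on [0,T]×ℝ^d for every |α| ≥ 2. For y ∈ ℝ^d let (x(t,y), ξ(t,y)) solve ∂_t x = ξ, ∂_t ξ = −∇_x V(t,x), x(0,y) = y, ξ(0,y) = ∇φ₀(y), and assume there is c > 0 such that for every t ∈ [0,T] the map y ↦ x(t,y) is a C^∞ diffeomorphism of ℝ^d with inverse x ↦ y(t,x) and Jacobian J_t(y) := det(∂x(t,y)/∂y) ≥ c. Define a(t,x) := J_t(y(t,x))^{−1/2} a₀(y(t,x)) and G(t,x) := −∫₀ᵗ f( J_s(y(t,x))^{−1} |a₀(y(t,x))|² ) ds. Let (ψ^ε)_{ε∈(0,1]} be an admissible solution family on [0,T] of the equation iε∂_t ψ = −(ε²/2)Δψ + V(t,x)ψ + ε f(|ψ|²)ψ with initial data ψ^ε(0,x) = a₀(x) e^{iφ₀(x)/ε}.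 Then sup_{t∈[0,T]} ( ‖ψ^ε(t,·) − a(t,·) e^{iG(t,·)} e^{iφ(t,·)/ε}‖_{L²(ℝ^d)} + ‖ψ^ε(t,·) − a(t,·) e^{iG(t,·)} e^{iφ(t,·)/ε}‖_{L^∞(ℝ^d)} ) → 0 as ε → 0. -/

import Mathlib

open MeasureTheory Filter Complex Set
open scoped ENNReal

noncomputable section

/-- `ℝ^d` as a Euclidean space. -/
abbrev Ed (d : ℕ) := EuclideanSpace ℝ (Fin d)

/-- The Laplacian `Δf(x) = ∑ᵢ ∂²f/∂xᵢ²`. -/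
noncomputable def lap (d : ℕ) (f : Ed d → ℂ) (x : Ed d) : ℂ :=
  ∑ i : Fin d,
    fderiv ℝ (fun y => fderiv ℝ f y (EuclideanSpace.single i 1)) x (EuclideanSpace.single i 1)

/-- Jacobian determinant `J_t(y) = det ∂x(t,y)/∂y` of a flow map. -/
noncomputable def Jdet (d : ℕ) (X : ℝ → Ed d → Ed d) (t : ℝ) (y : Ed d) : ℝ :=
  LinearMap.det ((fderiv ℝ (X t) y : Ed d →L[ℝ] Ed d) : Ed d →ₗ[ℝ] Ed d)

/-- An admissible solution family on `[0,T]`: continuous in `(t,x)`, `C¹` in `t`,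
`C^∞` in `x`, and all spatial derivatives are bounded and continuous as maps from
`[0,T]` into `L²(ℝ^d)`. -/
def AdmissibleFamily (d : ℕ) (T : ℝ) (ψ : ℝ → ℝ → Ed d → ℂ) : Prop :=
  ∀ ε ∈ Set.Ioc (0 : ℝ) 1,
    Continuous (fun p : ℝ × Ed d => ψ ε p.1 p.2) ∧
    (∀ x, ContDiff ℝ 1 (fun t => ψ ε t x)) ∧
    (∀ t, ContDiff ℝ (⊤ : ℕ∞) (ψ ε t)) ∧
    (∀ n : ℕ, ∃ C : ℝ, ∀ t ∈ Set.Icc (0 : ℝ) T,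
      eLpNorm (fun x => iteratedFDeriv ℝ n (ψ ε t) x) 2 volume ≤ ENNReal.ofReal C) ∧
    (∀ n : ℕ, ∀ t₀ ∈ Set.Icc (0 : ℝ) T,
      Tendsto (fun t =>
          (eLpNorm (fun x => iteratedFDeriv ℝ n (ψ ε t) x - iteratedFDeriv ℝ n (ψ ε t₀) x)
            2 volume).toReal)
        (nhdsWithin t₀ (Set.Icc 0 T)) (nhds 0))

/-!
The phase is removed exactly: with `b = ∇φ`, the function `e^{-iφ/ε} ψ` solves the transport
equation along `b` with the dispersive term `(iε/2) Δ` and the nonlinearity `f(|·|²)` of size one.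
Dropping the dispersive term leaves an equation along the trajectories of `b` in which the modulus
and the phase decouple, and the explicit amplitude `A = a e^{iG}` of the statement is its solution
(`WKB.Flow.amp`, `WKB.Flow.amp_eq`); the Jacobian enters through Liouville's formula
(`WKB.Flow.jdet`). The trajectories of `b` are the Hamiltonian ones by uniqueness for ordinary
differential equations, since `∇φ` satisfies the differentiated eikonal equation
(`WKB.flow_of_eik`). The vector field `b` has bounded derivatives, so `A` is Schwartz in `x`
uniformly on `[0,T]`.

The remainder `w = e^{-iφ/ε} ψ - A` vanishes initially and solves the transport equation with the
term `(iε/2) Δ w`, which is skew-adjoint, a nonlinear term which is locally Lipschitz in `w`, and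
the source `(iε/2) Δ A` (`WKB.err_of`). Differentiating along a word of coordinate directions
produces commutators with `b · ∇` which lose no derivative because the derivatives of `b` are
bounded (`WKB.comm_Tr`); hence the sum `E` of the squared `L²` norms of the derivatives of `w` of
order at most `s = 4(d+1)` satisfies `E' ≤ K E + K ε²`, with `K` independent of `ε`, as long as `w`
and its derivatives of order at most `2(d+1)` are bounded by `1` (`WKB.word_energy`). These low
derivatives are controlled by `E` (`WKB.sobolev_loc`), so a continuity argument and Gronwall's
inequality give `E ≤ C ε²` on `[0,T]` for small `ε` (`WKB.energy`), which bounds both norms of `w`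
by a multiple of `ε`.

The integrations by parts above involve the unbounded coefficients `b` and `V`. They are
justified because the exact solution at fixed `ε` is Schwartz in `x` (`WKB.Sch.us`): this follows
from an energy estimate with weights that grow polynomially, regularized by a decaying factor which
is removed at the end; each derivative falling on `V` costs one power of `1 + |x|`, so the powers
of the weight decrease with the order of the derivative.

Rates of growth in `x`, uniform in the time, are recorded by the classes `WKB.BB` (all derivatives
bounded), `WKB.PG` (polynomial growth) and `WKB.US` (uniformly Schwartz).
-/

namespace WKB

/-! ### Families of smooth functions with weighted derivative bounds -/

section Families

variable {ι E F G H : Type} [NormedAddCommGroup E] [NormedSpace ℝ E]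
  [NormedAddCommGroup F] [NormedSpace ℝ F] [NormedAddCommGroup G] [NormedSpace ℝ G]
  [NormedAddCommGroup H] [NormedSpace ℝ H]

/-- Every member `u i`, `i ∈ S`, of the family is `C^∞`. -/
def Sm (S : Set ι) (u : ι → E → F) : Prop := ∀ i ∈ S, ContDiff ℝ (⊤ : ℕ∞) (u i)

/-- The `n`-th derivatives of the family are bounded by a constant multiple of the weight `W`,
with one constant for all indices in `S`. -/
def Bd (S : Set ι) (W : ι → E → ℝ) (n : ℕ) (u : ι → E → F) : Prop :=
  ∃ C : ℝ, 0 ≤ C ∧ ∀ i ∈ S, ∀ x, ‖iteratedFDeriv ℝ n (u i) x‖ ≤ C * W i x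

/-- The weight `1`. -/
def one : ι → E → ℝ := fun _ _ => 1

/-- Polynomial weights `(1 + ‖x‖)^k`. -/
def pw (k : ℕ) : ι → E → ℝ := fun _ x => (1 + ‖x‖) ^ k

/-- Decaying weights `(1 + ‖x‖)^(-k)`. -/
def dw (k : ℕ) : ι → E → ℝ := fun _ x => ((1 + ‖x‖) ^ k)⁻¹

/-- Smooth families with all derivatives (including the zeroth) uniformly bounded. -/
def BB (S : Set ι) (u : ι → E → F) : Prop := Sm S u ∧ ∀ n, Bd S one n u

/-- Smooth families whose derivatives grow at most polynomially, uniformly on the family. -/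
def PG (S : Set ι) (u : ι → E → F) : Prop := Sm S u ∧ ∀ n, ∃ k, Bd S (pw k) n u

/-- Families that are bounded in the Schwartz space. -/
def US (S : Set ι) (u : ι → E → F) : Prop := Sm S u ∧ ∀ n k, Bd S (dw k) n u

variable {S : Set ι} {u v : ι → E → F}

lemma one_le_w (x : E) : 1 ≤ 1 + ‖x‖ := by linarith [norm_nonneg x]

lemma w_pos (x : E) : 0 < 1 + ‖x‖ := by linarith [norm_nonneg x]

lemma pw_pos (k : ℕ) (i : ι) (x : E) : 0 < pw k i x := pow_pos (w_pos x) k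

lemma dw_pos (k : ℕ) (i : ι) (x : E) : 0 < dw k i x := inv_pos.2 (pow_pos (w_pos x) k)

lemma Sm.congr (hu : Sm S u) (h : ∀ i ∈ S, ∀ x, v i x = u i x) : Sm S v := by
  intro i hi
  have : v i = u i := funext (h i hi)
  rw [this]; exact hu i hi

lemma Bd.congr {W : ι → E → ℝ} {n : ℕ} (hu : Bd S W n u) (h : ∀ i ∈ S, ∀ x, v i x = u i x) :
    Bd S W n v := by
  obtain ⟨C, h0, hC⟩ := hu
  refine ⟨C, h0, fun i hi x => ?_⟩
  have : v i = u i := funext (h i hi)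
  rw [this]; exact hC i hi x

lemma Bd.mono {W W' : ι → E → ℝ} {n : ℕ} (hu : Bd S W n u) {K : ℝ} (hK : 0 ≤ K)
    (h : ∀ i ∈ S, ∀ x, W i x ≤ K * W' i x) : Bd S W' n u := by
  obtain ⟨C, h0, hC⟩ := hu
  refine ⟨C * K, by positivity, fun i hi x => (hC i hi x).trans ?_⟩
  rw [mul_assoc]
  exact mul_le_mul_of_nonneg_left (h i hi x) h0

lemma Bd.mono' {W W' : ι → E → ℝ} {n : ℕ} (hu : Bd S W n u)
    (h : ∀ i ∈ S, ∀ x, W i x ≤ W' i x) : Bd S W' n u :=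
  hu.mono zero_le_one (by simpa using h)

lemma Bd.subset {S' : Set ι} {W : ι → E → ℝ} {n : ℕ} (hu : Bd S W n u) (h : S' ⊆ S) :
    Bd S' W n u := by
  obtain ⟨C, h0, hC⟩ := hu
  exact ⟨C, h0, fun i hi x => hC i (h hi) x⟩

/-- Reindexing a family. -/
lemma Bd.reindex {κ : Type} {S' : Set κ} (p : κ → ι) (hp : ∀ k ∈ S', p k ∈ S)
    {W : ι → E → ℝ} {n : ℕ} (hu : Bd S W n u) :
    Bd S' (fun k => W (p k)) n (fun k => u (p k)) := by
  obtain ⟨C, h0, hC⟩ := hu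
  exact ⟨C, h0, fun k hk x => hC _ (hp k hk) x⟩

lemma Bd.add {W : ι → E → ℝ} {n : ℕ} (su : Sm S u) (sv : Sm S v)
    (hu : Bd S W n u) (hv : Bd S W n v) : Bd S W n (fun i x => u i x + v i x) := by
  obtain ⟨C, h0, hC⟩ := hu
  obtain ⟨C', h0', hC'⟩ := hv
  refine ⟨C + C', by positivity, fun i hi x => ?_⟩
  have e : iteratedFDeriv ℝ n (fun x => u i x + v i x) x
      = iteratedFDeriv ℝ n (u i) x + iteratedFDeriv ℝ n (v i) x :=
    iteratedFDeriv_add_apply ((su i hi).contDiffAt.of_le (mod_cast le_top))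
      ((sv i hi).contDiffAt.of_le (mod_cast le_top))
  rw [e, add_mul]
  exact (norm_add_le _ _).trans (add_le_add (hC i hi x) (hC' i hi x))

lemma Bd.clm {W : ι → E → ℝ} {n : ℕ} (su : Sm S u) (hu : Bd S W n u) (L : F →L[ℝ] G) :
    Bd S W n (fun i x => L (u i x)) := by
  obtain ⟨C, h0, hC⟩ := hu
  refine ⟨‖L‖ * C, by positivity, fun i hi x => ?_⟩
  refine (L.norm_iteratedFDeriv_comp_left (su i hi).contDiffAt (mod_cast le_top)).trans ?_
  rw [mul_assoc]
  exact mul_le_mul_of_nonneg_left (hC i hi x) (norm_nonneg _)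

lemma Bd.neg {W : ι → E → ℝ} {n : ℕ} (hu : Bd S W n u) :
    Bd S W n (fun i x => - u i x) := by
  obtain ⟨C, h0, hC⟩ := hu
  refine ⟨C, h0, fun i hi x => ?_⟩
  have : iteratedFDeriv ℝ n (fun x => - u i x) x = - iteratedFDeriv ℝ n (u i) x :=
    iteratedFDeriv_neg_apply
  rw [this, norm_neg]; exact hC i hi x

lemma Bd.fderiv {W : ι → E → ℝ} {n : ℕ} (hu : Bd S W (n + 1) u) :
    Bd S W n (fun i => fderiv ℝ (u i)) := by
  obtain ⟨C, h0, hC⟩ := hu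
  exact ⟨C, h0, fun i hi x => by rw [norm_iteratedFDeriv_fderiv]; exact hC i hi x⟩

lemma Bd.of_fderiv {W : ι → E → ℝ} {n : ℕ} (hu : Bd S W n (fun i => _root_.fderiv ℝ (u i))) :
    Bd S W (n + 1) u := by
  obtain ⟨C, h0, hC⟩ := hu
  exact ⟨C, h0, fun i hi x => by rw [← norm_iteratedFDeriv_fderiv]; exact hC i hi x⟩

/-- Leibniz rule: the weight of a bilinear expression is the product of the weights. -/
lemma Bd.bilin (B : F →L[ℝ] G →L[ℝ] H) {w : ι → E → G} {n : ℕ} {W : ι → E → ℝ}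
    (W1 W2 : ℕ → ι → E → ℝ)
    (su : Sm S u) (sw : Sm S w) (h1 : ∀ k ≤ n, Bd S (W1 k) k u) (h2 : ∀ k ≤ n, Bd S (W2 k) k w)
    (h : ∀ k ≤ n, ∃ K, 0 ≤ K ∧ ∀ i ∈ S, ∀ x, 0 ≤ W1 k i x ∧
      W1 k i x * W2 (n - k) i x ≤ K * W i x) :
    Bd S W n (fun i x => B (u i x) (w i x)) := by
  choose! C1 hC1 b1 using h1
  choose! C2 hC2 b2 using h2
  choose! K hK b using h
  refine ⟨‖B‖ * ∑ k ∈ Finset.range (n + 1), (n.choose k : ℝ) * (C1 k * C2 (n - k) * K k), ?_, ?_⟩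
  · refine mul_nonneg B.opNorm_nonneg (Finset.sum_nonneg fun k hk => ?_)
    have hk' : k ≤ n := Nat.lt_succ_iff.1 (Finset.mem_range.1 hk)
    have := hC1 k hk'; have := hC2 (n - k) (Nat.sub_le _ _); have := hK k hk'
    positivity
  · intro i hi x
    refine (B.norm_iteratedFDeriv_le_of_bilinear (su i hi) (sw i hi) x
      (n := n) (mod_cast le_top)).trans ?_
    rw [mul_assoc, Finset.sum_mul]
    refine mul_le_mul_of_nonneg_left (Finset.sum_le_sum fun k hk => ?_) B.opNorm_nonneg
    have hk' : k ≤ n := Nat.lt_succ_iff.1 (Finset.mem_range.1 hk)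
    have c1 := hC1 k hk'
    have c2 := hC2 (n - k) (Nat.sub_le _ _)
    obtain ⟨p1, p2⟩ := b k hk' i hi x
    have e1 := b1 k hk' i hi x
    have e2 := b2 (n - k) (Nat.sub_le _ _) i hi x
    calc (n.choose k : ℝ) * ‖iteratedFDeriv ℝ k (u i) x‖ * ‖iteratedFDeriv ℝ (n - k) (w i) x‖
        ≤ n.choose k * (C1 k * W1 k i x) * (C2 (n - k) * W2 (n - k) i x) := by gcongr
      _ = n.choose k * (C1 k * C2 (n - k)) * (W1 k i x * W2 (n - k) i x) := by ring
      _ ≤ n.choose k * (C1 k * C2 (n - k)) * (K k * W i x) := by gcongr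
      _ = _ := by ring

lemma Sm.bilin (B : F →L[ℝ] G →L[ℝ] H) {w : ι → E → G} (su : Sm S u) (sw : Sm S w) :
    Sm S (fun i x => B (u i x) (w i x)) := fun i hi =>
  (B.contDiff.comp (su i hi)).clm_apply (sw i hi)

lemma Sm.add (su : Sm S u) (sw : Sm S v) :
    Sm S (fun i x => u i x + v i x) := fun i hi => (su i hi).add (sw i hi)

lemma Sm.neg (su : Sm S u) : Sm S (fun i x => - u i x) := fun i hi => (su i hi).neg

lemma Sm.clm (su : Sm S u) (L : F →L[ℝ] G) : Sm S (fun i x => L (u i x)) := fun i hi =>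
  L.contDiff.comp (su i hi)

lemma Sm.fderiv (su : Sm S u) : Sm S (fun i => fderiv ℝ (u i)) := fun i hi =>
  (su i hi).fderiv_right (by simp)

lemma Sm.diff (su : Sm S u) {i : ι} (hi : i ∈ S) : Differentiable ℝ (u i) :=
  (su i hi).differentiable (by simp)

/-! ### Closure properties of the classes -/

lemma BB.add (hu : BB S u) (hv : BB S v) : BB S (fun i x => u i x + v i x) :=
  ⟨hu.1.add hv.1, fun n => (hu.2 n).add hu.1 hv.1 (hv.2 n)⟩

lemma US.add (hu : US S u) (hv : US S v) : US S (fun i x => u i x + v i x) :=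
  ⟨hu.1.add hv.1, fun n k => (hu.2 n k).add hu.1 hv.1 (hv.2 n k)⟩

lemma Bd.pw_le {n k k' : ℕ} (h : k ≤ k') (hu : Bd S (pw k) n u) : Bd S (pw k') n u :=
  hu.mono' fun _ _ x => pow_le_pow_right₀ (one_le_w x) h

lemma PG.exists_le (hu : PG S u) (n : ℕ) : ∃ k, ∀ m ≤ n, Bd S (pw k) m u := by
  choose k hk using hu.2
  refine ⟨∑ m ∈ Finset.range (n + 1), k m, fun m hm => (hk m).pw_le ?_⟩
  exact Finset.single_le_sum (f := k) (fun _ _ => Nat.zero_le _)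
    (Finset.mem_range.2 (Nat.lt_succ_iff.2 hm))

lemma PG.add (hu : PG S u) (hv : PG S v) : PG S (fun i x => u i x + v i x) := by
  refine ⟨hu.1.add hv.1, fun n => ?_⟩
  obtain ⟨k, hk⟩ := hu.2 n
  obtain ⟨k', hk'⟩ := hv.2 n
  exact ⟨k + k', (hk.pw_le (Nat.le_add_right _ _)).add hu.1 hv.1 (hk'.pw_le (Nat.le_add_left _ _))⟩

lemma BB.neg (hu : BB S u) : BB S (fun i x => - u i x) := ⟨hu.1.neg, fun n => (hu.2 n).neg⟩
lemma PG.neg (hu : PG S u) : PG S (fun i x => - u i x) :=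
  ⟨hu.1.neg, fun n => (hu.2 n).imp fun _ h => h.neg⟩
lemma US.neg (hu : US S u) : US S (fun i x => - u i x) := ⟨hu.1.neg, fun n k => (hu.2 n k).neg⟩

lemma BB.clm (hu : BB S u) (L : F →L[ℝ] G) : BB S (fun i x => L (u i x)) :=
  ⟨hu.1.clm L, fun n => (hu.2 n).clm hu.1 L⟩
lemma PG.clm (hu : PG S u) (L : F →L[ℝ] G) : PG S (fun i x => L (u i x)) :=
  ⟨hu.1.clm L, fun n => (hu.2 n).imp fun _ h => h.clm hu.1 L⟩
lemma US.clm (hu : US S u) (L : F →L[ℝ] G) : US S (fun i x => L (u i x)) :=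
  ⟨hu.1.clm L, fun n k => (hu.2 n k).clm hu.1 L⟩

lemma BB.fderiv (hu : BB S u) : BB S (fun i => fderiv ℝ (u i)) :=
  ⟨hu.1.fderiv, fun n => (hu.2 (n + 1)).fderiv⟩
lemma PG.fderiv (hu : PG S u) : PG S (fun i => fderiv ℝ (u i)) :=
  ⟨hu.1.fderiv, fun n => (hu.2 (n + 1)).imp fun _ h => h.fderiv⟩
lemma US.fderiv (hu : US S u) : US S (fun i => fderiv ℝ (u i)) :=
  ⟨hu.1.fderiv, fun n k => (hu.2 (n + 1) k).fderiv⟩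

lemma BB.pd (hu : BB S u) (e : E) : BB S (fun i x => _root_.fderiv ℝ (u i) x e) :=
  hu.fderiv.clm (ContinuousLinearMap.apply ℝ F e)
lemma PG.pd (hu : PG S u) (e : E) : PG S (fun i x => _root_.fderiv ℝ (u i) x e) :=
  hu.fderiv.clm (ContinuousLinearMap.apply ℝ F e)
lemma US.pd (hu : US S u) (e : E) : US S (fun i x => _root_.fderiv ℝ (u i) x e) :=
  hu.fderiv.clm (ContinuousLinearMap.apply ℝ F e)

lemma BB.toPG (hu : BB S u) : PG S u :=
  ⟨hu.1, fun n => ⟨0, (hu.2 n).mono' fun _ _ x => by simp [pw, one]⟩⟩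

lemma US.toBB (hu : US S u) : BB S u :=
  ⟨hu.1, fun n => (hu.2 n 0).mono' fun _ _ x => by simp [dw, one]⟩

lemma US.toPG (hu : US S u) : PG S u := hu.toBB.toPG

lemma BB.congr (hu : BB S u) (h : ∀ i ∈ S, ∀ x, v i x = u i x) : BB S v :=
  ⟨hu.1.congr h, fun n => (hu.2 n).congr h⟩
lemma PG.congr (hu : PG S u) (h : ∀ i ∈ S, ∀ x, v i x = u i x) : PG S v :=
  ⟨hu.1.congr h, fun n => (hu.2 n).imp fun _ hk => hk.congr h⟩
lemma US.congr (hu : US S u) (h : ∀ i ∈ S, ∀ x, v i x = u i x) : US S v :=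
  ⟨hu.1.congr h, fun n k => (hu.2 n k).congr h⟩

lemma BB.bilin (B : F →L[ℝ] G →L[ℝ] H) {w : ι → E → G} (hu : BB S u) (hw : BB S w) :
    BB S (fun i x => B (u i x) (w i x)) :=
  ⟨hu.1.bilin B hw.1, fun _ => Bd.bilin B (fun _ => one) (fun _ => one) hu.1 hw.1
    (fun k _ => hu.2 k) (fun k _ => hw.2 k)
    (fun _ _ => ⟨1, zero_le_one, fun _ _ _ => by simp [one]⟩)⟩

lemma PG.bilin (B : F →L[ℝ] G →L[ℝ] H) {w : ι → E → G} (hu : PG S u) (hw : PG S w) :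
    PG S (fun i x => B (u i x) (w i x)) := by
  refine ⟨hu.1.bilin B hw.1, fun n => ?_⟩
  obtain ⟨k, hk⟩ := hu.exists_le n
  obtain ⟨k', hk'⟩ := hw.exists_le n
  refine ⟨k + k', Bd.bilin B (fun _ => pw k) (fun _ => pw k') hu.1 hw.1 hk hk'
    (fun _ _ => ⟨1, zero_le_one, fun i _ x => ⟨(pw_pos _ i x).le, ?_⟩⟩)⟩
  simp [pw, pow_add]

lemma US.bilin (B : F →L[ℝ] G →L[ℝ] H) {w : ι → E → G} (hu : PG S u) (hw : US S w) :
    US S (fun i x => B (u i x) (w i x)) := by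
  refine ⟨hu.1.bilin B hw.1, fun n j => ?_⟩
  obtain ⟨k, hk⟩ := hu.exists_le n
  refine Bd.bilin B (fun _ => pw k) (fun _ => dw (k + j)) hu.1 hw.1 hk (fun m _ => hw.2 m _)
    (fun _ _ => ⟨1, zero_le_one, fun i _ x => ⟨(pw_pos _ i x).le, ?_⟩⟩)
  have := w_pos x
  rw [one_mul]
  simp only [pw, dw, pow_add]
  apply le_of_eq
  field_simp

/-- Composition with a fixed smooth function of a bounded family. -/
lemma BB.comp_smooth [FiniteDimensional ℝ F] (hu : BB S u) {g : F → G}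
    (hg : ContDiff ℝ (⊤ : ℕ∞) g) : BB S (fun i x => g (u i x)) := by
  refine ⟨fun i hi => hg.comp (hu.1 i hi), fun n => ?_⟩
  choose C hC b using hu.2
  have hc : ∀ k, ∃ K : ℝ, 0 ≤ K ∧ ∀ y ∈ Metric.closedBall (0 : F) (C 0),
      ‖iteratedFDeriv ℝ k g y‖ ≤ K := by
    intro k
    obtain ⟨K, hK⟩ := (isCompact_closedBall (0 : F) (C 0)).exists_bound_of_continuousOn
      (f := iteratedFDeriv ℝ k g)
      (hg.continuous_iteratedFDeriv (m := k) (mod_cast le_top)).continuousOn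
    exact ⟨max K 0, le_max_right _ _, fun y hy => (hK y hy).trans (le_max_left _ _)⟩
  choose K hK bK using hc
  set M := ∑ k ∈ Finset.range (n + 1), K k with hM
  set D := 1 + ∑ k ∈ Finset.range (n + 1), C k with hD
  have hM0 : 0 ≤ M := Finset.sum_nonneg fun k _ => hK k
  have hD1 : 1 ≤ D := by
    have : 0 ≤ ∑ k ∈ Finset.range (n + 1), C k := Finset.sum_nonneg fun k _ => hC k
    linarith
  refine ⟨n.factorial * M * D ^ n, by positivity, fun i hi x => ?_⟩
  have hball : u i x ∈ Metric.closedBall (0 : F) (C 0) := by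
    have := b 0 i hi x
    simpa [one] using this
  simp only [one, mul_one]
  refine norm_iteratedFDeriv_comp_le hg (hu.1 i hi) (n := n) (mod_cast le_top) x ?_ ?_
  · intro k hk
    exact (bK k _ hball).trans (Finset.single_le_sum (f := K) (fun k _ => hK k)
      (Finset.mem_range.2 (Nat.lt_succ_iff.2 hk)))
  · intro k hk1 hk
    have h1 := b k i hi x
    simp only [one, mul_one] at h1
    have h2 : C k ≤ ∑ k ∈ Finset.range (n + 1), C k :=
      Finset.single_le_sum (f := C) (fun k _ => hC k) (Finset.mem_range.2 (Nat.lt_succ_iff.2 hk))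
    calc _ ≤ C k := h1
      _ ≤ D := by linarith
      _ = D ^ 1 := (pow_one _).symm
      _ ≤ D ^ k := pow_le_pow_right₀ hD1 hk1

/-- The composition estimate for families, up to a finite order. -/
lemma Bd.comp {g : ι → F → G} {n : ℕ} (sg : Sm S g) (su : Sm S u)
    (hg : ∀ k ≤ n, Bd S one k g) (hu : ∀ k, 1 ≤ k → k ≤ n → Bd S one k u) :
    Bd S one n (fun i x => g i (u i x)) := by
  choose! K hK bK using hg
  choose! C hC b using hu
  set M := ∑ k ∈ Finset.range (n + 1), K k with hM
  set D := 1 + ∑ k ∈ Finset.Icc 1 n, C k with hD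
  have hM0 : 0 ≤ M := Finset.sum_nonneg fun k hk => hK k (Nat.lt_succ_iff.1 (Finset.mem_range.1 hk))
  have hD1 : 1 ≤ D := by
    have : 0 ≤ ∑ k ∈ Finset.Icc 1 n, C k := Finset.sum_nonneg fun k hk =>
      hC k (Finset.mem_Icc.1 hk).1 (Finset.mem_Icc.1 hk).2
    linarith
  refine ⟨n.factorial * M * D ^ n, by positivity, fun i hi x => ?_⟩
  simp only [one, mul_one]
  refine norm_iteratedFDeriv_comp_le (sg i hi) (su i hi) (n := n) (mod_cast le_top) x ?_ ?_
  · intro k hk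
    have h1 := bK k hk i hi (u i x)
    simp only [one, mul_one] at h1
    exact h1.trans (Finset.single_le_sum (f := K)
      (fun k hk => hK k (Nat.lt_succ_iff.1 (Finset.mem_range.1 hk)))
      (Finset.mem_range.2 (Nat.lt_succ_iff.2 hk)))
  · intro k hk1 hk
    have h1 := b k hk1 hk i hi x
    simp only [one, mul_one] at h1
    have h2 : C k ≤ ∑ k ∈ Finset.Icc 1 n, C k :=
      Finset.single_le_sum (f := C) (fun k hk => hC k (Finset.mem_Icc.1 hk).1 (Finset.mem_Icc.1 hk).2)
        (Finset.mem_Icc.2 ⟨hk1, hk⟩)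
    calc _ ≤ C k := h1
      _ ≤ D := by linarith
      _ = D ^ 1 := (pow_one _).symm
      _ ≤ D ^ k := pow_le_pow_right₀ hD1 hk1

lemma BB.comp {g : ι → F → G} (hg : BB S g) (su : BB S (fun i => _root_.fderiv ℝ (u i)))
    (hs : Sm S u) : BB S (fun i x => g i (u i x)) := by
  refine ⟨fun i hi => (hg.1 i hi).comp (hs i hi), fun n => Bd.comp hg.1 hs (fun k _ => hg.2 k) ?_⟩
  rintro (_ | k) h1 _
  · omega
  · exact (su.2 k).of_fderiv

/-- Composing a bounded family in Schwartz space with maps of bounded derivative whose growth at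
infinity is at least linear gives a bounded family in Schwartz space. -/
lemma US.comp {g : ι → F → G} (hg : US S g) (su : BB S (fun i => _root_.fderiv ℝ (u i)))
    (hs : Sm S u) (hlow : ∃ K : ℝ, 0 ≤ K ∧ ∀ i ∈ S, ∀ x, 1 + ‖x‖ ≤ K * (1 + ‖u i x‖)) :
    US S (fun i x => g i (u i x)) := by
  refine ⟨fun i hi => (hg.1 i hi).comp (hs i hi), fun n j => ?_⟩
  obtain ⟨L, hL, hlow⟩ := hlow
  have hu : ∀ k, 1 ≤ k → k ≤ n → Bd S one k u := by
    rintro (_ | k) h1 _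
    · omega
    · exact (su.2 k).of_fderiv
  choose! C hC b using hu
  have hg2 := fun k => hg.2 k j
  choose K hK bK using hg2
  set M := ∑ k ∈ Finset.range (n + 1), K k with hM
  set D := 1 + ∑ k ∈ Finset.Icc 1 n, C k with hD
  have hM0 : 0 ≤ M := Finset.sum_nonneg fun k hk => hK k
  have hD1 : 1 ≤ D := by
    have : 0 ≤ ∑ k ∈ Finset.Icc 1 n, C k := Finset.sum_nonneg fun k hk =>
      hC k (Finset.mem_Icc.1 hk).1 (Finset.mem_Icc.1 hk).2
    linarith
  refine ⟨n.factorial * (M * L ^ j) * D ^ n, by positivity, fun i hi x => ?_⟩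
  have key := norm_iteratedFDeriv_comp_le (hg.1 i hi) (hs i hi) (n := n) (mod_cast le_top) x
    (C := M * dw j i (u i x)) (D := D) ?_ ?_
  · have h1 : dw j i (u i x) ≤ L ^ j * dw j i x := by
      have h2 := hlow i hi x
      have h3 := w_pos x
      have h4 := w_pos (u i x)
      simp only [dw]
      rw [← div_eq_mul_inv, le_div_iff₀ (by positivity), inv_mul_le_iff₀ (by positivity), mul_comm,
        ← mul_pow]
      exact pow_le_pow_left₀ h3.le h2 j
    calc _ ≤ n.factorial * (M * dw j i (u i x)) * D ^ n := key
      _ ≤ n.factorial * (M * (L ^ j * dw j i x)) * D ^ n := by gcongr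
      _ = _ := by ring
  · intro k hk
    refine (bK k i hi (u i x)).trans ?_
    exact mul_le_mul_of_nonneg_right (Finset.single_le_sum (f := K) (fun k hk => hK k)
      (Finset.mem_range.2 (Nat.lt_succ_iff.2 hk))) (dw_pos _ _ _).le
  · intro k hk1 hk
    have h1 := b k hk1 hk i hi x
    simp only [one, mul_one] at h1
    have h2 : C k ≤ ∑ k ∈ Finset.Icc 1 n, C k :=
      Finset.single_le_sum (f := C) (fun k hk => hC k (Finset.mem_Icc.1 hk).1 (Finset.mem_Icc.1 hk).2)
        (Finset.mem_Icc.2 ⟨hk1, hk⟩)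
    calc _ ≤ C k := h1
      _ ≤ D := by linarith
      _ = D ^ 1 := (pow_one _).symm
      _ ≤ D ^ k := pow_le_pow_right₀ hD1 hk1

end Families

end WKB

namespace WKB

/-! ### Time regularity of families indexed by `[0,T]` -/

set_option linter.unusedSectionVars false

section TimeReg

variable {E F G H : Type} [NormedAddCommGroup E] [NormedSpace ℝ E]
  [NormedAddCommGroup F] [NormedSpace ℝ F]
  [NormedAddCommGroup G] [NormedSpace ℝ G]
  [NormedAddCommGroup H] [NormedSpace ℝ H]

/-- Pointwise continuity in time on `[0,T]`. -/
def CT (T : ℝ) (u : ℝ → E → F) : Prop := ∀ x, ContinuousOn (fun t => u t x) (Icc 0 T)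

/-- `g` is the time derivative of `u`, in the open interval, and both are continuous in time up to
the end points. -/
structure TD (T : ℝ) (u g : ℝ → E → F) : Prop where
  ct : CT T u
  cg : CT T g
  hd : ∀ t ∈ Ioo 0 T, ∀ x, HasDerivAt (fun s => u s x) (g t x) t

/-- The spatial derivative is locally bounded in space, uniformly in time. -/
def LB (T : ℝ) (u : ℝ → E → F) : Prop :=
  ∀ x₀, ∃ C : ℝ, 0 ≤ C ∧ ∀ t ∈ Icc (0 : ℝ) T, ∀ x ∈ Metric.ball x₀ 1, ‖fderiv ℝ (u t) x‖ ≤ C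

variable {T : ℝ} {u v g h : ℝ → E → F}

lemma CT.congr (hu : CT T u) (e : ∀ t ∈ Icc (0 : ℝ) T, ∀ x, v t x = u t x) : CT T v :=
  fun x => (hu x).congr fun t ht => e t ht x

lemma CT.add (hu : CT T u) (hv : CT T v) : CT T (fun t x => u t x + v t x) :=
  fun x => (hu x).add (hv x)

lemma CT.neg (hu : CT T u) : CT T (fun t x => - u t x) := fun x => (hu x).neg

lemma CT.bilin (B : F →L[ℝ] G →L[ℝ] H) {w : ℝ → E → G} (hu : CT T u) (hw : CT T w) :
    CT T (fun t x => B (u t x) (w t x)) :=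
  fun x => (B.continuous.comp_continuousOn (hu x)).clm_apply (hw x)

lemma CT.clm (L : F →L[ℝ] G) (hu : CT T u) : CT T (fun t x => L (u t x)) :=
  fun x => L.continuous.comp_continuousOn (hu x)

lemma TD.congr {u' g' : ℝ → E → F} (h : TD T u g) (e : ∀ t ∈ Icc (0 : ℝ) T, ∀ x, u' t x = u t x)
    (e' : ∀ t ∈ Icc (0 : ℝ) T, ∀ x, g' t x = g t x) : TD T u' g' where
  ct := h.ct.congr e
  cg := h.cg.congr e'
  hd t ht x := by
    rw [e' t (Ioo_subset_Icc_self ht)]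
    refine (h.hd t ht x).congr_of_eventuallyEq ?_
    filter_upwards [Icc_mem_nhds ht.1 ht.2] with s hs using e s hs x

lemma TD.add {u' g' : ℝ → E → F} (h : TD T u g) (h' : TD T u' g') :
    TD T (fun t x => u t x + u' t x) (fun t x => g t x + g' t x) :=
  ⟨h.ct.add h'.ct, h.cg.add h'.cg, fun t ht x => (h.hd t ht x).add (h'.hd t ht x)⟩

lemma TD.neg (h : TD T u g) : TD T (fun t x => - u t x) (fun t x => - g t x) :=
  ⟨h.ct.neg, h.cg.neg, fun t ht x => (h.hd t ht x).neg⟩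

lemma TD.clm (L : F →L[ℝ] G) (h : TD T u g) :
    TD T (fun t x => L (u t x)) (fun t x => L (g t x)) :=
  ⟨h.ct.clm L, h.cg.clm L, fun t ht x => L.hasFDerivAt.comp_hasDerivAt t (h.hd t ht x)⟩

variable [FiniteDimensional ℝ E] [FiniteDimensional ℝ F]

/-- The fundamental theorem of calculus. -/
lemma TD.int (h : TD T u g) {t : ℝ} (ht : t ∈ Icc (0 : ℝ) T) (x : E) :
    u t x = u 0 x + ∫ s in (0 : ℝ)..t, g s x := by
  have hs : Icc 0 t ⊆ Icc 0 T := Icc_subset_Icc_right ht.2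
  rw [intervalIntegral.integral_eq_sub_of_hasDerivAt_of_le ht.1 ((h.ct x).mono hs)
    (fun s hs => h.hd s ⟨hs.1, hs.2.trans_le ht.2⟩ x)]
  · abel
  · exact ((h.cg x).mono hs).intervalIntegrable_of_Icc ht.1

lemma TD.of_int (hg : CT T g)
    (e : ∀ t ∈ Icc (0 : ℝ) T, ∀ x, u t x = u 0 x + ∫ s in (0 : ℝ)..t, g s x) : TD T u g := by
  have hii : ∀ x, ∀ t ∈ Icc (0 : ℝ) T, IntervalIntegrable (fun s => g s x) volume 0 t :=
    fun x t ht => ((hg x).mono (Icc_subset_Icc_right ht.2)).intervalIntegrable_of_Icc ht.1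
  refine ⟨fun x => ?_, hg, fun t ht x => ?_⟩
  · refine ContinuousOn.congr ?_ (fun t ht => e t ht x)
    refine continuousOn_const.add ?_
    by_cases hT : 0 ≤ T
    · have := intervalIntegral.continuousOn_primitive_interval' (hii x T ⟨hT, le_rfl⟩)
        (left_mem_uIcc)
      rwa [uIcc_of_le hT] at this
    · rw [Icc_eq_empty hT]; exact continuousOn_empty _
  · have h1 : HasDerivAt (fun t => u 0 x + ∫ s in (0 : ℝ)..t, g s x) (g t x) t := by
      refine HasDerivAt.const_add _ ?_
      refine intervalIntegral.integral_hasDerivAt_right (hii x t (Ioo_subset_Icc_self ht)) ?_ ?_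
      · exact ContinuousOn.stronglyMeasurableAtFilter isOpen_Ioo
          ((hg x).mono Ioo_subset_Icc_self) t ht
      · exact (hg x).continuousAt (Icc_mem_nhds ht.1 ht.2)
    refine h1.congr_of_eventuallyEq ?_
    filter_upwards [Icc_mem_nhds ht.1 ht.2] with s hs using e s hs x

/-- Gronwall's inequality. -/
lemma TD.gronwall (h : TD T u g) (x : E) {δ K ε : ℝ} (h0 : ‖u 0 x‖ ≤ δ)
    (hb : ∀ t ∈ Icc (0 : ℝ) T, ‖g t x‖ ≤ K * ‖u t x‖ + ε) {t : ℝ} (ht : t ∈ Icc (0 : ℝ) T) :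
    ‖u t x‖ ≤ gronwallBound δ K ε t := by
  have hT : 0 ≤ T := ht.1.trans ht.2
  -- extend the derivative continuously to the real line
  set G := IccExtend hT ((Icc 0 T).domRestrict fun s => g s x) with hG
  have hGc : Continuous G := continuous_IccExtend_iff.2 (continuousOn_iff_continuous_domRestrict.1 (h.cg x))
  have hGe : ∀ s ∈ Icc (0 : ℝ) T, G s = g s x := fun s hs => by
    rw [hG, IccExtend_of_mem _ _ hs]; rfl
  have hU : ∀ s ∈ Icc (0 : ℝ) T, u s x = u 0 x + ∫ r in (0 : ℝ)..s, G r := fun s hs => by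
    rw [h.int hs x]
    congr 1
    refine intervalIntegral.integral_congr fun r hr => ?_
    rw [uIcc_of_le hs.1] at hr
    exact (hGe r ⟨hr.1, hr.2.trans hs.2⟩).symm
  have hd : ∀ s, HasDerivAt (fun s => u 0 x + ∫ r in (0 : ℝ)..s, G r) (G s) s := fun s =>
    HasDerivAt.const_add _ (intervalIntegral.integral_hasDerivAt_right
      (hGc.intervalIntegrable _ _) (hGc.stronglyMeasurableAtFilter _ _) hGc.continuousAt)
  have key := norm_le_gronwallBound_of_norm_deriv_right_le
    (f := fun s => u 0 x + ∫ r in (0 : ℝ)..s, G r) (f' := G) (a := 0) (b := T) (δ := δ) (K := K)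
    (ε := ε) (fun s _ => (hd s).continuousAt.continuousWithinAt)
    (fun s _ => (hd s).hasDerivWithinAt) (by simpa using h0)
    (fun s hs => by
      have hs' := Ico_subset_Icc_self hs
      rw [hGe s hs', ← hU s hs']; exact hb s hs') t ht
  rw [← hU t ht, sub_zero] at key
  exact key

/-- A crude form of the Gronwall bound, with a constant depending on `K` and `T` only. -/
lemma gronwall_le {δ K ε t : ℝ} (hK : 0 ≤ K) (hδ : 0 ≤ δ) (hε : 0 ≤ ε) (h0 : 0 ≤ t) (ht : t ≤ T) :
    gronwallBound δ K ε t ≤ (δ + T * ε) * Real.exp (K * T) := by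
  have hT : 0 ≤ T := h0.trans ht
  have e1 : Real.exp (K * t) ≤ Real.exp (K * T) := Real.exp_le_exp.2 (by gcongr)
  have e2 : 1 ≤ Real.exp (K * T) := Real.one_le_exp (by positivity)
  rcases hK.eq_or_lt with rfl | hK'
  · rw [gronwallBound_K0]
    simp only [zero_mul, Real.exp_zero, mul_one]
    nlinarith
  · rw [gronwallBound_of_K_ne_0 hK'.ne']
    have e3 : Real.exp (K * t) - 1 ≤ K * T * Real.exp (K * T) := by
      have h1 := Real.add_one_le_exp (-(K * t))
      have h2 : Real.exp (-(K * t)) * Real.exp (K * t) = 1 := by rw [← Real.exp_add]; simp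
      have h3 : Real.exp (K * t) - 1 ≤ K * t * Real.exp (K * t) := by
        nlinarith [Real.exp_pos (K * t)]
      refine h3.trans ?_
      gcongr
    have e4 : ε / K * (Real.exp (K * t) - 1) ≤ ε / K * (K * T * Real.exp (K * T)) := by gcongr
    have e5 : ε / K * (K * T * Real.exp (K * T)) = T * ε * Real.exp (K * T) := by
      field_simp
    nlinarith [mul_le_mul_of_nonneg_left e1 hδ]

lemma TD.gronwall' (h : TD T u g) (x : E) {δ K ε : ℝ} (h0 : ‖u 0 x‖ ≤ δ) (hK : 0 ≤ K) (hε : 0 ≤ ε)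
    (hb : ∀ t ∈ Icc (0 : ℝ) T, ‖g t x‖ ≤ K * ‖u t x‖ + ε) {t : ℝ} (ht : t ∈ Icc (0 : ℝ) T) :
    ‖u t x‖ ≤ (δ + T * ε) * Real.exp (K * T) :=
  (h.gronwall x h0 hb ht).trans (gronwall_le hK ((norm_nonneg _).trans h0) hε ht.1 ht.2)

lemma LB.lip (hs : Sm (Icc 0 T) u) (hl : LB T u) (x₀ : E) : ∃ C : ℝ, 0 ≤ C ∧
    ∀ t ∈ Icc (0 : ℝ) T, ∀ x ∈ Metric.ball x₀ 1, ∀ y ∈ Metric.ball x₀ 1,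
      ‖u t y - u t x‖ ≤ C * ‖y - x‖ := by
  obtain ⟨C, hC, h⟩ := hl x₀
  refine ⟨C, hC, fun t ht x hx y hy => ?_⟩
  exact (convex_ball x₀ 1).norm_image_sub_le_of_norm_fderiv_le
    (fun z _ => (hs.diff ht) z) (h t ht) hx hy

/-- Joint continuity, after extending the family constantly in time. -/
lemma LB.joint (hT : 0 ≤ T) (hs : Sm (Icc 0 T) u) (hl : LB T u) (hc : CT T u) :
    Continuous (fun p : ℝ × E => u (projIcc 0 T hT p.1) p.2) := by
  rw [continuous_iff_continuousAt]
  rintro ⟨t₀, x₀⟩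
  obtain ⟨C, hC, h⟩ := hl.lip hs x₀
  have c1 : Continuous fun t : ℝ => u (projIcc 0 T hT t) x₀ := by
    have := (continuousOn_iff_continuous_domRestrict.1 (hc x₀)).comp (continuous_projIcc (h := hT))
    exact this
  have c2 : Tendsto (fun p : ℝ × E => C * ‖p.2 - x₀‖ +
      ‖u (projIcc 0 T hT p.1) x₀ - u (projIcc 0 T hT t₀) x₀‖) (nhds (t₀, x₀)) (nhds 0) := by
    have : Continuous (fun p : ℝ × E => C * ‖p.2 - x₀‖ +
      ‖u (projIcc 0 T hT p.1) x₀ - u (projIcc 0 T hT t₀) x₀‖) := by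
      exact (continuous_const.mul (continuous_snd.sub continuous_const).norm).add
        ((c1.comp continuous_fst).sub continuous_const).norm
    simpa using this.tendsto (t₀, x₀)
  rw [ContinuousAt, tendsto_iff_norm_sub_tendsto_zero]
  refine squeeze_zero' (Eventually.of_forall fun _ => norm_nonneg _) ?_ c2
  have : ∀ᶠ p : ℝ × E in nhds (t₀, x₀), p.2 ∈ Metric.ball x₀ 1 :=
    continuous_snd.continuousAt.eventually (Metric.ball_mem_nhds x₀ one_pos)
  filter_upwards [this] with p hp
  have h1 := h (projIcc 0 T hT p.1) (projIcc 0 T hT p.1).2 x₀ (Metric.mem_ball_self one_pos) p.2 hp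
  calc _ = ‖(u (projIcc 0 T hT p.1) p.2 - u (projIcc 0 T hT p.1) x₀) +
        (u (projIcc 0 T hT p.1) x₀ - u (projIcc 0 T hT t₀) x₀)‖ := by congr 1; abel
    _ ≤ _ := (norm_add_le _ _).trans (by gcongr)

/-- Differentiation under a time integral. -/
lemma LB.hasFDerivAt_int (sg : Sm (Icc 0 T) g) (cg : CT T g) (lg : LB T g) (x : E) :
    (∀ t ∈ Icc (0 : ℝ) T, HasFDerivAt (fun y => ∫ s in (0 : ℝ)..t, g s y)
      (∫ s in (0 : ℝ)..t, fderiv ℝ (g s) x) x) ∧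
    ContinuousOn (fun t => ∫ s in (0 : ℝ)..t, fderiv ℝ (g s) x) (Icc 0 T) := by
  by_cases hT : 0 ≤ T
  swap
  · rw [Icc_eq_empty hT]; simp
  have hJ := lg.joint hT sg cg
  obtain ⟨C, hC, hb⟩ := lg x
  have : ProperSpace E := FiniteDimensional.proper ℝ E
  have : CompleteSpace F := FiniteDimensional.complete ℝ F
  borelize E
  have hm : Measurable (fun s : ℝ => fderiv ℝ (g (projIcc 0 T hT s)) x) := by
    have := measurable_fderiv_with_param ℝ (f := fun (s : ℝ) (y : E) => g (projIcc 0 T hT s) y) hJ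
    exact this.comp (measurable_id.prodMk measurable_const)
  have : SecondCountableTopology (E →L[ℝ] F) := by
    have : ProperSpace (E →L[ℝ] F) := FiniteDimensional.proper ℝ _
    infer_instance
  have pe : ∀ s ∈ Icc (0 : ℝ) T, (projIcc 0 T hT s : ℝ) = s := fun s hs => by
    rw [projIcc_of_mem hT hs]
  have hint : ∀ t ∈ Icc (0 : ℝ) T, HasFDerivAt (fun y => ∫ s in (0 : ℝ)..t,
      g (projIcc 0 T hT s) y) (∫ s in (0 : ℝ)..t, fderiv ℝ (g (projIcc 0 T hT s)) x) x := by
    intro t ht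
    refine intervalIntegral.hasFDerivAt_integral_of_dominated_of_fderiv_le
      (F' := fun y s => fderiv ℝ (g (projIcc 0 T hT s)) y) (bound := fun _ => C)
      (Metric.ball_mem_nhds x one_pos) ?_ ?_ ?_ ?_ ?_ ?_
    · refine Eventually.of_forall fun y => Continuous.aestronglyMeasurable ?_
      exact hJ.comp (continuous_id.prodMk continuous_const)
    · refine Continuous.intervalIntegrable ?_ _ _
      exact hJ.comp (continuous_id.prodMk continuous_const)
    · exact hm.aestronglyMeasurable
    · exact Eventually.of_forall fun s _ y hy => hb _ (projIcc 0 T hT s).2 y hy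
    · exact intervalIntegrable_const
    · exact Eventually.of_forall fun s _ y hy => ((sg.diff (projIcc 0 T hT s).2) y).hasFDerivAt
  have e1 : ∀ t ∈ Icc (0 : ℝ) T, ∀ y,
      ∫ s in (0 : ℝ)..t, g s y = ∫ s in (0 : ℝ)..t, g (projIcc 0 T hT s) y := by
    intro t ht y
    refine intervalIntegral.integral_congr fun r hr => ?_
    rw [uIcc_of_le ht.1] at hr
    simp only [pe r ⟨hr.1, hr.2.trans ht.2⟩]
  have e2 : ∀ t ∈ Icc (0 : ℝ) T, ∫ s in (0 : ℝ)..t, fderiv ℝ (g s) x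
      = ∫ s in (0 : ℝ)..t, fderiv ℝ (g (projIcc 0 T hT s)) x := by
    intro t ht
    refine intervalIntegral.integral_congr fun r hr => ?_
    rw [uIcc_of_le ht.1] at hr
    simp only [pe r ⟨hr.1, hr.2.trans ht.2⟩]
  refine ⟨fun t ht => ?_, ?_⟩
  · rw [e2 t ht, funext (e1 t ht)]
    exact hint t ht
  · refine ContinuousOn.congr ?_ e2
    have hii : IntervalIntegrable (fun s => fderiv ℝ (g (projIcc 0 T hT s)) x) volume 0 T := by
      refine (intervalIntegrable_const (c := C)).mono_fun hm.aestronglyMeasurable ?_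
      refine Eventually.of_forall fun s => ?_
      rw [Real.norm_of_nonneg hC]
      exact hb _ (projIcc 0 T hT s).2 x (Metric.mem_ball_self one_pos)
    have := intervalIntegral.continuousOn_primitive_interval' hii (left_mem_uIcc)
    rwa [uIcc_of_le hT] at this

/-- Differentiation in space of the integrated evolution equation. -/
lemma TD.fderiv_int (h : TD T u g) (su : Sm (Icc 0 T) u) (sg : Sm (Icc 0 T) g) (lg : LB T g)
    (x : E) : (∀ t ∈ Icc (0 : ℝ) T,
      fderiv ℝ (u t) x = fderiv ℝ (u 0) x + ∫ s in (0 : ℝ)..t, fderiv ℝ (g s) x) ∧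
      ContinuousOn (fun t => fderiv ℝ (u t) x) (Icc 0 T) := by
  obtain ⟨h1, h2⟩ := LB.hasFDerivAt_int sg h.cg lg x
  have e2 : ∀ t ∈ Icc (0 : ℝ) T, fderiv ℝ (u t) x =
      fderiv ℝ (u 0) x + ∫ s in (0 : ℝ)..t, fderiv ℝ (g s) x := by
    intro t ht
    have := ((su.diff ⟨le_rfl, ht.1.trans ht.2⟩) x).hasFDerivAt.add (h1 t ht)
    rw [← this.fderiv]
    congr 1
    exact funext (h.int ht)
  exact ⟨e2, (continuousOn_const.add h2).congr e2⟩

/-- The time derivative of the spatial derivative. -/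
lemma TD.fderiv (h : TD T u g) (su : Sm (Icc 0 T) u) (sg : Sm (Icc 0 T) g) (lg : LB T g)
    (cg : CT T (fun t => fderiv ℝ (g t))) :
    TD T (fun t => fderiv ℝ (u t)) (fun t => fderiv ℝ (g t)) :=
  TD.of_int cg fun t ht x => (h.fderiv_int su sg lg x).1 t ht

lemma PG.bound_ball {ι : Type} {S : Set ι} {u : ι → E → F} (hu : PG S u) (n : ℕ) (x₀ : E) :
    ∃ C : ℝ, 0 ≤ C ∧ ∀ t ∈ S, ∀ x ∈ Metric.ball x₀ 1, ‖iteratedFDeriv ℝ n (u t) x‖ ≤ C := by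
  obtain ⟨k, C, hC, h⟩ := hu.2 n
  refine ⟨C * (1 + (‖x₀‖ + 1)) ^ k, by positivity, fun t ht x hx => (h t ht x).trans ?_⟩
  have : ‖x‖ ≤ ‖x₀‖ + 1 := by
    have := norm_le_norm_add_norm_sub' x x₀
    rw [Metric.mem_ball, dist_eq_norm] at hx
    linarith
  unfold pw
  gcongr

lemma PG.lb (hu : PG (Icc 0 T) u) : LB T u := by
  intro x₀
  obtain ⟨C, hC, h⟩ := hu.bound_ball 1 x₀
  refine ⟨C, hC, fun t ht x hx => ?_⟩
  have := h t ht x hx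
  rwa [norm_iteratedFDeriv_one] at this

/-- Continuity in time passes to the spatial derivatives. -/
lemma CT.fderiv (hu : Sm (Icc 0 T) u) (hl : LB T (fun t => _root_.fderiv ℝ (u t))) (hc : CT T u) :
    CT T (fun t => _root_.fderiv ℝ (u t)) := by
  intro x
  rw [continuousOn_clm_apply]
  intro v
  obtain ⟨C, hC, hb⟩ := hl x
  -- the difference quotients converge uniformly in time
  have hq : ∀ t ∈ Icc (0 : ℝ) T, ∀ r ∈ Ioo (0 : ℝ) (1 / (1 + ‖v‖)),
      ‖r⁻¹ • (u t (x + r • v) - u t x) - _root_.fderiv ℝ (u t) x v‖ ≤ C * r * ‖v‖ ^ 2 := by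
    intro t ht r hr
    have hv : r * ‖v‖ < 1 := by
      have h1 : 0 < 1 + ‖v‖ := by positivity
      have := (lt_div_iff₀ h1).1 hr.2
      nlinarith [hr.1]
    have hsub : segment ℝ x (x + r • v) ⊆ Metric.ball x 1 := by
      refine (convex_ball x 1).segment_subset (Metric.mem_ball_self one_pos) ?_
      rw [Metric.mem_ball, dist_eq_norm, add_sub_cancel_left, norm_smul,
        Real.norm_of_nonneg hr.1.le]
      exact hv
    have hle : ∀ z ∈ segment ℝ x (x + r • v), ‖z - x‖ ≤ r * ‖v‖ := by
      rintro z ⟨a, b, ha, hb', hab, rfl⟩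
      have : a • x + b • (x + r • v) - x = (b * r) • v := by
        rw [← eq_sub_iff_add_eq] at hab
        subst hab; module
      rw [this, norm_smul, Real.norm_of_nonneg (mul_nonneg hb' hr.1.le)]
      have : b ≤ 1 := by linarith
      nlinarith [mul_nonneg hr.1.le (norm_nonneg v)]
    have key := (convex_segment x (x + r • v)).norm_image_sub_le_of_norm_hasFDerivWithin_le'
      (f := u t) (f' := _root_.fderiv ℝ (u t)) (φ := _root_.fderiv ℝ (u t) x) (C := C * (r * ‖v‖))
      (fun z _ => ((hu.diff ht) z).hasFDerivAt.hasFDerivWithinAt)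
      (fun z hz => by
        refine ((convex_ball x 1).norm_image_sub_le_of_norm_fderiv_le
          (fun z _ => (hu.fderiv.diff ht) z) (hb t ht) (Metric.mem_ball_self one_pos)
          (hsub hz)).trans ?_
        exact mul_le_mul_of_nonneg_left (hle z hz) hC)
      (left_mem_segment ℝ x _) (right_mem_segment ℝ x _)
    rw [add_sub_cancel_left, map_smul, norm_smul, Real.norm_of_nonneg hr.1.le] at key
    have e : r⁻¹ • (u t (x + r • v) - u t x) - _root_.fderiv ℝ (u t) x v
        = r⁻¹ • (u t (x + r • v) - u t x - r • _root_.fderiv ℝ (u t) x v) := by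
      rw [smul_sub r⁻¹ (u t (x + r • v) - u t x), smul_smul, inv_mul_cancel₀ hr.1.ne', one_smul]
    rw [e, norm_smul, norm_inv, Real.norm_of_nonneg hr.1.le, inv_mul_le_iff₀ hr.1]
    refine key.trans (le_of_eq ?_)
    ring
  have hlim : TendstoUniformlyOn (fun (r : ℝ) t => r⁻¹ • (u t (x + r • v) - u t x))
      (fun t => _root_.fderiv ℝ (u t) x v) (nhdsWithin 0 (Ioi 0)) (Icc 0 T) := by
    rw [Metric.tendstoUniformlyOn_iff]
    intro ε hε
    have h1 : Tendsto (fun r : ℝ => C * r * ‖v‖ ^ 2) (nhdsWithin 0 (Ioi 0)) (nhds 0) := by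
      have : Continuous fun r : ℝ => C * r * ‖v‖ ^ 2 := by fun_prop
      simpa using (this.tendsto 0).mono_left nhdsWithin_le_nhds
    have h2 : ∀ᶠ r : ℝ in nhdsWithin 0 (Ioi 0), r ∈ Ioo (0 : ℝ) (1 / (1 + ‖v‖)) :=
      Ioo_mem_nhdsGT (by positivity)
    filter_upwards [h2, h1.eventually (gt_mem_nhds hε)] with r hr hr' t ht
    rw [dist_comm, dist_eq_norm]
    exact (hq t ht r hr).trans_lt hr'
  refine hlim.continuousOn (Eventually.of_forall fun r => ?_).frequently
  exact ((hc _).sub (hc _)).const_smul _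

lemma PG.ct_fderiv (hu : PG (Icc 0 T) u) (hc : CT T u) : CT T (fun t => _root_.fderiv ℝ (u t)) :=
  hc.fderiv hu.1 hu.fderiv.lb

/-- Time derivatives commute with spatial derivatives for families of polynomial growth. -/
lemma TD.fderiv_pg (h : TD T u g) (su : Sm (Icc 0 T) u) (sg : PG (Icc 0 T) g) :
    TD T (fun t => _root_.fderiv ℝ (u t)) (fun t => _root_.fderiv ℝ (g t)) :=
  h.fderiv su sg.1 sg.lb (sg.ct_fderiv h.cg)

lemma TD.pd (h : TD T u g) (su : Sm (Icc 0 T) u) (sg : PG (Icc 0 T) g) (e : E) :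
    TD T (fun t x => _root_.fderiv ℝ (u t) x e) (fun t x => _root_.fderiv ℝ (g t) x e) :=
  (h.fderiv_pg su sg).clm (ContinuousLinearMap.apply ℝ F e)

/-- Time integrals of bounded families are bounded families. -/
lemma BB.integral (hg : BB (Icc 0 T) g) (hc : CT T g) :
    BB (Icc 0 T) (fun t x => ∫ s in (0 : ℝ)..t, g s x) := by
  have sm : ∀ n : ℕ, ∀ {F : Type} [NormedAddCommGroup F] [NormedSpace ℝ F]
      [FiniteDimensional ℝ F] {g : ℝ → E → F}, BB (Icc 0 T) g → CT T g →
      (∀ t ∈ Icc (0 : ℝ) T, ContDiff ℝ n (fun x => ∫ s in (0 : ℝ)..t, g s x)) ∧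
      Bd (Icc 0 T) one n (fun t x => ∫ s in (0 : ℝ)..t, g s x) := by
    intro n
    induction n with
    | zero =>
      intro F _ _ _ g hg hc
      refine ⟨fun t ht => ?_, ?_⟩
      · rw [Nat.cast_zero, contDiff_zero]
        exact continuous_iff_continuousAt.2 fun x =>
          ((LB.hasFDerivAt_int hg.1 hc hg.toPG.lb x).1 t ht).continuousAt
      · obtain ⟨C, hC, hb⟩ := hg.2 0
        refine ⟨C * |T|, by positivity, fun t ht x => ?_⟩
        simp only [norm_iteratedFDeriv_zero, one, mul_one] at hb ⊢
        refine (intervalIntegral.norm_integral_le_of_norm_le_const (C := C) ?_).trans ?_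
        · intro s hs
          rw [uIoc_of_le ht.1] at hs
          exact hb s ⟨hs.1.le, hs.2.trans ht.2⟩ x
        · have : |t - 0| ≤ |T| := by
            rw [sub_zero]; exact abs_le_abs_of_nonneg ht.1 ht.2
          gcongr
    | succ n ih =>
      intro F _ _ _ g hg hc
      have hd := fun x => (LB.hasFDerivAt_int hg.1 hc hg.toPG.lb x).1
      have := ih hg.fderiv (hg.toPG.ct_fderiv hc)
      have e : ∀ t ∈ Icc (0 : ℝ) T, _root_.fderiv ℝ (fun x => ∫ s in (0 : ℝ)..t, g s x) =
          fun x => ∫ s in (0 : ℝ)..t, _root_.fderiv ℝ (g s) x := fun t ht =>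
        funext fun x => (hd x t ht).fderiv
      refine ⟨fun t ht => ?_, Bd.of_fderiv (this.2.congr fun t ht x => congrFun (e t ht) x)⟩
      rw [Nat.cast_succ, contDiff_succ_iff_fderiv]
      refine ⟨fun x => (hd x t ht).differentiableAt, fun h => by simp at h, ?_⟩
      rw [e t ht]
      exact this.1 t ht
  exact ⟨fun t ht => contDiff_infty.2 fun n => (sm n hg hc).1 t ht, fun n => (sm n hg hc).2⟩

end TimeReg

end WKB

namespace WKB

/-! ### Linear ordinary differential equations depending on a parameter -/

set_option linter.unusedSectionVars false

section LinODE

variable {E : Type} [NormedAddCommGroup E] [NormedSpace ℝ E] [FiniteDimensional ℝ E] {T : ℝ}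

lemma Bd.lb {F : Type} [NormedAddCommGroup F] [NormedSpace ℝ F] {u : ℝ → E → F}
    (hu : Bd (Icc 0 T) one 1 u) : LB T u := by
  obtain ⟨C, hC, h⟩ := hu
  intro x₀
  refine ⟨C, hC, fun t ht x _ => ?_⟩
  have := h t ht x
  simpa [one, norm_iteratedFDeriv_one] using this

lemma Bd.bilin_one {ι F G H : Type} [NormedAddCommGroup F] [NormedSpace ℝ F]
    [NormedAddCommGroup G] [NormedSpace ℝ G] [NormedAddCommGroup H] [NormedSpace ℝ H] {S : Set ι}
    {u : ι → E → F} {w : ι → E → G} (B : F →L[ℝ] G →L[ℝ] H) {n : ℕ}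
    (su : Sm S u) (sw : Sm S w) (hu : ∀ k ≤ n, Bd S one k u) (hw : ∀ k ≤ n, Bd S one k w) :
    Bd S one n (fun i x => B (u i x) (w i x)) :=
  Bd.bilin B (fun _ => one) (fun _ => one) su sw hu hw
    (fun _ _ => ⟨1, zero_le_one, fun _ _ _ => by simp [one]⟩)

/-- Solutions of linear equations whose coefficients have bounded derivatives up to order one are
bounded and Lipschitz. -/
lemma lin_ode_one {F : Type} [NormedAddCommGroup F] [NormedSpace ℝ F] [FiniteDimensional ℝ F]
    {U R : ℝ → E → F} {L : ℝ → E → F →L[ℝ] F} (sU : Sm (Icc 0 T) U) (sL : Sm (Icc 0 T) L)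
    (sR : Sm (Icc 0 T) R) (h : TD T U (fun t y => L t y (U t y) + R t y)) :
    (Bd (Icc 0 T) one 0 L → Bd (Icc 0 T) one 0 R →
      Bd (Icc 0 T) one 0 (fun _ => U 0) → Bd (Icc 0 T) one 0 U) ∧
    ((∀ k ≤ 1, Bd (Icc 0 T) one k L) → (∀ k ≤ 1, Bd (Icc 0 T) one k R) →
      (∀ k ≤ 1, Bd (Icc 0 T) one k (fun _ => U 0)) → Bd (Icc 0 T) one 1 U) := by
  have main0 : Bd (Icc 0 T) one 0 L → Bd (Icc 0 T) one 0 R →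
      Bd (Icc 0 T) one 0 (fun _ => U 0) → Bd (Icc 0 T) one 0 U := by
    rintro ⟨K, hK, bL⟩ ⟨ε, hε, bR⟩ ⟨δ, hδ, b0⟩
    simp only [norm_iteratedFDeriv_zero, one, mul_one] at bL bR b0
    by_cases hT : 0 ≤ T
    swap
    · exact ⟨0, le_rfl, fun t ht => absurd (ht.1.trans ht.2) hT⟩
    refine ⟨(δ + T * ε) * Real.exp (K * T), by positivity, fun t ht x => ?_⟩
    simp only [norm_iteratedFDeriv_zero, one, mul_one]
    refine h.gronwall' x (b0 0 ⟨le_rfl, hT⟩ x) hK hε (fun s hs => ?_) ht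
    refine (norm_add_le _ _).trans (add_le_add ?_ (bR s hs x))
    exact (L s x).le_of_opNorm_le (bL s hs x) _
  refine ⟨main0, fun hL hR h0 => ?_⟩
  obtain ⟨M, hM, bU⟩ := main0 (hL 0 zero_le_one) (hR 0 zero_le_one) (h0 0 zero_le_one)
  obtain ⟨K, hK, bL⟩ := hL 0 zero_le_one
  obtain ⟨K₁, hK₁, bL₁⟩ := hL 1 le_rfl
  obtain ⟨ε, hε, bR⟩ := hR 1 le_rfl
  obtain ⟨δ, hδ, b0⟩ := h0 1 le_rfl
  simp only [norm_iteratedFDeriv_zero, norm_iteratedFDeriv_one, one, mul_one] at bU bL bL₁ bR b0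
  by_cases hT : 0 ≤ T
  swap
  · exact ⟨0, le_rfl, fun t ht => absurd (ht.1.trans ht.2) hT⟩
  set C := (δ + T * (K₁ * M + ε)) * Real.exp (K * T) with hC
  have hC0 : 0 ≤ C := by positivity
  have lip : ∀ {G : Type} [NormedAddCommGroup G] [NormedSpace ℝ G] {v : ℝ → E → G} {c : ℝ},
      Sm (Icc 0 T) v → (∀ t ∈ Icc (0 : ℝ) T, ∀ x, ‖fderiv ℝ (v t) x‖ ≤ c) →
      ∀ t ∈ Icc (0 : ℝ) T, ∀ x y, ‖v t y - v t x‖ ≤ c * ‖y - x‖ := by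
    intro G _ _ v c sv hv t ht x y
    exact convex_univ.norm_image_sub_le_of_norm_fderiv_le (fun z _ => (sv.diff ht) z)
      (fun z _ => hv t ht z) (mem_univ x) (mem_univ y)
  refine ⟨C, hC0, fun t ht x => ?_⟩
  simp only [norm_iteratedFDeriv_one, one, mul_one]
  refine norm_fderiv_le_of_lip' ℝ hC0 (Eventually.of_forall fun y => ?_)
  have hd : TD T (fun s z => U s z - U s x)
      (fun s z => L s z (U s z) + R s z - (L s x (U s x) + R s x)) :=
    ⟨fun z => (h.ct z).sub (h.ct x), fun z => (h.cg z).sub (h.cg x),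
      fun s hs z => (h.hd s hs z).sub (h.hd s hs x)⟩
  have key := hd.gronwall' y (δ := δ * ‖y - x‖) (K := K) (ε := (K₁ * M + ε) * ‖y - x‖) ?_ hK
    (by positivity) ?_ ht
  · refine key.trans (le_of_eq ?_)
    rw [hC]; ring
  · exact lip (v := fun _ => U 0) (fun i hi => sU 0 ⟨le_rfl, hT⟩) b0 0 ⟨le_rfl, hT⟩ x y
  · intro s hs
    have e : L s y (U s y) + R s y - (L s x (U s x) + R s x)
        = L s y (U s y - U s x) + (L s y - L s x) (U s x) + (R s y - R s x) := by
      simp only [map_sub, sub_apply]; abel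
    rw [e]
    have e1 : ‖L s y (U s y - U s x)‖ ≤ K * ‖U s y - U s x‖ := (L s y).le_of_opNorm_le (bL s hs y) _
    have e2 : ‖(L s y - L s x) (U s x)‖ ≤ K₁ * ‖y - x‖ * M :=
      ((L s y - L s x).le_opNorm _).trans
        (mul_le_mul (lip sL bL₁ s hs x y) (bU s hs x) (norm_nonneg _) (by positivity))
    have e3 := lip sR bR s hs x y
    calc _ ≤ ‖L s y (U s y - U s x)‖ + ‖(L s y - L s x) (U s x)‖ + ‖R s y - R s x‖ := norm_add₃_le
      _ ≤ K * ‖U s y - U s x‖ + K₁ * ‖y - x‖ * M + ε * ‖y - x‖ := by gcongr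
      _ = _ := by ring

set_option maxHeartbeats 1000000 in
/-- Derivative bounds for linear equations depending smoothly on a parameter: the derivative of
the solution solves a linear equation of the same kind. -/
lemma lin_ode (n : ℕ) : ∀ {F : Type} [NormedAddCommGroup F] [NormedSpace ℝ F]
    [FiniteDimensional ℝ F] {U R : ℝ → E → F} {L : ℝ → E → F →L[ℝ] F},
    Sm (Icc 0 T) U → Sm (Icc 0 T) L → Sm (Icc 0 T) R → CT T L → CT T R →
    TD T U (fun t y => L t y (U t y) + R t y) →
    (∀ k ≤ n, Bd (Icc 0 T) one k L) → (∀ k ≤ n, Bd (Icc 0 T) one k R) →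
    (∀ k ≤ n, Bd (Icc 0 T) one k (fun _ => U 0)) → ∀ k ≤ n, Bd (Icc 0 T) one k U := by
  induction n with
  | zero =>
    intro F _ _ _ U R L sU sL sR cL cR h hL hR h0 k hk
    obtain rfl : k = 0 := by omega
    exact (lin_ode_one sU sL sR h).1 (hL 0 le_rfl) (hR 0 le_rfl) (h0 0 le_rfl)
  | succ n ih =>
    intro F _ _ _ U R L sU sL sR cL cR h hL hR h0
    have hn : ∀ k ≤ n, Bd (Icc 0 T) one k U := ih sU sL sR cL cR h (fun k hk => hL k (by omega))
      (fun k hk => hR k (by omega)) (fun k hk => h0 k (by omega))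
    have h1 : Bd (Icc 0 T) one 1 U := (lin_ode_one sU sL sR h).2 (fun k hk => hL k (by omega))
      (fun k hk => hR k (by omega)) (fun k hk => h0 k (by omega))
    rcases Nat.eq_zero_or_pos n with rfl | hpos
    · intro k hk
      rcases Nat.le_one_iff_eq_zero_or_eq_one.1 hk with rfl | rfl
      · exact hn 0 le_rfl
      · exact h1
    suffices H : ∀ k ≤ n, Bd (Icc 0 T) one k (fun t => fderiv ℝ (U t)) by
      rintro (_ | k) hk
      · exact hn 0 (Nat.zero_le _)
      · exact (H k (by omega)).of_fderiv
    set ap : (F →L[ℝ] F) →L[ℝ] F →L[ℝ] F := ContinuousLinearMap.id ℝ (F →L[ℝ] F) with hap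
    have sg : Sm (Icc 0 T) (fun t y => L t y (U t y) + R t y) :=
      (sL.bilin ap sU).add sR
    have dg : ∀ t ∈ Icc (0 : ℝ) T, ∀ y, fderiv ℝ (fun y => L t y (U t y) + R t y) y =
        (L t y).comp (fderiv ℝ (U t) y) + ((fderiv ℝ (L t) y).flip (U t y) + fderiv ℝ (R t) y) := by
      intro t ht y
      have := (((sL.diff ht) y).hasFDerivAt.clm_apply ((sU.diff ht) y).hasFDerivAt).add
        ((sR.diff ht) y).hasFDerivAt
      rw [← add_assoc]
      exact this.fderiv
    have bg : Bd (Icc 0 T) one 1 (fun t y => L t y (U t y) + R t y) := by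
      refine Bd.add (sL.bilin ap sU) sR ?_ (hR 1 (by omega))
      exact Bd.bilin ap (fun _ => one) (fun _ => one) sL sU (fun k hk => hL k (by omega))
        (fun k hk => hn k (by omega)) (fun _ _ => ⟨1, zero_le_one, fun _ _ _ => by simp [one]⟩)
    -- continuity in time of the differentiated right-hand side
    have cU' := fun x => (h.fderiv_int sU sg bg.lb x).2
    have cL' : CT T (fun t => fderiv ℝ (L t)) :=
      cL.fderiv sL (Bd.lb (hL 2 (by omega)).fderiv)
    have cR' : CT T (fun t => fderiv ℝ (R t)) :=
      cR.fderiv sR (Bd.lb (hR 2 (by omega)).fderiv)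
    obtain ⟨fl, hfl⟩ : ∃ fl : (E →L[ℝ] F →L[ℝ] F) →L[ℝ] F →L[ℝ] E →L[ℝ] F,
        ∀ f y, fl f y = f.flip y :=
      ⟨((ContinuousLinearMap.flipₗᵢ ℝ E F F).toContinuousLinearEquiv :
        (E →L[ℝ] F →L[ℝ] F) →L[ℝ] F →L[ℝ] E →L[ℝ] F), fun _ _ => rfl⟩
    obtain ⟨cm, hcm⟩ : ∃ cm : (F →L[ℝ] F) →L[ℝ] (E →L[ℝ] F) →L[ℝ] (E →L[ℝ] F),
        ∀ A B, cm A B = A.comp B := ⟨ContinuousLinearMap.compL ℝ E F F, fun _ _ => rfl⟩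
    have dg' : ∀ t ∈ Icc (0 : ℝ) T, ∀ y, cm (L t y) (fderiv ℝ (U t) y) +
        (fl (fderiv ℝ (L t) y) (U t y) + fderiv ℝ (R t) y)
        = fderiv ℝ (fun y => L t y (U t y) + R t y) y := by
      intro t ht y
      rw [dg t ht y, hcm, hfl]
    have cR1 := CT.bilin (u := fun t => fderiv ℝ (L t)) (w := U) fl cL' h.ct
    have cR2 := cR1.add cR'
    have cg1 := (CT.bilin (u := L) (w := fun t => fderiv ℝ (U t)) cm cL cU').add cR2
    have cg : CT T (fun t => fderiv ℝ (fun y => L t y (U t y) + R t y)) :=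
      cg1.congr fun t ht x => (dg' t ht x).symm
    have hT := (h.fderiv sU sg bg.lb cg).congr (fun _ _ _ => rfl) dg'
    have sR1 := Sm.bilin (u := fun t => fderiv ℝ (L t)) (w := U) fl sL.fderiv sU
    have sR2 := sR1.add sR.fderiv
    have cL2 := CT.clm (F := F →L[ℝ] F) (G := (E →L[ℝ] F) →L[ℝ] (E →L[ℝ] F)) (u := L) cm cL
    have sL2 := Sm.clm (F := F →L[ℝ] F) (G := (E →L[ℝ] F) →L[ℝ] (E →L[ℝ] F)) (u := L) sL cm
    have bL2 : ∀ k ≤ n, Bd (Icc 0 T) one k L := fun k hk => hL k (by omega)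
    have bL3 := fun k hk => Bd.clm (F := F →L[ℝ] F) (G := (E →L[ℝ] F) →L[ℝ] (E →L[ℝ] F))
      (u := L) sL (bL2 k hk) cm
    refine ih (L := fun t y => cm (L t y))
      (R := fun t y => fl (fderiv ℝ (L t) y) (U t y) + fderiv ℝ (R t) y)
      sU.fderiv sL2 sR2 cL2 cR2 hT bL3 (fun k hk => ?_)
      (fun k hk => ?_)
    · have q0 : Bd (Icc 0 T) one k (fun t => fderiv ℝ (R t)) := (hR (k + 1) (by omega)).fderiv
      have q1 : ∀ j ≤ k, Bd (Icc 0 T) one j (fun t => fderiv ℝ (L t)) :=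
        fun j hj => (hL (j + 1) (by omega)).fderiv
      have q2 : ∀ j ≤ k, Bd (Icc 0 T) one j U := fun j hj => hn j (by omega)
      have q3 := Bd.bilin_one (F := E →L[ℝ] F →L[ℝ] F) (G := F) (H := E →L[ℝ] F)
        (u := fun t => fderiv ℝ (L t)) (w := U) fl sL.fderiv sU q1 q2
      exact Bd.add sR1 sR.fderiv q3 q0
    · exact (h0 (k + 1) (by omega)).fderiv

end LinODE

end WKB

namespace WKB

/-! ### Jointly smooth families and the chain rule along trajectories -/

set_option linter.unusedSectionVars false

section Joint

variable {E F G H : Type} [NormedAddCommGroup E] [NormedSpace ℝ E]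
  [NormedAddCommGroup F] [NormedSpace ℝ F]
  [NormedAddCommGroup G] [NormedSpace ℝ G]

/-- Joint smoothness in time and space. -/
def JS (u : ℝ → E → F) : Prop := ContDiff ℝ (⊤ : ℕ∞) (fun p : ℝ × E => u p.1 p.2)

variable {T : ℝ} {u g : ℝ → E → F}

lemma JS.sm {S : Set ℝ} (h : JS u) : Sm S u := fun t _ =>
  ContDiff.comp (g := fun p : ℝ × E => u p.1 p.2) h (contDiff_prodMk_right t)

lemma JS.ct (h : JS u) : CT T u := fun _ =>
  (h.continuous.comp (continuous_id.prodMk continuous_const)).continuousOn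

lemma JS.fderiv (h : JS u) : JS (fun t => fderiv ℝ (u t)) := by
  have h' : ContDiff ℝ (⊤ : ℕ∞) (Function.uncurry fun (p : ℝ × E) (y : E) => u p.1 y) :=
    ContDiff.comp (g := fun p : ℝ × E => u p.1 p.2) h
      (contDiff_fst.fst.prodMk contDiff_snd)
  exact h'.fderiv contDiff_snd (by simp)

/-- At a fixed point, all spatial derivatives are bounded on the time interval. -/
lemma JS.bound (n : ℕ) : ∀ {F : Type} [NormedAddCommGroup F] [NormedSpace ℝ F] {u : ℝ → E → F},
    JS u → ∀ x₀, ∃ C : ℝ, 0 ≤ C ∧ ∀ t ∈ Icc (0 : ℝ) T, ‖iteratedFDeriv ℝ n (u t) x₀‖ ≤ C := by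
  induction n with
  | zero =>
    intro F _ _ u h x₀
    obtain ⟨C, hC⟩ := isCompact_Icc.exists_bound_of_continuousOn (h.ct (T := T) x₀)
    exact ⟨max C 0, le_max_right _ _, fun t ht => by
      rw [norm_iteratedFDeriv_zero]; exact (hC t ht).trans (le_max_left _ _)⟩
  | succ n ih =>
    intro F _ _ u h x₀
    obtain ⟨C, hC, b⟩ := ih h.fderiv x₀
    exact ⟨C, hC, fun t ht => by rw [← norm_iteratedFDeriv_fderiv]; exact b t ht⟩

/-- A family with bounded derivative which is bounded at the origin grows at most linearly. -/
lemma Bd.linear_growth {ι : Type} {S : Set ι} {u : ι → E → F} (su : Sm S u) (k : ℕ)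
    (h : Bd S (pw k) 1 u)
    (h0 : ∃ C : ℝ, 0 ≤ C ∧ ∀ i ∈ S, ‖u i 0‖ ≤ C) : Bd S (pw (k + 1)) 0 u := by
  obtain ⟨C, hC, b⟩ := h
  obtain ⟨C0, hC0, b0⟩ := h0
  refine ⟨C0 + C, by positivity, fun i hi x => ?_⟩
  rw [norm_iteratedFDeriv_zero]
  simp only [norm_iteratedFDeriv_one, pw] at b ⊢
  have key := (convex_closedBall (0 : E) ‖x‖).norm_image_sub_le_of_norm_fderiv_le
    (f := u i) (C := C * (1 + ‖x‖) ^ k) (fun z _ => (su.diff hi) z) (fun z hz => (b i hi z).trans ?_)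
    (x := 0) (y := x) (by simp) (by simp)
  · rw [sub_zero] at key
    have h1 := b0 i hi
    have h2 : ‖u i x‖ ≤ ‖u i 0‖ + ‖u i x - u i 0‖ := norm_le_norm_add_norm_sub' _ _
    have h3 : 1 ≤ (1 + ‖x‖) ^ (k + 1) := one_le_pow₀ (one_le_w x)
    have h4 : (1 + ‖x‖) ^ k * ‖x‖ ≤ (1 + ‖x‖) ^ (k + 1) := by
      rw [pow_succ]
      have := norm_nonneg x
      gcongr; linarith
    nlinarith
  · rw [mem_closedBall_zero_iff] at hz
    have := norm_nonneg z
    gcongr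

/-- Jointly smooth families whose spatial derivatives of order at least two are bounded. -/
lemma JS.subquadratic (h : JS u) (b : ∀ n, 2 ≤ n → Bd (Icc 0 T) one n u) :
    BB (Icc 0 T) (fun t => _root_.fderiv ℝ (_root_.fderiv ℝ (u t))) ∧
    Bd (Icc 0 T) (pw 1) 1 u ∧ PG (Icc 0 T) u := by
  have h1 : Bd (Icc 0 T) (pw 1) 0 (fun t => _root_.fderiv ℝ (u t)) := by
    refine Bd.linear_growth h.sm.fderiv 0 ?_ ?_
    · exact (b 2 le_rfl).fderiv.mono' fun _ _ x => by simp [pw, one]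
    · obtain ⟨C, hC, b'⟩ := JS.bound (T := T) 0 h.fderiv 0
      exact ⟨C, hC, fun t ht => by simpa using b' t ht⟩
  have h0 : Bd (Icc 0 T) (pw 2) 0 u := by
    refine Bd.linear_growth h.sm 1 h1.of_fderiv ?_
    obtain ⟨C, hC, b'⟩ := JS.bound (T := T) 0 h 0
    exact ⟨C, hC, fun t ht => by simpa using b' t ht⟩
  refine ⟨⟨h.sm.fderiv.fderiv, fun n => (b (n + 2) (by omega)).fderiv.fderiv⟩, h1.of_fderiv,
    h.sm, ?_⟩
  rintro (_ | _ | n)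
  · exact ⟨2, h0⟩
  · exact ⟨1, h1.of_fderiv⟩
  · exact ⟨0, (b (n + 2) (by omega)).mono' fun _ _ x => by simp [pw, one]⟩

variable [FiniteDimensional ℝ E] [FiniteDimensional ℝ F]

lemma LB.joint_at (hs : Sm (Icc 0 T) u) (hl : LB T u) (hc : CT T u) {t : ℝ} {s : Set ℝ}
    (ht : t ∈ Icc (0 : ℝ) T) (hsub : s ⊆ Icc 0 T)
    {z : ℝ → E} (hz : ContinuousWithinAt z s t) :
    ContinuousWithinAt (fun r => u r (z r)) s t := by
  have hT : 0 ≤ T := ht.1.trans ht.2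
  have h1 := (LB.joint hT hs hl hc).continuousAt.comp_continuousWithinAt
    (continuousWithinAt_id.prodMk hz)
  refine h1.congr (fun r hr => ?_) ?_
  · simp [projIcc_of_mem hT (hsub hr)]
  · simp [projIcc_of_mem hT ht]

/-- The partial increment in time along a continuous curve. -/
lemma TD.partial_along (h : TD T u g) (sg : Sm (Icc 0 T) g) (lg : LB T g) {t : ℝ}
    (ht : t ∈ Ioo 0 T) {z : ℝ → E} (hz : ContinuousAt z t) :
    HasDerivAt (fun s => u s (z s) - u t (z s)) (g t (z t)) t := by
  have hT : 0 ≤ T := ht.1.le.trans ht.2.le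
  have hc := (LB.joint hT sg lg h.cg).continuousAt (x := (t, z t))
  rw [hasDerivAt_iff_isLittleO, Asymptotics.isLittleO_iff]
  intro ε hε
  obtain ⟨δ, hδ, hball⟩ := Metric.continuousAt_iff.1 hc ε hε
  have hI : ∀ᶠ s in nhds t, s ∈ Ioo 0 T := Ioo_mem_nhds ht.1 ht.2
  have hzn : ∀ᶠ s in nhds t, dist (z s) (z t) < δ := Metric.continuousAt_iff'.1 hz δ hδ
  have hsn : ∀ᶠ s in nhds t, dist s t < δ := Metric.ball_mem_nhds t hδ
  filter_upwards [hI, hzn, hsn] with s hs hzs hss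
  have key := (convex_uIcc t s).norm_image_sub_le_of_norm_hasDerivWithin_le
    (f := fun r => u r (z s) - r • g t (z t)) (f' := fun r => g r (z s) - g t (z t)) (C := ε)
    (fun r hr => ?_) (fun r hr => ?_) left_mem_uIcc right_mem_uIcc
  · refine le_trans (le_of_eq ?_) key
    congr 1
    simp only [sub_self, sub_smul]; abel
  · have hrI : r ∈ Ioo 0 T := ⟨lt_of_lt_of_le (lt_min ht.1 hs.1) hr.1,
      lt_of_le_of_lt hr.2 (max_lt ht.2 hs.2)⟩
    have := (h.hd r hrI (z s)).sub ((hasDerivAt_id r).smul_const (g t (z t)))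
    rw [one_smul] at this
    exact this.hasDerivWithinAt
  · have hrI : r ∈ Icc 0 T := ⟨(lt_of_lt_of_le (lt_min ht.1 hs.1) hr.1).le,
      (lt_of_le_of_lt hr.2 (max_lt ht.2 hs.2)).le⟩
    have hr' : dist (r, z s) (t, z t) < δ := by
      rw [Prod.dist_eq]
      refine max_lt (lt_of_le_of_lt ?_ hss) hzs
      rw [Real.dist_eq, Real.dist_eq]
      exact abs_sub_left_of_mem_uIcc hr
    have := hball hr'
    rw [dist_eq_norm] at this
    simp only [projIcc_of_mem hT hrI, projIcc_of_mem hT ⟨ht.1.le, ht.2.le⟩] at this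
    exact this.le

/-- The chain rule for the composition of two families. -/
lemma TD.comp {X h : ℝ → G → E} (hu : TD T u g) (su : Sm (Icc 0 T) u) (pu : PG (Icc 0 T) u)
    (pg : PG (Icc 0 T) g) (hX : TD T X h) :
    TD T (fun t y => u t (X t y)) (fun t y => g t (X t y) + _root_.fderiv ℝ (u t) (X t y) (h t y)) := by
  refine ⟨fun y t ht => ?_, fun y t ht => ?_, fun t ht y => ?_⟩
  · exact LB.joint_at su pu.lb hu.ct ht subset_rfl (hX.ct y t ht)
  · refine ContinuousWithinAt.add (LB.joint_at pg.1 pg.lb hu.cg ht subset_rfl (hX.ct y t ht)) ?_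
    exact (LB.joint_at pu.fderiv.1 pu.fderiv.lb (pu.ct_fderiv hu.ct) ht subset_rfl
      (hX.ct y t ht)).clm_apply (hX.cg y t ht)
  · have ht' : t ∈ Icc 0 T := ⟨ht.1.le, ht.2.le⟩
    have h1 := hu.partial_along pg.1 pg.lb ht (hX.hd t ht y).continuousAt
    have h2 := ((su.diff ht') (X t y)).hasFDerivAt.comp_hasDerivAt t (hX.hd t ht y)
    have := h1.add h2
    refine this.congr_of_eventuallyEq (Eventually.of_forall fun s => ?_)
    simp

end Joint

end WKB

namespace WKB

/-! ### Flows of vector fields with bounded derivatives -/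

set_option linter.unusedSectionVars false

section Flow

variable {E F : Type} [NormedAddCommGroup E] [InnerProductSpace ℝ E] [FiniteDimensional ℝ E]

/-- `X` is the flow on `[0,T]` of a vector field `b` with bounded spatial derivatives, and `Y` is
its inverse. -/
structure Flow (T : ℝ) (b X Y : ℝ → E → E) : Prop where
  pos : 0 ≤ T
  sb : Sm (Icc 0 T) b
  cb : CT T b
  bb : BB (Icc 0 T) (fun t => fderiv ℝ (b t))
  pb : PG (Icc 0 T) b
  sX : Sm (Icc 0 T) X
  sY : Sm (Icc 0 T) Y
  dX : TD T X (fun t y => b t (X t y))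
  X0 : ∀ y, X 0 y = y
  YX : ∀ t ∈ Icc (0 : ℝ) T, ∀ y, Y t (X t y) = y
  XY : ∀ t ∈ Icc (0 : ℝ) T, ∀ x, X t (Y t x) = x

variable {T : ℝ} {b X Y : ℝ → E → E}

lemma Flow.lip_b (h : Flow T b X Y) : ∃ K : ℝ, 0 ≤ K ∧ ∀ t ∈ Icc (0 : ℝ) T, ∀ x y,
    ‖b t x - b t y‖ ≤ K * ‖x - y‖ := by
  obtain ⟨K, hK, hb⟩ := h.bb.2 0
  refine ⟨K, hK, fun t ht x y => ?_⟩
  refine convex_univ.norm_image_sub_le_of_norm_fderiv_le (fun z _ => (h.sb.diff ht) z)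
      (fun z _ => ?_) (mem_univ y) (mem_univ x)
  simpa [one] using hb t ht z

/-- Gronwall's inequality forward in time. -/
lemma Flow.lip_X (h : Flow T b X Y) : ∃ C : ℝ, 0 ≤ C ∧ ∀ t ∈ Icc (0 : ℝ) T, ∀ y z,
    ‖X t y - X t z‖ ≤ C * ‖y - z‖ := by
  obtain ⟨K, hK, hb⟩ := h.lip_b
  refine ⟨Real.exp (K * T), (Real.exp_pos _).le, fun t ht y z => ?_⟩
  have hd : TD T (fun s w => X s w - X s z) (fun s w => b s (X s w) - b s (X s z)) :=
    ⟨fun w => (h.dX.ct w).sub (h.dX.ct z), fun w => (h.dX.cg w).sub (h.dX.cg z),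
      fun s hs w => (h.dX.hd s hs w).sub (h.dX.hd s hs z)⟩
  have := hd.gronwall' y (δ := ‖y - z‖) (K := K) (ε := 0) (by simp [h.X0]) hK le_rfl
    (fun s hs => by simpa using hb s hs _ _) ht
  refine this.trans (le_of_eq ?_)
  ring

/-- Gronwall's inequality backward in time: `exp (2 K t) ‖X t y - X t z‖ ^ 2` is nondecreasing. -/
lemma Flow.lip_X' (h : Flow T b X Y) : ∃ C : ℝ, 0 ≤ C ∧ ∀ t ∈ Icc (0 : ℝ) T, ∀ y z,
    ‖y - z‖ ≤ C * ‖X t y - X t z‖ := by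
  obtain ⟨K, hK, hb⟩ := h.lip_b
  refine ⟨Real.exp (K * T), (Real.exp_pos _).le, fun t ht y z => ?_⟩
  set D : ℝ → E := fun s => X s y - X s z with hD
  set D' : ℝ → E := fun s => b s (X s y) - b s (X s z) with hD'
  have hd : ∀ s ∈ Ioo 0 T, HasDerivAt D (D' s) s := fun s hs =>
    (h.dX.hd s hs y).sub (h.dX.hd s hs z)
  have hc : ContinuousOn D (Icc 0 T) := (h.dX.ct y).sub (h.dX.ct z)
  set q : ℝ → ℝ := fun s => Real.exp (2 * K * s) * ‖D s‖ ^ 2 with hq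
  have hqd : ∀ s ∈ Ioo 0 T, HasDerivAt q
      (Real.exp (2 * K * s) * (2 * K) * ‖D s‖ ^ 2 +
        Real.exp (2 * K * s) * (2 * inner ℝ (D s) (D' s))) s := by
    intro s hs
    have e1 : HasDerivAt (fun s => Real.exp (2 * K * s)) (Real.exp (2 * K * s) * (2 * K)) s := by
      simpa using ((hasDerivAt_id s).const_mul (2 * K)).exp
    exact e1.mul (hd s hs).norm_sq
  have hmono : MonotoneOn q (Icc 0 T) := by
    refine monotoneOn_of_deriv_nonneg (convex_Icc 0 T) ?_ ?_ ?_
    · have : Continuous fun s : ℝ => Real.exp (2 * K * s) := by fun_prop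
      exact this.continuousOn.mul (hc.norm.pow 2)
    · intro s hs
      rw [interior_Icc] at hs
      exact (hqd s hs).differentiableAt.differentiableWithinAt
    · intro s hs
      rw [interior_Icc] at hs
      rw [(hqd s hs).deriv]
      have h1 : |inner ℝ (D s) (D' s)| ≤ ‖D s‖ * ‖D' s‖ := abs_real_inner_le_norm _ _
      have h2 : ‖D' s‖ ≤ K * ‖D s‖ := hb s ⟨hs.1.le, hs.2.le⟩ _ _
      have h3 : ‖D s‖ * ‖D' s‖ ≤ K * ‖D s‖ ^ 2 := by
        have := mul_le_mul_of_nonneg_left h2 (norm_nonneg (D s))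
        nlinarith
      have h4 := (abs_le.1 h1).1
      have := Real.exp_pos (2 * K * s)
      have : 0 ≤ 2 * K * ‖D s‖ ^ 2 + 2 * inner ℝ (D s) (D' s) := by linarith
      nlinarith
  have key := hmono ⟨le_rfl, h.pos⟩ ht ht.1
  simp only [hq, hD, h.X0, mul_zero, Real.exp_zero, one_mul] at key
  refine le_of_sq_le_sq ?_ (by positivity)
  refine key.trans ?_
  rw [mul_pow, ← Real.exp_nat_mul]
  have h5 : 2 * K * t ≤ (2 : ℕ) * (K * T) := by
    push_cast
    nlinarith [mul_le_mul_of_nonneg_left ht.2 hK]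
  exact mul_le_mul_of_nonneg_right (Real.exp_le_exp.2 h5) (by positivity)

lemma Flow.X_bd1 (h : Flow T b X Y) : Bd (Icc 0 T) one 1 X := by
  obtain ⟨C, hC, hl⟩ := h.lip_X
  refine ⟨C, hC, fun t ht x => ?_⟩
  rw [norm_iteratedFDeriv_one]
  simp only [one, mul_one]
  exact norm_fderiv_le_of_lip' ℝ hC (Eventually.of_forall fun y => hl t ht y x)

lemma Flow.Y_lip (h : Flow T b X Y) : ∃ C : ℝ, 0 ≤ C ∧ ∀ t ∈ Icc (0 : ℝ) T, ∀ y z,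
    ‖Y t y - Y t z‖ ≤ C * ‖y - z‖ := by
  obtain ⟨C, hC, hl⟩ := h.lip_X'
  refine ⟨C, hC, fun t ht y z => ?_⟩
  have := hl t ht (Y t y) (Y t z)
  rwa [h.XY t ht, h.XY t ht] at this

lemma Flow.Y_bd1 (h : Flow T b X Y) : Bd (Icc 0 T) one 1 Y := by
  obtain ⟨C, hC, hl⟩ := h.Y_lip
  refine ⟨C, hC, fun t ht x => ?_⟩
  rw [norm_iteratedFDeriv_one]
  simp only [one, mul_one]
  exact norm_fderiv_le_of_lip' ℝ hC (Eventually.of_forall fun y => hl t ht y x)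

lemma Flow.fderiv_bX (h : Flow T b X Y) {t : ℝ} (ht : t ∈ Icc (0 : ℝ) T) (y : E) :
    fderiv ℝ (fun y => b t (X t y)) y = (fderiv ℝ (b t) (X t y)).comp (fderiv ℝ (X t) y) :=
  fderiv_fun_comp y ((h.sb.diff ht) _) ((h.sX.diff ht) y)

lemma Flow.s_bX (h : Flow T b X Y) : Sm (Icc 0 T) (fun t y => b t (X t y)) :=
  fun t ht => (h.sb t ht).comp (h.sX t ht)

lemma Flow.lb_bX (h : Flow T b X Y) : LB T (fun t y => b t (X t y)) := by
  obtain ⟨K, hK, hb⟩ := h.bb.2 0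
  obtain ⟨C, hC, hX⟩ := h.X_bd1
  simp only [norm_iteratedFDeriv_zero, norm_iteratedFDeriv_one, one, mul_one] at hb hX
  refine fun _ => ⟨K * C, by positivity, fun t ht y _ => ?_⟩
  rw [h.fderiv_bX ht y]
  exact (ContinuousLinearMap.opNorm_comp_le _ _).trans
    (mul_le_mul (hb t ht _) (hX t ht y) (norm_nonneg _) hK)

lemma Flow.ct_DX (h : Flow T b X Y) : CT T (fun t => fderiv ℝ (X t)) := fun y =>
  (h.dX.fderiv_int h.sX h.s_bX h.lb_bX y).2

lemma Flow.ct_DbX (h : Flow T b X Y) : CT T (fun t y => fderiv ℝ (b t) (X t y)) := fun y t ht =>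
  LB.joint_at h.bb.1 (Bd.lb (h.bb.2 1)) (h.pb.ct_fderiv h.cb) ht subset_rfl (h.dX.ct y t ht)

/-- The linearised flow. -/
lemma Flow.td_DX (h : Flow T b X Y) : TD T (fun t => fderiv ℝ (X t))
    (fun t y => (fderiv ℝ (b t) (X t y)).comp (fderiv ℝ (X t) y)) := by
  have cg : CT T (fun t => fderiv ℝ (fun y => b t (X t y))) := by
    refine CT.congr (u := fun t y => (fderiv ℝ (b t) (X t y)).comp (fderiv ℝ (X t) y))
      (fun y => (h.ct_DbX y).clm_comp (h.ct_DX y)) fun t ht y => h.fderiv_bX ht y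
  exact (h.dX.fderiv h.sX h.s_bX h.lb_bX cg).congr (fun _ _ _ => rfl)
    fun t ht y => (h.fderiv_bX ht y).symm

/-- All derivatives of the flow map are bounded, by induction on the order: the coefficients of the
linearised equation only involve derivatives of the flow of lower order. -/
lemma Flow.bb_DX (h : Flow T b X Y) : BB (Icc 0 T) (fun t => fderiv ℝ (X t)) := by
  refine ⟨h.sX.fderiv, ?_⟩
  suffices H : ∀ n, ∀ k ≤ n, Bd (Icc 0 T) one k (fun t => fderiv ℝ (X t)) from
    fun n => H n n le_rfl
  intro n
  induction n with
  | zero =>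
    intro k hk
    obtain rfl : k = 0 := by omega
    exact h.X_bd1.fderiv
  | succ n ih =>
    have sP : Sm (Icc 0 T) (fun t y => fderiv ℝ (b t) (X t y)) := fun t ht =>
      (h.bb.1 t ht).comp (h.sX t ht)
    have bP : ∀ k ≤ n + 1, Bd (Icc 0 T) one k (fun t y => fderiv ℝ (b t) (X t y)) := by
      intro k hk
      refine Bd.comp (g := fun t => fderiv ℝ (b t)) h.bb.1 h.sX (fun j _ => h.bb.2 j) ?_
      rintro (_ | j) h1 h2
      · omega
      · exact (ih j (by omega)).of_fderiv
    obtain ⟨cm, hcm⟩ : ∃ cm : (E →L[ℝ] E) →L[ℝ] (E →L[ℝ] E) →L[ℝ] (E →L[ℝ] E),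
        ∀ A B, cm A B = A.comp B := ⟨ContinuousLinearMap.compL ℝ E E E, fun _ _ => rfl⟩
    have cL := CT.clm (F := E →L[ℝ] E) (G := (E →L[ℝ] E) →L[ℝ] (E →L[ℝ] E))
      (u := fun t y => fderiv ℝ (b t) (X t y)) cm h.ct_DbX
    have sL := Sm.clm (F := E →L[ℝ] E) (G := (E →L[ℝ] E) →L[ℝ] (E →L[ℝ] E))
      (u := fun t y => fderiv ℝ (b t) (X t y)) sP cm
    have bL := fun k hk => Bd.clm (F := E →L[ℝ] E) (G := (E →L[ℝ] E) →L[ℝ] (E →L[ℝ] E))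
      (u := fun t y => fderiv ℝ (b t) (X t y)) sP (bP k hk) cm
    have sR : Sm (Icc 0 T) (fun (_ : ℝ) (_ : E) => (0 : E →L[ℝ] E)) := fun _ _ => contDiff_const
    have cR : CT T (fun (_ : ℝ) (_ : E) => (0 : E →L[ℝ] E)) := fun _ => continuousOn_const
    have bR : ∀ k ≤ n + 1, Bd (Icc 0 T) one k (fun (_ : ℝ) (_ : E) => (0 : E →L[ℝ] E)) :=
      fun k _ => ⟨0, le_rfl, fun t _ x => by
        have : (fun _ : E => (0 : E →L[ℝ] E)) = 0 := rfl
        rw [this, iteratedFDeriv_zero]; simp⟩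
    have b0 : ∀ k ≤ n + 1, Bd (Icc 0 T) one k (fun (_ : ℝ) => fderiv ℝ (X 0)) := by
      intro k _
      have e : fderiv ℝ (X 0) = fun _ => ContinuousLinearMap.id ℝ E := by
        have : X 0 = id := funext h.X0
        rw [this]; ext1 x; exact fderiv_id
      rw [e]
      rcases Nat.eq_zero_or_pos k with rfl | hk
      · exact ⟨‖ContinuousLinearMap.id ℝ E‖, norm_nonneg _, fun t _ x => by simp [one]⟩
      · exact ⟨0, le_rfl, fun t _ x => by
          rw [iteratedFDeriv_const_of_ne (by omega)]; simp⟩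
    refine lin_ode (n + 1) h.sX.fderiv sL sR cL cR ?_ bL bR b0
    exact h.td_DX.congr (fun _ _ _ => rfl) fun t ht y => by rw [hcm, add_zero]

end Flow

end WKB

namespace WKB

/-! ### The inverse flow -/

set_option linter.unusedSectionVars false

section InverseFlow

variable {E : Type} [NormedAddCommGroup E] [InnerProductSpace ℝ E] [FiniteDimensional ℝ E]

/-- The derivative of the inverse of a family of operators: `U' = - U P' U`. -/
lemma fderiv_inv {P U : E → E →L[ℝ] E} (dP : Differentiable ℝ P) (dU : Differentiable ℝ U)
    (UP : ∀ x, (U x).comp (P x) = ContinuousLinearMap.id ℝ E)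
    (PU : ∀ x, (P x).comp (U x) = ContinuousLinearMap.id ℝ E) (x v : E) :
    fderiv ℝ U x v = - (U x).comp ((fderiv ℝ P x v).comp (U x)) := by
  have h := (dU x).hasFDerivAt.clm_comp (dP x).hasFDerivAt
  have h' : HasFDerivAt (fun y => (U y).comp (P y)) (0 : E →L[ℝ] E →L[ℝ] E) x := by
    simp only [UP]; exact hasFDerivAt_const _ _
  have e := congrArg (fun L => (L v).comp (U x)) (h.unique h')
  simp only [add_apply, ContinuousLinearMap.comp_apply, zero_apply,
    ContinuousLinearMap.compL_apply, ContinuousLinearMap.flip_apply,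
    ContinuousLinearMap.add_comp, ContinuousLinearMap.zero_comp] at e
  rw [ContinuousLinearMap.comp_assoc, ContinuousLinearMap.comp_assoc, PU,
    ContinuousLinearMap.comp_id, add_comm] at e
  exact eq_neg_of_add_eq_zero_left e

lemma exists_inv_bilin : ∃ B : (E →L[ℝ] E) →L[ℝ] (E →L[ℝ] E →L[ℝ] E) →L[ℝ] (E →L[ℝ] E →L[ℝ] E),
    ∀ U A v, B U A v = (A v).comp U :=
  ⟨(ContinuousLinearMap.compL ℝ E (E →L[ℝ] E) (E →L[ℝ] E)).comp
    (ContinuousLinearMap.compL ℝ E E E).flip, fun _ _ _ => rfl⟩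

lemma exists_inv_bilin' : ∃ B : (E →L[ℝ] E) →L[ℝ] (E →L[ℝ] E →L[ℝ] E) →L[ℝ] (E →L[ℝ] E →L[ℝ] E),
    ∀ U A v, B U A v = U.comp (A v) :=
  ⟨(ContinuousLinearMap.compL ℝ E (E →L[ℝ] E) (E →L[ℝ] E)).comp
    (ContinuousLinearMap.compL ℝ E E E), fun _ _ _ => rfl⟩

lemma bd_bilin_twice {ι A₁ A₂ : Type} [NormedAddCommGroup A₁] [NormedSpace ℝ A₁]
    [NormedAddCommGroup A₂] [NormedSpace ℝ A₂] {S : Set ι} (B B' : A₁ →L[ℝ] A₂ →L[ℝ] A₂)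
    {U : ι → E → A₁} {D : ι → E → A₂} (sU : Sm S U) (sD : Sm S D) {n : ℕ}
    (hU : ∀ k ≤ n, Bd S one k U) (hD : ∀ k ≤ n, Bd S one k D) :
    Bd S one n (fun i x => - B' (U i x) (B (U i x) (D i x))) :=
  (Bd.bilin_one B' sU (sU.bilin B sD) hU fun _ hk => Bd.bilin_one B sU sD
    (fun _ hl => hU _ (hl.trans hk)) (fun _ hl => hD _ (hl.trans hk))).neg

set_option maxHeartbeats 400000 in
lemma bd_inv {ι : Type} {S : Set ι} {P U : ι → E → E →L[ℝ] E} (sP : Sm S P) (sU : Sm S U)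
    (UP : ∀ i ∈ S, ∀ x, (U i x).comp (P i x) = ContinuousLinearMap.id ℝ E)
    (PU : ∀ i ∈ S, ∀ x, (P i x).comp (U i x) = ContinuousLinearMap.id ℝ E)
    (h0 : Bd S one 0 U) (n : ℕ) (hP : ∀ k ≤ n, Bd S one k P) : ∀ k ≤ n, Bd S one k U := by
  induction n with
  | zero =>
    intro k hk
    obtain rfl : k = 0 := by omega
    exact h0
  | succ n ih =>
    have ih' := ih fun k hk => hP k (by omega)
    obtain ⟨B, hB⟩ := exists_inv_bilin (E := E)
    obtain ⟨B', hB'⟩ := exists_inv_bilin' (E := E)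
    have key : ∀ k ≤ n, Bd S one k (fun i => fderiv ℝ (U i)) := by
      intro k hk
      have q1 : ∀ j ≤ k, Bd S one j U := fun j hj => ih' j (by omega)
      have q2 : ∀ j ≤ k, Bd S one j (fun i => fderiv ℝ (P i)) := fun j hj =>
        (hP (j + 1) (by omega)).fderiv
      have q4 := bd_bilin_twice (A₁ := E →L[ℝ] E) (A₂ := E →L[ℝ] E →L[ℝ] E) B B' sU sP.fderiv q1 q2
      refine Bd.congr q4 fun i hi x => ?_
      ext1 v
      rw [fderiv_inv (sP.diff hi) (sU.diff hi) (UP i hi) (PU i hi) x v, neg_apply, hB', hB]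
    rintro (_ | k) hk
    · exact h0
    · exact (key k (by omega)).of_fderiv

variable {T : ℝ} {b X Y : ℝ → E → E}

lemma Flow.DY_DX (h : Flow T b X Y) {t : ℝ} (ht : t ∈ Icc (0 : ℝ) T) (x : E) :
    (fderiv ℝ (Y t) x).comp (fderiv ℝ (X t) (Y t x)) = ContinuousLinearMap.id ℝ E := by
  have e : (fun y => Y t (X t y)) = id := funext (h.YX t ht)
  have := fderiv_fun_comp (Y t x) ((h.sY.diff ht) (X t (Y t x))) ((h.sX.diff ht) (Y t x))
  rw [e, fderiv_id, h.XY t ht] at this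
  exact this.symm

lemma Flow.DX_DY (h : Flow T b X Y) {t : ℝ} (ht : t ∈ Icc (0 : ℝ) T) (x : E) :
    (fderiv ℝ (X t) (Y t x)).comp (fderiv ℝ (Y t) x) = ContinuousLinearMap.id ℝ E := by
  have e : (fun y => X t (Y t y)) = id := funext (h.XY t ht)
  have := fderiv_fun_comp x ((h.sX.diff ht) (Y t x)) ((h.sY.diff ht) x)
  rw [e, fderiv_id] at this
  exact this.symm

lemma Flow.bb_DY (h : Flow T b X Y) : BB (Icc 0 T) (fun t => fderiv ℝ (Y t)) := by
  refine ⟨h.sY.fderiv, ?_⟩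
  suffices H : ∀ n, ∀ k ≤ n, Bd (Icc 0 T) one k (fun t => fderiv ℝ (Y t)) from
    fun n => H n n le_rfl
  have sP : Sm (Icc 0 T) (fun t x => fderiv ℝ (X t) (Y t x)) := fun t ht =>
      (h.bb_DX.1 t ht).comp (h.sY t ht)
  intro n
  induction n with
  | zero =>
    intro k hk
    obtain rfl : k = 0 := by omega
    exact h.Y_bd1.fderiv
  | succ n ih =>
    refine bd_inv sP h.sY.fderiv (fun t ht => h.DY_DX ht) (fun t ht => h.DX_DY ht)
      h.Y_bd1.fderiv (n + 1) fun k hk => ?_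
    refine Bd.comp (g := fun t => fderiv ℝ (X t)) h.bb_DX.1 h.sY (fun j _ => h.bb_DX.2 j) ?_
    rintro (_ | j) h1 h2
    · omega
    · exact (ih j (by omega)).of_fderiv

lemma Flow.ct_Y (h : Flow T b X Y) : CT T Y := by
  obtain ⟨C, hC, hl⟩ := h.Y_lip
  intro x t ht
  have h1 : Tendsto (fun s => C * ‖X t (Y t x) - X s (Y t x)‖) (nhdsWithin t (Icc 0 T)) (nhds 0) := by
    have : Tendsto (fun s => C * ‖X t (Y t x) - X s (Y t x)‖) (nhdsWithin t (Icc 0 T))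
        (nhds (C * ‖X t (Y t x) - X t (Y t x)‖)) :=
      (((h.dX.ct (Y t x)) t ht).const_sub _).norm.const_mul C
    simpa using this
  rw [ContinuousWithinAt, tendsto_iff_norm_sub_tendsto_zero]
  refine squeeze_zero' (Eventually.of_forall fun _ => norm_nonneg _) ?_ h1
  filter_upwards [self_mem_nhdsWithin] with s hs
  have := hl s hs x (X s (Y t x))
  rw [h.YX s hs] at this
  rwa [h.XY t ht]

lemma Flow.X_growth (h : Flow T b X Y) : Bd (Icc 0 T) (pw 1) 0 X := by
  refine Bd.linear_growth h.sX 0 ?_ ?_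
  · exact h.X_bd1.mono' fun _ _ x => by simp [pw, one]
  · obtain ⟨C, hC⟩ := isCompact_Icc.exists_bound_of_continuousOn (h.dX.ct 0)
    exact ⟨max C 0, le_max_right _ _, fun t ht => (hC t ht).trans (le_max_left _ _)⟩

lemma Flow.pg_X (h : Flow T b X Y) : PG (Icc 0 T) X := by
  refine ⟨h.sX, ?_⟩
  have h0 := h.X_growth
  rintro (_ | n)
  · exact ⟨1, h0⟩
  · exact ⟨0, (h.bb_DX.2 n).of_fderiv.mono' fun _ _ x => by simp [pw, one]⟩

lemma Flow.pg_Y (h : Flow T b X Y) : PG (Icc 0 T) Y := by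
  refine ⟨h.sY, ?_⟩
  have h0 : Bd (Icc 0 T) (pw 1) 0 Y := by
    refine Bd.linear_growth h.sY 0 ?_ ?_
    · exact h.Y_bd1.mono' fun _ _ x => by simp [pw, one]
    · obtain ⟨C, hC⟩ := isCompact_Icc.exists_bound_of_continuousOn (h.ct_Y 0)
      exact ⟨max C 0, le_max_right _ _, fun t ht => (hC t ht).trans (le_max_left _ _)⟩
  rintro (_ | n)
  · exact ⟨1, h0⟩
  · exact ⟨0, (h.bb_DY.2 n).of_fderiv.mono' fun _ _ x => by simp [pw, one]⟩

/-- The inverse flow is transported by the vector field. -/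
lemma Flow.td_Y (h : Flow T b X Y) : TD T Y (fun t x => - fderiv ℝ (Y t) x (b t x)) := by
  refine ⟨h.ct_Y, fun x => (((h.pg_Y.ct_fderiv h.ct_Y) x).clm_apply (h.cb x)).neg, ?_⟩
  intro t ht x
  have ht' : t ∈ Icc 0 T := ⟨ht.1.le, ht.2.le⟩
  have hc : ContinuousAt (fun s => Y s x) t := (h.ct_Y x).continuousAt (Icc_mem_nhds ht.1 ht.2)
  have h1 := h.dX.partial_along h.s_bX h.lb_bX ht hc
  have h2 := h1.const_sub x
  have e0 : x - (X t (Y t x) - X t (Y t x)) = x := by simp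
  have h3 : HasFDerivAt (Y t) (fderiv ℝ (Y t) x) (x - (X t (Y t x) - X t (Y t x))) := by
    rw [e0]; exact ((h.sY.diff ht') x).hasFDerivAt
  have h4 := h3.comp_hasDerivAt t h2
  rw [map_neg, h.XY t ht'] at h4
  refine h4.congr_of_eventuallyEq ?_
  filter_upwards [Icc_mem_nhds ht.1 ht.2] with s hs
  simp only [Function.comp_apply]
  rw [h.XY s hs, sub_sub_cancel, h.YX t ht']

/-- Lower bound for the growth of the inverse flow. -/
lemma Flow.Y_growth (h : Flow T b X Y) : ∃ K : ℝ, 0 ≤ K ∧ ∀ t ∈ Icc (0 : ℝ) T, ∀ x,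
    1 + ‖x‖ ≤ K * (1 + ‖Y t x‖) := by
  obtain ⟨C, hC, hb⟩ := h.X_growth
  refine ⟨1 + C, by positivity, fun t ht x => ?_⟩
  have := hb t ht (Y t x)
  simp only [norm_iteratedFDeriv_zero, pw, pow_one] at this
  rw [h.XY t ht] at this
  have := norm_nonneg (Y t x)
  nlinarith

end InverseFlow

end WKB

namespace WKB

/-! ### The Jacobian determinant -/

section Jacobian

variable {d : ℕ}

/-- The `i`-th standard basis vector. -/
abbrev bv (i : Fin d) : Ed d := EuclideanSpace.single i 1

/-- The determinant of a matrix in terms of its entries in the standard basis. -/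
lemma det_eq_sum (M : Ed d →L[ℝ] Ed d) : LinearMap.det (M : Ed d →ₗ[ℝ] Ed d) =
    ∑ σ : Equiv.Perm (Fin d), ((Equiv.Perm.sign σ : ℤ) : ℝ) * ∏ i, M (bv i) (σ i) := by
  rw [← LinearMap.det_toMatrix (EuclideanSpace.basisFun (Fin d) ℝ).toBasis, Matrix.det_apply']
  refine Finset.sum_congr rfl fun σ _ => ?_
  congr 1

/-- The derivative of the determinant at the identity is the trace. -/
lemma hasDerivAt_det_one {N : ℝ → Ed d →L[ℝ] Ed d} {A : Ed d →L[ℝ] Ed d} {t : ℝ}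
    (h : HasDerivAt N A t) (h1 : N t = ContinuousLinearMap.id ℝ (Ed d)) :
    HasDerivAt (fun s => LinearMap.det (N s : Ed d →ₗ[ℝ] Ed d)) (∑ i, A (bv i) i) t := by
  simp only [det_eq_sum]
  have he : ∀ i j, HasDerivAt (fun s => N s (bv i) j) (A (bv i) j) t := by
    intro i j
    have h2 : HasDerivAt (fun s => N s (bv i)) (A (bv i)) t := by
      simpa using h.clm_apply (hasDerivAt_const t (bv i))
    exact (EuclideanSpace.proj j : Ed d →L[ℝ] ℝ).hasFDerivAt.comp_hasDerivAt t h2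
  have hs := HasDerivAt.fun_sum (u := (Finset.univ : Finset (Equiv.Perm (Fin d)))) fun σ _ =>
    (HasDerivAt.fun_finsetProd (u := Finset.univ) fun i _ => he i (σ i)).const_mul
      ((Equiv.Perm.sign σ : ℤ) : ℝ)
  refine hs.congr_deriv (Eq.symm ?_)
  rw [Finset.sum_eq_single (1 : Equiv.Perm (Fin d))]
  · simp only [Equiv.Perm.sign_one, Equiv.Perm.one_apply, h1]
    simp [bv]
  · intro σ _ hσ
    have : ∀ i, (∏ j ∈ Finset.univ.erase i, N t (bv j) (σ j)) = 0 := by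
      intro i
      -- a permutation fixing all points but one is the identity
      obtain ⟨j, hji, hj⟩ : ∃ j, j ≠ i ∧ σ j ≠ j := by
        by_contra! hcon
        refine hσ (Equiv.ext fun j => ?_)
        by_cases hj : j = i
        · subst hj
          by_contra hne
          exact hne (σ.injective (hcon (σ j) hne))
        · exact hcon j hj
      refine Finset.prod_eq_zero (Finset.mem_erase.2 ⟨hji, Finset.mem_univ j⟩) ?_
      rw [h1]
      simp [bv, hj]
    simp [this]
  · simp

/-- Liouville's formula. -/
lemma hasDerivAt_det {M : ℝ → Ed d →L[ℝ] Ed d} {A R : Ed d →L[ℝ] Ed d} {t : ℝ}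
    (h : HasDerivAt M (A.comp (M t)) t) (h1 : (M t).comp R = ContinuousLinearMap.id ℝ (Ed d))
    (h2 : R.comp (M t) = ContinuousLinearMap.id ℝ (Ed d)) :
    HasDerivAt (fun s => LinearMap.det (M s : Ed d →ₗ[ℝ] Ed d))
      ((∑ i, A (bv i) i) * LinearMap.det (M t : Ed d →ₗ[ℝ] Ed d)) t := by
  have hN : HasDerivAt (fun s => (M s).comp R) A t := by
    have := h.clm_comp (hasDerivAt_const t R)
    rw [ContinuousLinearMap.comp_zero, add_zero, ContinuousLinearMap.comp_assoc, h1,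
      ContinuousLinearMap.comp_id] at this
    exact this
  have := (hasDerivAt_det_one hN h1).mul_const (LinearMap.det (M t : Ed d →ₗ[ℝ] Ed d))
  refine this.congr_of_eventuallyEq (Eventually.of_forall fun s => ?_)
  have e : (M s) = ((M s).comp R).comp (M t) := by
    rw [ContinuousLinearMap.comp_assoc, h2, ContinuousLinearMap.comp_id]
  change LinearMap.det (M s : Ed d →ₗ[ℝ] Ed d) = _
  conv_lhs => rw [e]
  simp only [ContinuousLinearMap.toLinearMap_comp, LinearMap.det_comp]

end Jacobian

section Divergence

variable {d : ℕ} {T : ℝ} {b X Y : ℝ → Ed d → Ed d}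

/-- The divergence of a vector field. -/
def dv (v : Ed d → Ed d) (x : Ed d) : ℝ := ∑ i, fderiv ℝ v x (bv i) i

lemma bb_dv {S : Set ℝ} (h : BB S (fun t => fderiv ℝ (b t))) : BB S (fun t => dv (b t)) := by
  have e : ∀ i : Fin d, BB S (fun t x => fderiv ℝ (b t) x (bv i) i) := fun i =>
    BB.clm (BB.clm h (ContinuousLinearMap.apply ℝ (Ed d) (bv i)))
      (EuclideanSpace.proj i : Ed d →L[ℝ] ℝ)
  have : ∀ s : Finset (Fin d), BB S (fun t x => ∑ i ∈ s, fderiv ℝ (b t) x (bv i) i) := by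
    intro s
    induction s using Finset.cons_induction with
    | empty =>
      simp only [Finset.sum_empty]
      refine ⟨fun _ _ => contDiff_const, fun n => ⟨0, le_rfl, fun t _ x => ?_⟩⟩
      have : (fun _ : Ed d => (0 : ℝ)) = 0 := rfl
      rw [this, iteratedFDeriv_zero]; simp
    | cons i s hi ih =>
      simp only [Finset.sum_cons]
      exact (e i).add ih
  exact this Finset.univ

lemma Flow.ct_dvX (h : Flow T b X Y) : CT T (fun t y => dv (b t) (X t y)) := by
  intro y
  unfold dv
  refine continuousOn_finsetSum _ fun i _ => ?_
  exact (EuclideanSpace.proj i : Ed d →L[ℝ] ℝ).continuous.comp_continuousOn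
    ((h.ct_DbX y).clm_apply continuousOn_const)

lemma Flow.bb_dvX (h : Flow T b X Y) : BB (Icc 0 T) (fun t y => dv (b t) (X t y)) :=
  (bb_dv h.bb).comp h.bb_DX h.sX

/-- The logarithm of the Jacobian determinant is the integral of the divergence of the vector field
along the flow. -/
lemma Flow.jdet (h : Flow T b X Y) {t : ℝ} (ht : t ∈ Icc (0 : ℝ) T) (y : Ed d) :
    Jdet d X t y = Real.exp (∫ s in (0 : ℝ)..t, dv (b s) (X s y)) := by
  set θ : ℝ → Ed d → ℝ := fun t y => ∫ s in (0 : ℝ)..t, dv (b s) (X s y) with hθ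
  have tθ : TD T θ (fun t y => dv (b t) (X t y)) :=
    TD.of_int h.ct_dvX fun t _ x => by simp [hθ]
  have cJ : CT T (fun t => Jdet d X t) := by
    intro y
    simp only [Jdet, det_eq_sum]
    refine continuousOn_finsetSum _ fun σ _ => ContinuousOn.mul continuousOn_const ?_
    refine continuousOn_finsetProd _ fun i _ => ?_
    exact (EuclideanSpace.proj (σ i) : Ed d →L[ℝ] ℝ).continuous.comp_continuousOn
      ((h.ct_DX y).clm_apply continuousOn_const)
  have dJ : ∀ s ∈ Ioo 0 T, ∀ y, HasDerivAt (fun s => Jdet d X s y)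
      (dv (b s) (X s y) * Jdet d X s y) s := by
    intro s hs y
    have hs' : s ∈ Icc 0 T := ⟨hs.1.le, hs.2.le⟩
    have e1 := h.DX_DY hs' (X s y)
    have e2 := h.DY_DX hs' (X s y)
    rw [h.YX s hs'] at e1 e2
    exact hasDerivAt_det (h.td_DX.hd s hs y) e1 e2
  -- the quotient of the two sides is constant
  have hq : TD T (fun s y => Jdet d X s y * Real.exp (-θ s y)) (fun _ _ => 0) := by
    refine ⟨fun y => (cJ y).mul (tθ.ct y).neg.rexp, fun _ => continuousOn_const, fun s hs y => ?_⟩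
    have := (dJ s hs y).mul (tθ.hd s hs y).neg.exp
    refine this.congr_deriv ?_
    ring
  have := hq.int ht y
  have e0 : Jdet d X 0 y = 1 := by
    have e : X 0 = id := funext h.X0
    simp [Jdet, e, fderiv_id]
  have e1 : θ 0 y = 0 := by simp [hθ]
  simp only [e0, e1, intervalIntegral.integral_zero, add_zero, neg_zero, Real.exp_zero, mul_one] at this
  rw [Real.exp_neg] at this
  have hp := Real.exp_pos (θ t y)
  field_simp at this
  exact this

end Divergence

end WKB

namespace WKB

/-! ### The leading-order amplitude -/

section Amplitude

variable {d : ℕ} {T : ℝ} {b X Y : ℝ → Ed d → Ed d}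

lemma us_schwartz {ι : Type} {S : Set ι} (a₀ : SchwartzMap (Ed d) ℂ) :
    US S (fun (_ : ι) x => a₀ x) := by
  refine ⟨fun _ _ => a₀.smooth _, fun n k => ?_⟩
  refine ⟨2 ^ k * ((Finset.Iic (k, n)).sup fun m => SchwartzMap.seminorm ℝ m.1 m.2) a₀,
    mul_nonneg (by positivity) (apply_nonneg _ _), fun i _ x => ?_⟩
  have := SchwartzMap.one_add_le_sup_seminorm_apply (𝕜 := ℝ) (m := (k, n)) (k := k) (n := n)
    le_rfl le_rfl a₀ x
  have hp := pow_pos (w_pos x) k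
  unfold dw
  rw [← div_eq_mul_inv, le_div_iff₀ hp, mul_comm]
  exact this

/-- The exponent of the amplitude along the flow: half the logarithm of the Jacobian, and the phase
shift due to the nonlinearity. -/
def ampExp (f : ℝ → ℝ) (a₀ : Ed d → ℂ) (b X : ℝ → Ed d → Ed d) (t : ℝ) (y : Ed d) : ℂ :=
  ((-(1 / 2) * ∫ s in (0 : ℝ)..t, dv (b s) (X s y) : ℝ) : ℂ) +
    ((-∫ s in (0 : ℝ)..t,
      f (Real.exp (-∫ r in (0 : ℝ)..s, dv (b r) (X r y)) * ‖a₀ y‖ ^ 2) : ℝ) : ℂ) * I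

/-- The leading-order amplitude. -/
def amp (f : ℝ → ℝ) (a₀ : Ed d → ℂ) (b X Y : ℝ → Ed d → Ed d) (t : ℝ) (x : Ed d) : ℂ :=
  exp (ampExp f a₀ b X t (Y t x)) * a₀ (Y t x)

/-- The transport equation solved by the leading-order amplitude. -/
lemma Flow.amp (h : Flow T b X Y) {f : ℝ → ℝ} (hf : ContDiff ℝ (⊤ : ℕ∞) f)
    (a₀ : SchwartzMap (Ed d) ℂ) :
    US (Icc 0 T) (WKB.amp f a₀ b X Y) ∧
    TD T (WKB.amp f a₀ b X Y) (fun t x => - fderiv ℝ (WKB.amp f a₀ b X Y t) x (b t x)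
      - ((1 / 2 * dv (b t) x : ℝ) : ℂ) * WKB.amp f a₀ b X Y t x
      - I * ((f (‖WKB.amp f a₀ b X Y t x‖ ^ 2) : ℝ) : ℂ) * WKB.amp f a₀ b X Y t x) := by
  set θ : ℝ → Ed d → ℝ := fun t y => ∫ s in (0 : ℝ)..t, dv (b s) (X s y) with hθ
  have bθ : BB (Icc 0 T) θ := h.bb_dvX.integral h.ct_dvX
  have tθ : TD T θ (fun t y => dv (b t) (X t y)) :=
    TD.of_int h.ct_dvX fun t _ x => by simp [hθ]
  set q : ℝ → Ed d → ℝ := fun t y => f (Real.exp (-θ t y) * ‖a₀ y‖ ^ 2) with hq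
  have ua : US (Icc 0 T) (fun (_ : ℝ) x => a₀ x) := us_schwartz a₀
  have bq : BB (Icc 0 T) q := by
    have e1 : BB (Icc 0 T) (fun t y => Real.exp (-θ t y)) := bθ.neg.comp_smooth Real.contDiff_exp
    have e2 : BB (Icc 0 T) (fun (_ : ℝ) y => ‖a₀ y‖ ^ 2) :=
      ua.toBB.comp_smooth (contDiff_norm_sq ℝ)
    exact (BB.bilin (ContinuousLinearMap.mul ℝ ℝ) e1 e2).comp_smooth hf
  have cq : CT T q := fun y => hf.continuous.comp_continuousOn
    ((tθ.ct y).neg.rexp.mul continuousOn_const)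
  set g : ℝ → Ed d → ℝ := fun t y => ∫ s in (0 : ℝ)..t, q s y with hg
  have bg : BB (Icc 0 T) g := bq.integral cq
  have tg : TD T g q := TD.of_int cq fun t _ x => by simp [hg]
  set z : ℝ → Ed d → ℂ := ampExp f a₀ b X with hz
  have ez : ∀ t y, z t y = ((-(1 / 2) * θ t y : ℝ) : ℂ) + ((-g t y : ℝ) : ℂ) * I := fun _ _ => rfl
  have bz : BB (Icc 0 T) z := by
    have e1 := BB.clm bθ ((-(1 / 2) : ℝ) • Complex.ofRealCLM)
    have e2 := BB.clm bg ((ContinuousLinearMap.mul ℝ ℂ (-I)).comp Complex.ofRealCLM)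
    refine (e1.add e2).congr fun t _ y => ?_
    rw [ez]
    simp; ring
  set w : ℝ → Ed d → ℂ := fun t y => ((-(1 / 2) * dv (b t) (X t y) : ℝ) : ℂ) + ((-q t y : ℝ) : ℂ) * I
    with hw
  have bw : BB (Icc 0 T) w := by
    have e1 := BB.clm h.bb_dvX ((-(1 / 2) : ℝ) • Complex.ofRealCLM)
    have e2 := BB.clm bq ((ContinuousLinearMap.mul ℝ ℂ (-I)).comp Complex.ofRealCLM)
    refine (e1.add e2).congr fun t _ y => ?_
    simp [hw]; ring
  have tz : TD T z w := by
    refine ⟨fun y => ?_, fun y => ?_, fun t ht y => ?_⟩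
    · simp only [ez]
      exact (Complex.continuous_ofReal.comp_continuousOn (continuousOn_const.mul (tθ.ct y))).add
        ((Complex.continuous_ofReal.comp_continuousOn (tg.ct y).neg).mul continuousOn_const)
    · exact (Complex.continuous_ofReal.comp_continuousOn (continuousOn_const.mul (tθ.cg y))).add
        ((Complex.continuous_ofReal.comp_continuousOn (tg.cg y).neg).mul continuousOn_const)
    · exact (((tθ.hd t ht y).const_mul (-(1 / 2))).ofReal_comp).add
        (((tg.hd t ht y).neg.ofReal_comp).mul_const I)
  -- the amplitude in Lagrangian coordinates
  set α : ℝ → Ed d → ℂ := fun t y => exp (z t y) * a₀ y with hα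
  have uα : US (Icc 0 T) α :=
    US.bilin (ContinuousLinearMap.mul ℝ ℂ) (bz.comp_smooth Complex.contDiff_exp).toPG ua
  have tα : TD T α (fun t y => w t y * α t y) := by
    refine ⟨fun y => (tz.ct y).cexp.mul continuousOn_const,
      fun y => (tz.cg y).mul ((tz.ct y).cexp.mul continuousOn_const), fun t ht y => ?_⟩
    refine ((tz.hd t ht y).cexp.mul_const (a₀ y)).congr_deriv ?_
    simp only [hα]; ring
  have uw : US (Icc 0 T) (fun t y => w t y * α t y) :=
    US.bilin (ContinuousLinearMap.mul ℝ ℂ) bw.toPG uα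
  have eA : WKB.amp f a₀ b X Y = fun t x => α t (Y t x) := rfl
  refine ⟨uα.comp h.bb_DY h.sY h.Y_growth, ?_⟩
  refine (tα.comp uα.1 uα.toPG uw.toPG h.td_Y).congr (fun _ _ _ => rfl) fun t ht x => ?_
  have e1 : fderiv ℝ (WKB.amp f a₀ b X Y t) x
      = (fderiv ℝ (α t) (Y t x)).comp (fderiv ℝ (Y t) x) :=
    fderiv_fun_comp x ((uα.1.diff ht) _) ((h.sY.diff ht) x)
  have e2 : WKB.amp f a₀ b X Y t x = α t (Y t x) := rfl
  have e3 : ‖α t (Y t x)‖ ^ 2 = Real.exp (-θ t (Y t x)) * ‖a₀ (Y t x)‖ ^ 2 := by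
    simp only [hα, norm_mul, mul_pow, Complex.norm_exp]
    rw [← Real.exp_nat_mul]
    congr 2
    rw [ez]
    simp
  rw [e1, e2, e3, ContinuousLinearMap.comp_apply, map_neg]
  simp only [hw, h.XY t ht, hq]
  push_cast
  ring

/-- The leading-order amplitude in terms of the Jacobian determinant. -/
lemma Flow.amp_eq (h : Flow T b X Y) (f : ℝ → ℝ) (a₀ : Ed d → ℂ) {t : ℝ} (ht : t ∈ Icc (0 : ℝ) T)
    (x : Ed d) : WKB.amp f a₀ b X Y t x =
      (((Real.sqrt (Jdet d X t (Y t x)))⁻¹ : ℝ) : ℂ) * a₀ (Y t x) *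
        exp (I * (((-∫ s in (0 : ℝ)..t,
          f ((Jdet d X s (Y t x))⁻¹ * ‖a₀ (Y t x)‖ ^ 2) : ℝ)) : ℂ)) := by
  have e : ∫ s in (0 : ℝ)..t, f ((Jdet d X s (Y t x))⁻¹ * ‖a₀ (Y t x)‖ ^ 2) =
      ∫ s in (0 : ℝ)..t,
        f (Real.exp (-∫ r in (0 : ℝ)..s, dv (b r) (X r (Y t x))) * ‖a₀ (Y t x)‖ ^ 2) := by
    refine intervalIntegral.integral_congr fun s hs => ?_
    rw [uIcc_of_le ht.1] at hs
    rw [h.jdet ⟨hs.1, hs.2.trans ht.2⟩, Real.exp_neg]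
  rw [e, h.jdet ht, WKB.amp, ampExp, Complex.exp_add, ← Complex.ofReal_exp, ← Real.exp_half,
    ← Real.exp_neg]
  rw [mul_comm I, mul_right_comm]
  congr 5
  ring

lemma Flow.amp_zero (h : Flow T b X Y) (f : ℝ → ℝ) (a₀ : Ed d → ℂ) (x : Ed d) :
    WKB.amp f a₀ b X Y 0 x = a₀ x := by
  have e : Y 0 x = x := by
    have := h.XY 0 ⟨le_rfl, h.pos⟩ x
    rwa [h.X0] at this
  simp [WKB.amp, ampExp, e]

end Amplitude

end WKB

namespace WKB

/-! ### The Hamiltonian flow as the flow of the gradient of the phase -/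

section Ray

variable {d : ℕ}

/-- The vector representing a linear form; `gradient` is `gr` applied to the derivative. -/
def gr : (Ed d →L[ℝ] ℝ) →L[ℝ] Ed d :=
  ∑ i, (ContinuousLinearMap.apply ℝ ℝ (bv i)).smulRight (bv i)

lemma gr_apply (L : Ed d →L[ℝ] ℝ) (i : Fin d) : gr L i = L (bv i) := by
  simp [gr, bv, Pi.single_apply]

lemma inner_gr (L : Ed d →L[ℝ] ℝ) (v : Ed d) : inner ℝ (gr L) v = L v := by
  have hv : v = ∑ i, v i • bv i := by
    ext j; simp [bv, Pi.single_apply]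
  conv_rhs => rw [hv]
  rw [PiLp.inner_apply, map_sum]
  refine Finset.sum_congr rfl fun i _ => ?_
  rw [gr_apply, map_smul]
  simp

lemma gradient_eq (f : Ed d → ℝ) (x : Ed d) : gradient f x = gr (fderiv ℝ f x) := by
  refine ext_inner_right ℝ fun v => ?_
  rw [inner_gr, gradient, InnerProductSpace.toDual_symm_apply]

lemma JS.gradient {u : ℝ → Ed d → ℝ} (h : JS u) : JS (fun t => gradient (u t)) := by
  have e : (fun t => _root_.gradient (u t)) = fun t x => gr (_root_.fderiv ℝ (u t) x) := by
    funext t x; exact gradient_eq _ _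
  rw [e]
  exact gr.contDiff.comp h.fderiv

lemma fderiv_gradient {f : Ed d → ℝ} (hf : ContDiff ℝ (⊤ : ℕ∞) f) (x v : Ed d) :
    fderiv ℝ (gradient f) x v = gr (fderiv ℝ (fderiv ℝ f) x v) := by
  have e : gradient f = fun x => gr (fderiv ℝ f x) := funext fun x => gradient_eq _ _
  rw [e]
  have : DifferentiableAt ℝ (fderiv ℝ f) x :=
    ((hf.fderiv_right (m := ((⊤ : ℕ∞) : WithTop ℕ∞)) (by simp)).differentiable (by simp)) x
  have := (gr (d := d)).hasFDerivAt.comp x this.hasFDerivAt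
  rw [show (fun x => gr (fderiv ℝ f x)) = gr ∘ fderiv ℝ f from rfl, this.fderiv]
  rfl

/-- The Hessian is symmetric. -/
lemma hess_symm {f : Ed d → ℝ} (hf : ContDiff ℝ (⊤ : ℕ∞) f) (x v w : Ed d) :
    fderiv ℝ (fderiv ℝ f) x v w = fderiv ℝ (fderiv ℝ f) x w v :=
  (hf.contDiffAt.isSymmSndFDerivAt (by simp; exact WithTop.coe_le_coe.2 (le_top (a := (2 : ℕ∞))))) v w

lemma dv_gradient {f : Ed d → ℝ} (hf : ContDiff ℝ (⊤ : ℕ∞) f) (x : Ed d) :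
    dv (gradient f) x = ∑ i, fderiv ℝ (fderiv ℝ f) x (bv i) (bv i) := by
  unfold dv
  refine Finset.sum_congr rfl fun i _ => ?_
  rw [fderiv_gradient hf, gr_apply]

variable {T : ℝ} {φ V : ℝ → Ed d → ℝ}

lemma Bd.of_forall {u : ℝ → Ed d → ℝ} {S : Set ℝ} {n : ℕ}
    (h : ∃ C : ℝ, ∀ t ∈ S, ∀ x, ‖iteratedFDeriv ℝ n (u t) x‖ ≤ C) : Bd S one n u := by
  obtain ⟨C, hC⟩ := h
  exact ⟨max C 0, le_max_right _ _, fun t ht x => by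
    simpa only [one, mul_one] using (hC t ht x).trans (le_max_left _ _)⟩

/-- Differentiating the eikonal equation: `∂_t b + (b·∇)b + ∇V = 0` for `b = ∇φ`. -/
lemma eik_gradient (hφ : JS φ) (hV : JS V)
    (bφ : ∀ n, 2 ≤ n → Bd (Icc 0 T) one n φ) (bV : ∀ n, 2 ≤ n → Bd (Icc 0 T) one n V)
    (eik : ∀ t ∈ Icc (0 : ℝ) T, ∀ x : Ed d,
      deriv (fun s => φ s x) t + (1 / 2) * ‖gradient (φ t) x‖ ^ 2 + V t x = 0) :
    TD T φ (fun t x => -((1 / 2) * ‖gradient (φ t) x‖ ^ 2) - V t x) ∧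
    TD T (fun t => gradient (φ t))
      (fun t x => - fderiv ℝ (gradient (φ t)) x (gradient (φ t) x) - gradient (V t) x) := by
  have sf : ∀ t, ContDiff ℝ (⊤ : ℕ∞) (φ t) := fun t => hφ.sm (S := univ) t trivial
  have sV : ∀ t, ContDiff ℝ (⊤ : ℕ∞) (V t) := fun t => hV.sm (S := univ) t trivial
  have sb : ∀ t, ContDiff ℝ (⊤ : ℕ∞) (gradient (φ t)) := fun t => hφ.gradient.sm (S := univ) t trivial
  have h1 : TD T φ (fun t x => -((1 / 2) * ‖gradient (φ t) x‖ ^ 2) - V t x) := by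
    refine ⟨hφ.ct, fun x => ?_, fun t ht x => ?_⟩
    · have c1 : ContinuousOn (fun t => gradient (φ t) x) (Icc 0 T) := hφ.gradient.ct x
      exact (((c1.norm.pow 2).const_smul (1 / 2 : ℝ)).neg).sub (hV.ct x)
    · have hd : DifferentiableAt ℝ (fun s => φ s x) t := by
        have : ContDiff ℝ (⊤ : ℕ∞) (fun s : ℝ => φ s x) :=
          ContDiff.comp hφ (contDiff_id.prodMk contDiff_const)
        exact (this.differentiable (by simp)) t
      refine hd.hasDerivAt.congr_deriv ?_
      linarith [eik t (Ioo_subset_Icc_self ht) x]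
  refine ⟨h1, ?_⟩
  have pb : PG (Icc 0 T) (fun t => gradient (φ t)) :=
    ((hφ.subquadratic bφ).2.2.fderiv.clm gr).congr fun t _ x => gradient_eq _ _
  have pV := (hV.subquadratic bV).2.2
  have pg : PG (Icc 0 T) (fun t x => -((1 / 2) * ‖gradient (φ t) x‖ ^ 2) - V t x) := by
    have q := pb.bilin (innerSL ℝ) pb
    refine ((q.clm ((-(1 / 2 : ℝ)) • ContinuousLinearMap.id ℝ ℝ)).add pV.neg).congr
      fun t _ x => ?_
    have e : (innerSL ℝ (gradient (φ t) x)) (gradient (φ t) x) = ‖gradient (φ t) x‖ ^ 2 := by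
      rw [innerSL_apply_apply, real_inner_self_eq_norm_sq]
    simp only [e, smul_apply, ContinuousLinearMap.id_apply, smul_eq_mul]
    ring
  refine ((h1.fderiv_pg hφ.sm pg).clm gr).congr (fun t _ x => gradient_eq _ _) fun t _ x => ?_
  refine ext_inner_right ℝ fun v => ?_
  rw [inner_gr, fderiv_gradient (sf t), gradient_eq (V t), inner_sub_left, inner_neg_left,
    inner_gr, inner_gr]
  have hb : DifferentiableAt ℝ (gradient (φ t)) x := ((sb t).differentiable (by simp)) x
  have hVd : DifferentiableAt ℝ (V t) x := ((sV t).differentiable (by simp)) x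
  have e1 : HasFDerivAt (fun x => -((1 / 2) * ‖gradient (φ t) x‖ ^ 2) - V t x)
      (-((1 / 2 : ℝ) • (2 • (innerSL ℝ (gradient (φ t) x)).comp
        (fderiv ℝ (gradient (φ t)) x))) - fderiv ℝ (V t) x) x :=
    ((hb.hasFDerivAt.norm_sq.const_smul (1 / 2 : ℝ)).neg).sub hVd.hasFDerivAt
  rw [e1.fderiv]
  have e2 : inner ℝ (gradient (φ t) x) (fderiv ℝ (gradient (φ t)) x v)
      = fderiv ℝ (fderiv ℝ (φ t)) x (gradient (φ t) x) v := by
    rw [fderiv_gradient (sf t), real_inner_comm, inner_gr, hess_symm (sf t)]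
  simp [e2]

/-- Under the assumptions on the phase, the rays `X` form the flow of `∇φ`. -/
lemma flow_of_eik (hT : 0 < T) (hφ : JS φ) (hV : JS V)
    (bφ : ∀ n, 2 ≤ n → Bd (Icc 0 T) one n φ) (bV : ∀ n, 2 ≤ n → Bd (Icc 0 T) one n V)
    (eik : ∀ t ∈ Icc (0 : ℝ) T, ∀ x : Ed d,
      deriv (fun s => φ s x) t + (1 / 2) * ‖gradient (φ t) x‖ ^ 2 + V t x = 0)
    {X Ξ Y : ℝ → Ed d → Ed d}
    (hflow_init : ∀ y, X 0 y = y ∧ Ξ 0 y = gradient (φ 0) y)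
    (hflow_ode : ∀ t ∈ Set.Icc (0 : ℝ) T, ∀ y,
      HasDerivAt (fun s => X s y) (Ξ t y) t ∧
      HasDerivAt (fun s => Ξ s y) (-gradient (V t) (X t y)) t)
    (hdiffeo : ∀ t ∈ Set.Icc (0 : ℝ) T, ContDiff ℝ (⊤ : ℕ∞) (X t) ∧ ContDiff ℝ (⊤ : ℕ∞) (Y t) ∧
      Function.LeftInverse (Y t) (X t) ∧ Function.RightInverse (Y t) (X t)) :
    Flow T (fun t => gradient (φ t)) X Y := by
  have hb := hφ.gradient
  have sf : ∀ t, ContDiff ℝ (⊤ : ℕ∞) (φ t) := fun t => hφ.sm (S := univ) t trivial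
  have pb : PG (Icc 0 T) (fun t => gradient (φ t)) :=
    ((hφ.subquadratic bφ).2.2.fderiv.clm gr).congr fun t _ x => gradient_eq _ _
  have bb : BB (Icc 0 T) (fun t => fderiv ℝ (gradient (φ t))) := by
    refine ((hφ.subquadratic bφ).1.clm (ContinuousLinearMap.compL ℝ (Ed d) _ _ gr)).congr
      fun t _ x => ?_
    ext1 v
    rw [fderiv_gradient (sf t)]; rfl
  have tb := (eik_gradient hφ hV bφ bV eik).2
  have cX : CT T X := fun y t ht => ((hflow_ode t ht y).1.continuousAt).continuousWithinAt
  have cΞ : CT T Ξ := fun y t ht => ((hflow_ode t ht y).2.continuousAt).continuousWithinAt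
  have dX : TD T X Ξ := ⟨cX, cΞ, fun t ht y => (hflow_ode t (Ioo_subset_Icc_self ht) y).1⟩
  have pV : PG (Icc 0 T) (fun t => gradient (V t)) :=
    ((hV.subquadratic bV).2.2.fderiv.clm gr).congr fun t _ x => gradient_eq _ _
  have pg : PG (Icc 0 T)
      (fun t x => - fderiv ℝ (gradient (φ t)) x (gradient (φ t) x) - gradient (V t) x) := by
    have q := PG.bilin (ContinuousLinearMap.id ℝ (Ed d →L[ℝ] Ed d)) bb.toPG pb
    exact (q.neg.add pV.neg).congr fun t _ x => by simp [sub_eq_add_neg]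
  have dbX := tb.comp hb.sm pb pg dX
  have dΞ : TD T Ξ (fun t y => -gradient (V t) (X t y)) := by
    refine ⟨cΞ, fun y t ht => ?_, fun t ht y => (hflow_ode t (Ioo_subset_Icc_self ht) y).2⟩
    have := LB.joint_at (u := fun t => gradient (V t)) hV.gradient.sm pV.lb hV.gradient.ct ht
      subset_rfl (cX y t ht)
    exact this.neg
  obtain ⟨K, hK, hKb⟩ := bb.2 0
  have key : ∀ t ∈ Icc (0 : ℝ) T, ∀ y, Ξ t y = gradient (φ t) (X t y) := by
    intro t ht y
    have := (dΞ.add dbX.neg).gronwall' y (δ := 0) (K := K) (ε := 0) ?_ hK le_rfl ?_ ht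
    · have h0 : ‖Ξ t y + -gradient (φ t) (X t y)‖ ≤ 0 := by simpa using this
      have := norm_le_zero_iff.1 h0
      exact add_neg_eq_zero.1 this
    · simp [(hflow_init y).1, (hflow_init y).2]
    · intro s hs
      set D := fderiv ℝ (gradient (φ s)) (X s y)
      have e : -gradient (V s) (X s y) + -(-D (gradient (φ s) (X s y)) - gradient (V s) (X s y)
          + D (Ξ s y)) = - D (Ξ s y + - gradient (φ s) (X s y)) := by
        rw [map_add, map_neg]; abel
      rw [e, norm_neg, add_zero]
      refine (D.le_opNorm _).trans (mul_le_mul_of_nonneg_right ?_ (norm_nonneg _))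
      simpa [one] using hKb s hs (X s y)
  exact ⟨hT.le, hb.sm, hb.ct, bb, pb, fun t ht => (hdiffeo t ht).1, fun t ht => (hdiffeo t ht).2.1,
    dX.congr (fun _ _ _ => rfl) fun t ht y => (key t ht y).symm, fun y => (hflow_init y).1,
    fun t ht => (hdiffeo t ht).2.2.1, fun t ht => (hdiffeo t ht).2.2.2⟩

end Ray

end WKB

namespace WKB

/-! ### Iterated partial derivatives -/

section Partials

variable {d : ℕ}

/-- Iterated partial derivatives along a word in the coordinate directions. -/
def dl : List (Fin d) → (Ed d → ℂ) → Ed d → ℂ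
  | [], u => u
  | i :: l, u => fun x => fderiv ℝ (dl l u) x (bv i)

/-- The words of length at most `s`. -/
def W (d s : ℕ) : Finset (List (Fin d)) := (List.finite_length_le (Fin d) s).toFinset

lemma mem_W {s : ℕ} {l : List (Fin d)} : l ∈ W d s ↔ l.length ≤ s := by simp [W]

lemma dl_smooth {u : Ed d → ℂ} (hu : ContDiff ℝ (⊤ : ℕ∞) u) (l : List (Fin d)) :
    ContDiff ℝ (⊤ : ℕ∞) (dl l u) := by
  induction l with
  | nil => exact hu
  | cons i l ih => exact (ih.fderiv_right (by simp)).clm_apply contDiff_const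

lemma dl_eq {u : Ed d → ℂ} (hu : ContDiff ℝ (⊤ : ℕ∞) u) (l : List (Fin d)) (x : Ed d) :
    dl l u x = iteratedFDeriv ℝ l.length u x (fun k => bv (l.get k)) := by
  induction l generalizing x with
  | nil => simp [dl]
  | cons i l ih =>
    have e : dl l u = fun x => iteratedFDeriv ℝ l.length u x (fun k => bv (l.get k)) :=
      funext ih
    have hd : DifferentiableAt ℝ (iteratedFDeriv ℝ l.length u) x :=
      (hu.differentiable_iteratedFDeriv (m := l.length) (WithTop.coe_lt_coe.2 (ENat.natCast_lt_top _))) x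
    show fderiv ℝ (dl l u) x (bv i) =
      iteratedFDeriv ℝ (l.length + 1) u x (fun k => bv ((i :: l).get k))
    rw [e, iteratedFDeriv_succ_apply_left]
    have := ((ContinuousMultilinearMap.apply ℝ (fun _ : Fin l.length => Ed d) ℂ
      (fun k => bv (l.get k))).hasFDerivAt.comp x hd.hasFDerivAt)
    have q : HasFDerivAt (fun x => iteratedFDeriv ℝ l.length u x (fun k => bv (l.get k))) _ x := this
    rw [q.fderiv]
    rfl

lemma norm_bv (i : Fin d) : ‖bv i‖ = 1 := by simp [bv]

lemma norm_iter_fderiv_apply {u : Ed d → ℂ} (hu : ContDiff ℝ (⊤ : ℕ∞) u) (n : ℕ) (i : Fin d)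
    (x : Ed d) : ‖iteratedFDeriv ℝ n (fun x => fderiv ℝ u x (bv i)) x‖
      ≤ ‖iteratedFDeriv ℝ (n + 1) u x‖ := by
  have h := (ContinuousLinearMap.apply ℝ ℂ (bv i)).norm_iteratedFDeriv_comp_left
    ((hu.fderiv_right (m := ((⊤ : ℕ∞) : WithTop ℕ∞)) (by simp)).contDiffAt (x := x))
    (n := n) (mod_cast le_top)
  rw [norm_iteratedFDeriv_fderiv] at h
  refine h.trans ?_
  have : ‖ContinuousLinearMap.apply ℝ ℂ (bv i)‖ ≤ 1 := by
    refine ContinuousLinearMap.opNorm_le_bound _ zero_le_one fun L => ?_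
    simpa [norm_bv] using L.le_opNorm (bv i)
  nlinarith [norm_nonneg (iteratedFDeriv ℝ (n + 1) u x)]

lemma norm_iter_dl {u : Ed d → ℂ} (hu : ContDiff ℝ (⊤ : ℕ∞) u) (l : List (Fin d)) (n : ℕ)
    (x : Ed d) : ‖iteratedFDeriv ℝ n (dl l u) x‖ ≤ ‖iteratedFDeriv ℝ (n + l.length) u x‖ := by
  induction l generalizing n with
  | nil => rfl
  | cons i l ih =>
    refine (norm_iter_fderiv_apply (dl_smooth hu l) n i x).trans ((ih (n + 1)).trans ?_)
    rw [List.length_cons, add_assoc, add_comm 1]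

lemma norm_dl {u : Ed d → ℂ} (hu : ContDiff ℝ (⊤ : ℕ∞) u) (l : List (Fin d)) (x : Ed d) :
    ‖dl l u x‖ ≤ ‖iteratedFDeriv ℝ l.length u x‖ := by
  have := norm_iter_dl hu l 0 x
  rwa [norm_iteratedFDeriv_zero, Nat.zero_add] at this

/-- A full derivative is controlled by the partial derivatives of the same order. -/
lemma norm_iter_le_dl {u : Ed d → ℂ} (hu : ContDiff ℝ (⊤ : ℕ∞) u) {n s : ℕ} (hn : n ≤ s)
    (x : Ed d) : ‖iteratedFDeriv ℝ n u x‖ ≤ ∑ l ∈ W d s, ‖dl l u x‖ := by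
  set M := iteratedFDeriv ℝ n u x
  have h1 : ‖M‖ ≤ ∑ w : Fin n → Fin d, ‖M (fun k => bv (w k))‖ := by
    refine ContinuousMultilinearMap.opNorm_le_bound (Finset.sum_nonneg fun _ _ => norm_nonneg _)
      fun v => ?_
    have hv : v = fun k => ∑ i : Fin d, v k i • bv i := by
      funext k; ext j; simp [bv, Pi.single_apply]
    have e : M v = ∑ w : Fin n → Fin d, (∏ k, v k (w k)) • M (fun k => bv (w k)) := by
      conv_lhs => rw [hv]
      rw [M.map_sum]
      exact Finset.sum_congr rfl fun w _ => M.map_smul_univ _ _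
    rw [e, Finset.sum_mul]
    refine (norm_sum_le _ _).trans (Finset.sum_le_sum fun w _ => ?_)
    rw [norm_smul, mul_comm, norm_prod]
    exact mul_le_mul_of_nonneg_left (Finset.prod_le_prod (fun _ _ => norm_nonneg _)
      fun k _ => PiLp.norm_apply_le _ _) (norm_nonneg _)
  refine h1.trans ?_
  have e : ∀ w : Fin n → Fin d, M (fun k => bv (w k)) = dl (List.ofFn w) u x := by
    intro w
    rw [dl_eq hu]
    have key : ∀ (m : ℕ) (h : m = n) (g : Fin m → Ed d), (∀ k : Fin m, g k = bv (w (k.cast h))) →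
        iteratedFDeriv ℝ m u x g = M (fun k => bv (w k)) := by
      rintro m rfl g hg
      have : g = fun k => bv (w k) := funext fun k => by simpa using hg k
      rw [this]
    exact (key _ (by simp) _ fun k => by simp; rfl).symm
  simp_rw [e]
  rw [← Finset.sum_image (f := fun l => ‖dl l u x‖) (g := fun w : Fin n → Fin d => List.ofFn w)
    (s := Finset.univ) (fun a _ b _ h => List.ofFn_injective h)]
  refine Finset.sum_le_sum_of_subset_of_nonneg (fun l hl => ?_) fun _ _ _ => norm_nonneg _
  obtain ⟨w, _, rfl⟩ := Finset.mem_image.1 hl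
  rw [mem_W]; simpa using hn

/-- The sum of the squares of all partial derivatives of order at most `s`. -/
def Q (s : ℕ) (u : Ed d → ℂ) (x : Ed d) : ℝ := ∑ l ∈ W d s, ‖dl l u x‖ ^ 2

/-- The sum of the norms of all derivatives of order at most `s`. -/
def NN (s : ℕ) (u : Ed d → ℂ) (x : Ed d) : ℝ :=
  ∑ n ∈ Finset.range (s + 1), ‖iteratedFDeriv ℝ n u x‖

lemma Q_nonneg (s : ℕ) (u : Ed d → ℂ) (x : Ed d) : 0 ≤ Q s u x :=
  Finset.sum_nonneg fun _ _ => by positivity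

lemma NN_nonneg (s : ℕ) (u : Ed d → ℂ) (x : Ed d) : 0 ≤ NN s u x :=
  Finset.sum_nonneg fun _ _ => norm_nonneg _

lemma le_NN {n s : ℕ} (h : n ≤ s) (u : Ed d → ℂ) (x : Ed d) :
    ‖iteratedFDeriv ℝ n u x‖ ≤ NN s u x :=
  Finset.single_le_sum (f := fun n => ‖iteratedFDeriv ℝ n u x‖) (fun _ _ => norm_nonneg _)
    (Finset.mem_range.2 (Nat.lt_succ_iff.2 h))

lemma NN_mono {s s' : ℕ} (h : s ≤ s') (u : Ed d → ℂ) (x : Ed d) : NN s u x ≤ NN s' u x :=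
  Finset.sum_le_sum_of_subset_of_nonneg (Finset.range_mono (by omega)) fun _ _ _ => norm_nonneg _

lemma dl_le_NN {u : Ed d → ℂ} (hu : ContDiff ℝ (⊤ : ℕ∞) u) {l : List (Fin d)} {s : ℕ}
    (h : l.length ≤ s) (x : Ed d) : ‖dl l u x‖ ≤ NN s u x :=
  (norm_dl hu l x).trans (le_NN h u x)

lemma Q_mono {s s' : ℕ} (h : s ≤ s') (u : Ed d → ℂ) (x : Ed d) : Q s u x ≤ Q s' u x :=
  Finset.sum_le_sum_of_subset_of_nonneg (fun l hl => mem_W.2 ((mem_W.1 hl).trans h))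
    fun _ _ _ => by positivity

lemma NN_sq_le_Q (d s : ℕ) : ∃ C : ℝ, 0 ≤ C ∧ ∀ u : Ed d → ℂ, ContDiff ℝ (⊤ : ℕ∞) u → ∀ x,
    NN s u x ^ 2 ≤ C * Q s u x := by
  refine ⟨(s + 1) ^ 2 * (W d s).card, by positivity, fun u hu x => ?_⟩
  have h1 : NN s u x ≤ (s + 1) * ∑ l ∈ W d s, ‖dl l u x‖ := by
    refine (Finset.sum_le_card_nsmul _ _ _ fun n hn => norm_iter_le_dl hu
      (Nat.lt_succ_iff.1 (Finset.mem_range.1 hn)) x).trans ?_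
    simp
  have h2 := sq_sum_le_card_mul_sum_sq (s := W d s) (f := fun l => ‖dl l u x‖)
  calc NN s u x ^ 2 ≤ ((s + 1) * ∑ l ∈ W d s, ‖dl l u x‖) ^ 2 :=
        pow_le_pow_left₀ (NN_nonneg _ _ _) h1 2
    _ = (s + 1) ^ 2 * (∑ l ∈ W d s, ‖dl l u x‖) ^ 2 := by ring
    _ ≤ (s + 1) ^ 2 * ((W d s).card * Q s u x) := by
        refine mul_le_mul_of_nonneg_left ?_ (by positivity)
        exact h2
    _ = _ := by ring

lemma Q_le_NN_sq (d s : ℕ) : ∃ C : ℝ, 0 ≤ C ∧ ∀ u : Ed d → ℂ, ContDiff ℝ (⊤ : ℕ∞) u → ∀ x,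
    Q s u x ≤ C * NN s u x ^ 2 := by
  refine ⟨(W d s).card, by positivity, fun u hu x => ?_⟩
  refine (Finset.sum_le_card_nsmul _ _ (NN s u x ^ 2) fun l hl => ?_).trans (by simp)
  exact pow_le_pow_left₀ (norm_nonneg _) (dl_le_NN hu (mem_W.1 hl) x) 2

/-- The Laplacian as a linear form on second derivatives. -/
def lapL (d : ℕ) : (Ed d →L[ℝ] Ed d →L[ℝ] ℂ) →L[ℝ] ℂ :=
  ∑ i, (ContinuousLinearMap.apply ℝ ℂ (bv i)).comp
    (ContinuousLinearMap.apply ℝ (Ed d →L[ℝ] ℂ) (bv i))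

lemma lapL_apply (L : Ed d →L[ℝ] Ed d →L[ℝ] ℂ) : lapL d L = ∑ i, L (bv i) (bv i) := by
  simp [lapL]

lemma lap_eq_dl (u : Ed d → ℂ) (x : Ed d) : lap d u x = ∑ i, dl [i, i] u x := rfl

lemma fderiv_apply_const {u : Ed d → ℂ} (hu : ContDiff ℝ (⊤ : ℕ∞) u) (x v e : Ed d) :
    fderiv ℝ (fun y => fderiv ℝ u y e) x v = fderiv ℝ (fderiv ℝ u) x v e := by
  have hd : DifferentiableAt ℝ (fderiv ℝ u) x :=
    ((hu.fderiv_right (m := ((⊤ : ℕ∞) : WithTop ℕ∞)) (by simp)).differentiable (by simp)) x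
  have := ((ContinuousLinearMap.apply ℝ ℂ e).hasFDerivAt.comp x hd.hasFDerivAt)
  have q : HasFDerivAt (fun y => fderiv ℝ u y e) _ x := this
  rw [q.fderiv]; rfl

lemma lap_eq {u : Ed d → ℂ} (hu : ContDiff ℝ (⊤ : ℕ∞) u) (x : Ed d) :
    lap d u x = lapL d (fderiv ℝ (fderiv ℝ u) x) := by
  rw [lapL_apply]
  exact Finset.sum_congr rfl fun i _ => fderiv_apply_const hu x (bv i) (bv i)

end Partials

end WKB

namespace WKB

/-! ### A local Sobolev inequality -/

section Sobolev

variable {d : ℕ}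

/-- The Cauchy–Schwarz inequality for real functions. -/
lemma integral_mul_sq_le {α : Type} [MeasurableSpace α] {μ : Measure α} {f g : α → ℝ}
    (hf : Integrable (fun x => f x ^ 2) μ) (hg : Integrable (fun x => g x ^ 2) μ)
    (hfg : Integrable (fun x => f x * g x) μ) :
    (∫ x, f x * g x ∂μ) ^ 2 ≤ (∫ x, f x ^ 2 ∂μ) * ∫ x, g x ^ 2 ∂μ := by
  set a := ∫ x, f x ^ 2 ∂μ
  set b := ∫ x, f x * g x ∂μ
  set c := ∫ x, g x ^ 2 ∂μ
  have key : ∀ t : ℝ, 0 ≤ a * (t * t) + (2 * b) * t + c := by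
    intro t
    have e : ∫ x, (t * f x + g x) ^ 2 ∂μ = a * (t * t) + (2 * b) * t + c := by
      have : (fun x => (t * f x + g x) ^ 2) =
          fun x => (t * t) * f x ^ 2 + (2 * t) * (f x * g x) + g x ^ 2 := by
        funext x; ring
      rw [this, integral_add (f := fun x => (t * t) * f x ^ 2 + (2 * t) * (f x * g x))
          ((hf.const_mul _).add (hfg.const_mul _)) hg,
        integral_add (hf.const_mul _) (hfg.const_mul _), integral_const_mul, integral_const_mul]
      ring
    rw [← e]
    exact integral_nonneg fun x => by positivity
  have := discrim_le_zero key
  unfold discrim at this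
  nlinarith

open FourierTransform Laplacian in
/-- The operator `1 - Δ` is the Fourier multiplier `1 + 4π²|ξ|²`. -/
lemma fourier_one_sub_lap (f : SchwartzMap (Ed d) ℂ) (ξ : Ed d) :
    ‖𝓕 (f - Δ f) ξ‖ = (1 + (2 * Real.pi) ^ 2 * ‖ξ‖ ^ 2) * ‖𝓕 f ξ‖ := by
  have e : 𝓕 (Δ f) ξ = - (((2 * Real.pi) ^ 2 * ‖ξ‖ ^ 2 : ℝ) : ℂ) * 𝓕 f ξ := by
    rw [SchwartzMap.laplacian_eq_fourierMultiplierCLM, FourierTransform.fourier_smul,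
      SchwartzMap.fourierMultiplierCLM_apply, FourierTransform.fourier_fourierInv_eq,
      smul_apply, SchwartzMap.smulLeftCLM_apply_apply (by fun_prop)]
    simp
    ring
  have e2 : f - Δ f = f + (-1 : ℂ) • Δ f := by rw [neg_one_smul, sub_eq_add_neg]
  rw [e2, FourierTransform.fourier_add, FourierTransform.fourier_smul, add_apply,
    smul_apply, e]
  have e3 : 𝓕 f ξ + (-1 : ℂ) • (- (((2 * Real.pi) ^ 2 * ‖ξ‖ ^ 2 : ℝ) : ℂ) * 𝓕 f ξ)
      = ((1 + (2 * Real.pi) ^ 2 * ‖ξ‖ ^ 2 : ℝ) : ℂ) * 𝓕 f ξ := by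
    push_cast [smul_eq_mul]; ring
  rw [e3, norm_mul, Complex.norm_of_nonneg (by positivity)]

open Laplacian in
/-- The powers of `1 - Δ` on Schwartz functions. -/
def besselIter (k : ℕ) : SchwartzMap (Ed d) ℂ → SchwartzMap (Ed d) ℂ := (fun f => f - Δ f)^[k]

open FourierTransform in
lemma fourier_besselIter (k : ℕ) (f : SchwartzMap (Ed d) ℂ) (ξ : Ed d) :
    (1 + ‖ξ‖ ^ 2) ^ k * ‖𝓕 f ξ‖ ≤ ‖𝓕 (besselIter k f) ξ‖ := by
  induction k with
  | zero => simp [besselIter]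
  | succ k ih =>
    rw [besselIter, Function.iterate_succ_apply', fourier_one_sub_lap, pow_succ']
    rw [mul_assoc]
    have h : 1 + ‖ξ‖ ^ 2 ≤ 1 + (2 * Real.pi) ^ 2 * ‖ξ‖ ^ 2 := by
      have : 1 ≤ (2 * Real.pi) ^ 2 := by nlinarith [Real.pi_gt_three]
      nlinarith [sq_nonneg ‖ξ‖]
    exact mul_le_mul h ih (by positivity) (by positivity)

open FourierTransform in
lemma norm_le_integral_fourier (f : SchwartzMap (Ed d) ℂ) (x : Ed d) :
    ‖f x‖ ≤ ∫ ξ, ‖𝓕 f ξ‖ := by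
  have h : f x = 𝓕⁻ (𝓕 f) x := by rw [FourierTransform.fourierInv_fourier_eq]
  rw [h, SchwartzMap.fourierInv_coe, Real.fourierInv_eq]
  refine (norm_integral_le_integral_norm _).trans (le_of_eq ?_)
  simp [Circle.norm_smul]

lemma integrable_weight : Integrable (fun ξ : Ed d => (((1 + ‖ξ‖ ^ 2) ^ (d + 1))⁻¹) ^ 2) := by
  have h := integrable_rpow_neg_one_add_norm_sq (E := Ed d) (μ := volume)
    (r := 4 * (d + 1 : ℝ)) (by simp; linarith)
  refine h.congr (Eventually.of_forall fun ξ => ?_)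
  have hp : (0 : ℝ) ≤ 1 + ‖ξ‖ ^ 2 := by positivity
  show (1 + ‖ξ‖ ^ 2) ^ (-(4 * (d + 1 : ℝ)) / 2) = _
  rw [show (-(4 * (d + 1 : ℝ)) / 2) = -(((d + 1) * 2 : ℕ) : ℝ) by push_cast; ring,
    Real.rpow_neg hp, Real.rpow_natCast, pow_mul, ← inv_pow]

lemma integrable_sq_schwartz (f : SchwartzMap (Ed d) ℂ) : Integrable (fun x => ‖f x‖ ^ 2) := by
  have := (f.memLp 2 volume).integrable_norm_pow (by norm_num)
  simpa using this

open FourierTransform in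
lemma sobolev_schwartz : ∃ C : ℝ, 0 ≤ C ∧ ∀ (f : SchwartzMap (Ed d) ℂ) (x : Ed d),
    ‖f x‖ ^ 2 ≤ C * ∫ y, ‖besselIter (d + 1) f y‖ ^ 2 := by
  refine ⟨∫ ξ : Ed d, (((1 + ‖ξ‖ ^ 2) ^ (d + 1))⁻¹) ^ 2,
    integral_nonneg fun _ => by positivity, fun f x => ?_⟩
  set g := besselIter (d + 1) f
  rw [← SchwartzMap.integral_norm_sq_fourier g]
  have hm : ∀ ξ : Ed d, ‖𝓕 f ξ‖ ≤ ((1 + ‖ξ‖ ^ 2) ^ (d + 1))⁻¹ * ‖𝓕 g ξ‖ := fun ξ => by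
    rw [inv_mul_eq_div, le_div_iff₀ (by positivity), mul_comm]
    exact fourier_besselIter (d + 1) f ξ
  have hi : Integrable (fun ξ : Ed d => ((1 + ‖ξ‖ ^ 2) ^ (d + 1))⁻¹ * ‖𝓕 g ξ‖) := by
    refine (𝓕 g).integrable.norm.mono' (Continuous.aestronglyMeasurable ?_)
      (Eventually.of_forall fun ξ => ?_)
    · exact (Continuous.inv₀ (by fun_prop) fun ξ => by positivity).mul (𝓕 g).continuous.norm
    · rw [Real.norm_of_nonneg (by positivity)]
      refine mul_le_of_le_one_left (norm_nonneg _) (inv_le_one_of_one_le₀ ?_)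
      exact one_le_pow₀ (by nlinarith [sq_nonneg ‖ξ‖])
  refine (pow_le_pow_left₀ (norm_nonneg _) ((norm_le_integral_fourier f x).trans
    (integral_mono (𝓕 f).integrable.norm hi hm)) 2).trans ?_
  exact integral_mul_sq_le integrable_weight (integrable_sq_schwartz _) hi

open Laplacian in
lemma besselIter_bound (k n : ℕ) : ∃ C : ℝ, 0 ≤ C ∧ ∀ (f : SchwartzMap (Ed d) ℂ) (x : Ed d),
    ‖iteratedFDeriv ℝ n (besselIter k f) x‖ ≤ C * NN (n + 2 * k) f x := by
  induction k generalizing n with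
  | zero => exact ⟨1, zero_le_one, fun f x => by simpa [besselIter] using le_NN le_rfl f x⟩
  | succ k ih =>
    obtain ⟨C1, h1, b1⟩ := ih n
    obtain ⟨C2, h2, b2⟩ := ih (n + 2)
    refine ⟨C1 + d * C2, by positivity, fun f x => ?_⟩
    set g := besselIter k f
    have hg : ContDiff ℝ (⊤ : ℕ∞) g := g.smooth ⊤
    have e : (besselIter (k + 1) f : Ed d → ℂ) = fun x => g x - ∑ i, dl [i, i] g x := by
      funext x
      rw [besselIter, Function.iterate_succ_apply']
      show (g - Δ g) x = _
      rw [sub_apply, SchwartzMap.laplacian_apply,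
        InnerProductSpace.laplacian_eq_iteratedFDeriv_orthonormalBasis g
          (EuclideanSpace.basisFun (Fin d) ℝ)]
      congr 1
      refine Finset.sum_congr rfl fun i _ => ?_
      rw [dl_eq hg]
      show iteratedFDeriv ℝ 2 g x _ = iteratedFDeriv ℝ 2 g x _
      congr 1
      funext j
      fin_cases j <;> simp [bv]
    rw [e]
    have s2 : ∀ i : Fin d, ContDiff ℝ (⊤ : ℕ∞) (dl [i, i] g) := fun i => dl_smooth hg _
    have e1 : iteratedFDeriv ℝ n (fun x => g x - ∑ i, dl [i, i] g x) x =
        iteratedFDeriv ℝ n g x - iteratedFDeriv ℝ n (fun x => ∑ i, dl [i, i] g x) x :=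
      iteratedFDeriv_sub_apply (hg.contDiffAt.of_le (mod_cast le_top))
        ((ContDiff.sum fun i _ => s2 i).contDiffAt.of_le (mod_cast le_top))
    have e2 : iteratedFDeriv ℝ n (fun x => ∑ i, dl [i, i] g x) x =
        ∑ i, iteratedFDeriv ℝ n (dl [i, i] g) x :=
      iteratedFDeriv_fun_sum_apply fun i _ => (s2 i).contDiffAt.of_le (mod_cast le_top)
    rw [e1, e2]
    refine (norm_sub_le _ _).trans ?_
    rw [add_mul]
    refine add_le_add ((b1 f x).trans (mul_le_mul_of_nonneg_left (NN_mono (by omega) _ _) h1)) ?_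
    refine (norm_sum_le _ _).trans ((Finset.sum_le_card_nsmul _ _ (C2 * NN (n + 2 * (k + 1)) f x)
      fun i _ => ?_).trans (by simp [mul_assoc]))
    refine (norm_iter_dl hg [i, i] n x).trans ((b2 f x).trans ?_)
    exact mul_le_mul_of_nonneg_left (NN_mono (by omega) _ _) h2

lemma NN_continuous {u : Ed d → ℂ} (hu : ContDiff ℝ (⊤ : ℕ∞) u) (s : ℕ) :
    Continuous (NN s u) :=
  continuous_finsetSum _ fun n _ =>
    (hu.continuous_iteratedFDeriv (m := n) (mod_cast le_top)).norm

/-- Multiplication by a smooth function with bounded derivatives. -/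
lemma NN_smul_le {s : ℕ} {M : ℝ} {χ : Ed d → ℝ} {u : Ed d → ℂ}
    (hχ : ContDiff ℝ (⊤ : ℕ∞) χ) (hu : ContDiff ℝ (⊤ : ℕ∞) u) (x : Ed d)
    (b : ∀ n ≤ s, ‖iteratedFDeriv ℝ n χ x‖ ≤ M) :
    NN s (fun x => χ x • u x) x ≤ ((s + 1) * 2 ^ s * M) * NN s u x := by
  have hM : 0 ≤ M := (norm_nonneg _).trans (b 0 (Nat.zero_le _))
  have h : ∀ n ∈ Finset.range (s + 1),
      ‖iteratedFDeriv ℝ n (fun x => χ x • u x) x‖ ≤ 2 ^ s * M * NN s u x := by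
    intro n hn
    have hn' : n ≤ s := Nat.lt_succ_iff.1 (Finset.mem_range.1 hn)
    refine (norm_iteratedFDeriv_smul_le hχ hu x (n := n) (mod_cast le_top)).trans ?_
    calc _ ≤ ∑ i ∈ Finset.range (n + 1), (n.choose i : ℝ) * (M * NN s u x) := by
          refine Finset.sum_le_sum fun i hi => ?_
          rw [mul_assoc]
          have hi' := Finset.mem_range.1 hi
          exact mul_le_mul_of_nonneg_left (mul_le_mul (b i (by omega)) (le_NN (by omega) _ _)
            (norm_nonneg _) hM) (by positivity)
      _ = 2 ^ n * (M * NN s u x) := by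
          rw [← Finset.sum_mul]
          congr 1
          exact_mod_cast Nat.sum_range_choose n
      _ ≤ 2 ^ s * (M * NN s u x) := by
          refine mul_le_mul_of_nonneg_right ?_ (mul_nonneg hM (NN_nonneg _ _ _))
          exact pow_le_pow_right₀ (by norm_num) hn'
      _ = _ := by ring
  refine (Finset.sum_le_card_nsmul _ _ _ h).trans ?_
  simp only [Finset.card_range, nsmul_eq_mul]
  push_cast
  linarith

lemma NN_eq_zero {u : Ed d → ℂ} {x : Ed d} (hx : x ∉ tsupport u) (s : ℕ) : NN s u x = 0 := by
  refine Finset.sum_eq_zero fun n _ => ?_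
  rw [norm_eq_zero]
  by_contra h
  exact hx (support_iteratedFDeriv_subset n h)

/-- The value at a point is controlled by the `L²` norms of finitely many derivatives near it. -/
lemma sobolev_point (d : ℕ) : ∃ C : ℝ, 0 ≤ C ∧ ∀ u : Ed d → ℂ, ContDiff ℝ (⊤ : ℕ∞) u → ∀ x₀,
    ‖u x₀‖ ^ 2 ≤ C * ∫ x in Metric.closedBall x₀ 1, NN (2 * (d + 1)) u x ^ 2 := by
  obtain ⟨C1, hC1, b1⟩ := sobolev_schwartz (d := d)
  obtain ⟨C2, hC2, b2⟩ := besselIter_bound (d := d) (d + 1) 0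
  let χ : ContDiffBump (0 : Ed d) := ⟨1 / 2, 1, by norm_num, by norm_num⟩
  have sχ : ContDiff ℝ (⊤ : ℕ∞) χ := χ.contDiff
  set s := 2 * (d + 1) with hs
  obtain ⟨M, hM⟩ : ∃ M : ℝ, ∀ n ≤ s, ∀ x, ‖iteratedFDeriv ℝ n χ x‖ ≤ M := by
    have : ∀ n : ℕ, ∃ M : ℝ, ∀ x, ‖iteratedFDeriv ℝ n χ x‖ ≤ M := fun n => by
      obtain ⟨M, hM⟩ := (χ.hasCompactSupport.iteratedFDeriv (𝕜 := ℝ) n).exists_bound_of_continuous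
        (sχ.continuous_iteratedFDeriv (m := n) (mod_cast le_top))
      exact ⟨M, hM⟩
    choose M hM using this
    refine ⟨∑ n ∈ Finset.range (s + 1), M n, fun n hn x => (hM n x).trans ?_⟩
    exact Finset.single_le_sum (f := M) (fun n _ => (norm_nonneg _).trans (hM n x))
      (Finset.mem_range.2 (by omega))
  set K := (s + 1) * 2 ^ s * M
  refine ⟨C1 * (C2 * K) ^ 2, by positivity, fun u hu x₀ => ?_⟩
  let η : Ed d → ℝ := fun x => χ (x - x₀)
  have sη : ContDiff ℝ (⊤ : ℕ∞) η := sχ.comp (contDiff_id.sub contDiff_const)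
  let v : Ed d → ℂ := fun x => η x • u x
  have sv : ContDiff ℝ (⊤ : ℕ∞) v := sη.smul hu
  have tv : tsupport v ⊆ Metric.closedBall x₀ 1 := by
    refine closure_minimal (fun x hx => ?_) Metric.isClosed_closedBall
    by_contra h
    refine hx ?_
    have : η x = 0 := χ.zero_of_le_dist (by
      rw [Metric.mem_closedBall, not_le] at h
      rw [dist_zero_right, ← dist_eq_norm]; exact h.le)
    simp [v, this]
  have cv : HasCompactSupport v :=
    HasCompactSupport.of_support_subset_isCompact (isCompact_closedBall x₀ 1)
      ((subset_tsupport v).trans tv)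
  let g : SchwartzMap (Ed d) ℂ := cv.toSchwartzMap sv
  have hg : (g : Ed d → ℂ) = v := rfl
  have e0 : g x₀ = u x₀ := by
    have : χ (x₀ - x₀) = 1 := χ.one_of_mem_closedBall (by
      rw [sub_self]; exact Metric.mem_closedBall_self (by norm_num))
    show (χ (x₀ - x₀) : ℝ) • u x₀ = u x₀
    rw [this, one_smul]
  have hb : ∀ x, ‖besselIter (d + 1) g x‖ ^ 2 ≤
      (Metric.closedBall x₀ 1).indicator (fun x => (C2 * K) ^ 2 * NN s u x ^ 2) x := by
    intro x
    have h1 : ‖besselIter (d + 1) g x‖ ≤ C2 * NN s v x := by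
      have h1 := b2 g x
      rwa [Nat.zero_add, hg, norm_iteratedFDeriv_zero] at h1
    by_cases hx : x ∈ Metric.closedBall x₀ 1
    · rw [indicator_of_mem hx, ← mul_pow]
      refine pow_le_pow_left₀ (norm_nonneg _) (h1.trans ?_) 2
      rw [mul_assoc]
      refine mul_le_mul_of_nonneg_left (NN_smul_le sη hu x fun n hn => ?_) hC2
      have : iteratedFDeriv ℝ n η x = iteratedFDeriv ℝ n χ (x - x₀) :=
        iteratedFDeriv_comp_sub n x₀ x
      rw [this]; exact hM n hn _
    · rw [indicator_of_notMem hx]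
      rw [NN_eq_zero (fun h => hx (tv h)), mul_zero] at h1
      have := norm_nonneg (besselIter (d + 1) g x)
      nlinarith
  rw [← e0]
  refine (b1 g x₀).trans ?_
  rw [mul_assoc]
  refine mul_le_mul_of_nonneg_left ?_ hC1
  have ci : IntegrableOn (fun x => (C2 * K) ^ 2 * NN s u x ^ 2) (Metric.closedBall x₀ 1) :=
    (continuous_const.mul ((NN_continuous hu s).pow 2)).continuousOn.integrableOn_compact
      (isCompact_closedBall x₀ 1)
  rw [← integral_const_mul, ← integral_indicator Metric.isClosed_closedBall.measurableSet]
  exact integral_mono (integrable_sq_schwartz _)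
    (ci.integrable_indicator Metric.isClosed_closedBall.measurableSet) hb

lemma NN_dl_le {u : Ed d → ℂ} (hu : ContDiff ℝ (⊤ : ℕ∞) u) {l : List (Fin d)} {m : ℕ}
    (hl : l.length ≤ m) (s : ℕ) (x : Ed d) :
    NN s (dl l u) x ≤ (s + 1) * NN (m + s) u x := by
  refine (Finset.sum_le_card_nsmul _ _ (NN (m + s) u x) fun n hn => ?_).trans (by simp)
  have := Finset.mem_range.1 hn
  exact (norm_iter_dl hu l n x).trans (le_NN (by omega) _ _)

/-- The local Sobolev inequality for all derivatives of order at most `m`. -/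
lemma sobolev_loc (d m : ℕ) : ∃ C : ℝ, 0 ≤ C ∧ ∀ u : Ed d → ℂ, ContDiff ℝ (⊤ : ℕ∞) u → ∀ x₀,
    NN m u x₀ ^ 2 ≤ C * ∫ x in Metric.closedBall x₀ 1, NN (m + 2 * (d + 1)) u x ^ 2 := by
  obtain ⟨C1, h1, b1⟩ := sobolev_point d
  obtain ⟨C2, h2, b2⟩ := NN_sq_le_Q d m
  set s := 2 * (d + 1) with hs
  refine ⟨C2 * ((W d m).card * (C1 * (s + 1) ^ 2)), by positivity, fun u hu x₀ => ?_⟩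
  refine (b2 u hu x₀).trans ?_
  rw [mul_assoc]
  refine mul_le_mul_of_nonneg_left ?_ h2
  rw [mul_assoc, ← nsmul_eq_mul]
  refine Finset.sum_le_card_nsmul _ _ _ fun l hl => ?_
  refine (b1 _ (dl_smooth hu l) x₀).trans ?_
  rw [mul_assoc]
  refine mul_le_mul_of_nonneg_left ?_ h1
  rw [← integral_const_mul]
  refine setIntegral_mono_on ?_ ?_ Metric.isClosed_closedBall.measurableSet fun x _ => ?_
  · exact ((NN_continuous (dl_smooth hu l) s).pow 2).continuousOn.integrableOn_compact
      (isCompact_closedBall x₀ 1)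
  · exact (continuous_const.mul ((NN_continuous hu _).pow 2)).continuousOn.integrableOn_compact
      (isCompact_closedBall x₀ 1)
  · rw [← mul_pow]
    exact pow_le_pow_left₀ (NN_nonneg _ _ _) (NN_dl_le hu (mem_W.1 hl) s x) 2

end Sobolev

end WKB

namespace WKB

/-! ### Energy identities -/

section Energy

variable {d : ℕ}

/-- The decay rate `(1 + ‖x‖)^(-(d+1))`, which is integrable on `ℝ^d`. -/
def dec (x : Ed d) : ℝ := ((1 + ‖x‖) ^ (d + 1))⁻¹

lemma dec_pos (x : Ed d) : 0 < dec x := inv_pos.2 (pow_pos (w_pos x) _)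

lemma integrable_dec : Integrable (dec (d := d)) := by
  have h := integrable_one_add_norm (E := Ed d) (μ := volume) (r := (d + 1 : ℝ)) (by simp)
  refine h.congr (Eventually.of_forall fun x => ?_)
  show (1 + ‖x‖) ^ (-(d + 1 : ℝ)) = dec x
  rw [dec, Real.rpow_neg (w_pos x).le, ← Real.rpow_natCast]
  push_cast; rfl

lemma integrable_of_dec {F : Type} [NormedAddCommGroup F] {q : Ed d → F} (hq : Continuous q) {C : ℝ}
    (h : ∀ x, ‖q x‖ ≤ C * dec x) : Integrable q :=
  (integrable_dec.const_mul C).mono' hq.aestronglyMeasurable (Eventually.of_forall h)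

/-- Differentiation under the integral sign. -/
lemma int_TD {T : ℝ} {q q' : ℝ → Ed d → ℝ} (h : TD T q q')
    (cq : ∀ t ∈ Icc (0 : ℝ) T, Continuous (q t)) (cq' : ∀ t ∈ Icc (0 : ℝ) T, Continuous (q' t))
    {C : ℝ} (b : ∀ t ∈ Icc (0 : ℝ) T, ∀ x, ‖q t x‖ ≤ C * dec x)
    (b' : ∀ t ∈ Icc (0 : ℝ) T, ∀ x, ‖q' t x‖ ≤ C * dec x) :
    ContinuousOn (fun t => ∫ x, q t x) (Icc 0 T) ∧
    ∀ t ∈ Ioo (0 : ℝ) T, HasDerivAt (fun s => ∫ x, q s x) (∫ x, q' t x) t := by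
  refine ⟨continuousOn_of_dominated (bound := fun x => C * dec x)
    (fun t ht => (cq t ht).aestronglyMeasurable)
    (fun t ht => Eventually.of_forall (b t ht)) (integrable_dec.const_mul C)
    (Eventually.of_forall h.ct), fun t ht => ?_⟩
  have hI : Ioo (0 : ℝ) T ⊆ Icc 0 T := Ioo_subset_Icc_self
  exact (hasDerivAt_integral_of_dominated_loc_of_deriv_le (bound := fun x => C * dec x)
    (Ioo_mem_nhds ht.1 ht.2)
    ((Ioo_mem_nhds ht.1 ht.2 : Ioo 0 T ∈ nhds t) |> fun hm => by
      filter_upwards [hm] with s hs using (cq s (hI hs)).aestronglyMeasurable)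
    (integrable_of_dec (cq t (hI ht)) (b t (hI ht)))
    (cq' t (hI ht)).aestronglyMeasurable
    (Eventually.of_forall fun x s hs => b' s (hI hs) x) (integrable_dec.const_mul C)
    (Eventually.of_forall fun x s hs => h.hd s hs x)).2

lemma int_div {H : Ed d → ℝ} (hH : ContDiff ℝ (⊤ : ℕ∞) H) (v : Ed d) {C : ℝ}
    (b : ∀ x, ‖H x‖ ≤ C * dec x) (b' : ∀ x, ‖fderiv ℝ H x v‖ ≤ C * dec x) :
    Integrable (fun x => fderiv ℝ H x v) ∧ ∫ x, fderiv ℝ H x v = 0 := by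
  have c' : Continuous fun x => fderiv ℝ H x v :=
    (hH.continuous_fderiv (by simp)).clm_apply continuous_const
  have i' := integrable_of_dec c' b'
  refine ⟨i', ?_⟩
  have := integral_mul_fderiv_eq_neg_fderiv_mul_of_integrable (μ := (volume : Measure (Ed d)))
    (𝕜 := ℝ) (f := H) (g := fun _ => (1 : ℝ)) (v := v) (by simpa using i') (by simp)
    (by simpa using integrable_of_dec hH.continuous b)
    (fun x _ => hH.differentiable (by simp) x) (fun x _ => differentiableAt_const _)
  simpa using this.symm

/-- The real inner product of `ℂ`. -/
def rp (z w : ℂ) : ℝ := inner ℝ z w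

lemma rp_le (z w : ℂ) : |rp z w| ≤ ‖z‖ * ‖w‖ := abs_real_inner_le_norm z w

lemma rp_add (z w w' : ℂ) : rp z (w + w') = rp z w + rp z w' := inner_add_right _ _ _

lemma rp_self (z : ℂ) : rp z z = ‖z‖ ^ 2 := real_inner_self_eq_norm_sq z

lemma rp_smul (z w : ℂ) (r : ℝ) : rp z ((r : ℂ) * w) = r * rp z w := by
  rw [← Complex.real_smul]; exact real_inner_smul_right _ _ _

lemma rp_I (z : ℂ) : rp z (I * z) = 0 := by
  rw [rp, Complex.inner]; simp; ring

lemma rp_sum {ι : Type} (s : Finset ι) (z : ℂ) (w : ι → ℂ) :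
    rp z (∑ i ∈ s, w i) = ∑ i ∈ s, rp z (w i) := inner_sum _ _ _

lemma rp_neg (z w : ℂ) : rp z (-w) = - rp z w := inner_neg_right _ _

lemma rp_comm (z w : ℂ) : rp z w = rp w z := real_inner_comm _ _

lemma rp_fderiv {u v : Ed d → ℂ} {x : Ed d} (hu : DifferentiableAt ℝ u x)
    (hv : DifferentiableAt ℝ v x) (e : Ed d) :
    fderiv ℝ (fun y => rp (u y) (v y)) x e = rp (u x) (fderiv ℝ v x e) + rp (fderiv ℝ u x e) (v x) :=
  fderiv_inner_apply ℝ hu hv e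

lemma rp_smooth {u v : Ed d → ℂ} (hu : ContDiff ℝ (⊤ : ℕ∞) u) (hv : ContDiff ℝ (⊤ : ℕ∞) v) :
    ContDiff ℝ (⊤ : ℕ∞) (fun y => rp (u y) (v y)) := hu.inner ℝ hv

lemma pd_smooth {F : Type} [NormedAddCommGroup F] [NormedSpace ℝ F] {u : Ed d → F}
    (hu : ContDiff ℝ (⊤ : ℕ∞) u) (e : Ed d) :
    ContDiff ℝ (⊤ : ℕ∞) (fun x => fderiv ℝ u x e) :=
  (hu.fderiv_right (by simp)).clm_apply contDiff_const

lemma norm_pd_le {F : Type} [NormedAddCommGroup F] [NormedSpace ℝ F] (u : Ed d → F) (i : Fin d)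
    (x : Ed d) : ‖fderiv ℝ u x (bv i)‖ ≤ ‖fderiv ℝ u x‖ := by
  simpa [norm_bv] using (fderiv ℝ u x).le_opNorm (bv i)

lemma norm_le_NN (u : Ed d → ℂ) (s : ℕ) (x : Ed d) : ‖u x‖ ≤ NN s u x := by
  simpa using le_NN (Nat.zero_le s) u x

lemma norm_fderiv_le_NN (u : Ed d → ℂ) {s : ℕ} (hs : 1 ≤ s) (x : Ed d) :
    ‖fderiv ℝ u x‖ ≤ NN s u x := by
  simpa [norm_iteratedFDeriv_one] using le_NN hs u x

/-- The Schrödinger part of the energy identity: the flux is `ρ Im(ū ∂ᵢu)`. -/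
lemma schr_flux {ρ : Ed d → ℝ} {u : Ed d → ℂ} (hρ : ContDiff ℝ (⊤ : ℕ∞) ρ)
    (hu : ContDiff ℝ (⊤ : ℕ∞) u) {C : ℝ}
    (hC : ∀ x, (|ρ x| + ‖fderiv ℝ ρ x‖) * NN 2 u x ^ 2 ≤ C * dec x) :
    Integrable (fun x => ρ x * rp (u x) (I * lap d u x)) ∧
    Integrable (fun x => ∑ i, fderiv ℝ ρ x (bv i) * rp (u x) (I * fderiv ℝ u x (bv i))) ∧
    ∫ x, ρ x * rp (u x) (I * lap d u x) =
      - ∫ x, ∑ i, fderiv ℝ ρ x (bv i) * rp (u x) (I * fderiv ℝ u x (bv i)) := by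
  have hp : ∀ i, ContDiff ℝ (⊤ : ℕ∞) (fun x => I * fderiv ℝ u x (bv i)) := fun i =>
    contDiff_const.mul (pd_smooth hu _)
  have hpp : ∀ i, ContDiff ℝ (⊤ : ℕ∞) (fun x => I * dl [i, i] u x) := fun i =>
    contDiff_const.mul (dl_smooth hu _)
  set H : Fin d → Ed d → ℝ := fun i x => ρ x * rp (u x) (I * fderiv ℝ u x (bv i))
  have sH : ∀ i, ContDiff ℝ (⊤ : ℕ∞) (H i) := fun i => hρ.mul (rp_smooth hu (hp i))
  set A : Fin d → Ed d → ℝ := fun i x =>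
    fderiv ℝ ρ x (bv i) * rp (u x) (I * fderiv ℝ u x (bv i))
  set B : Fin d → Ed d → ℝ := fun i x => ρ x * rp (u x) (I * dl [i, i] u x)
  have dH : ∀ i x, fderiv ℝ (H i) x (bv i) = A i x + B i x := by
    intro i x
    have h1 : DifferentiableAt ℝ ρ x := hρ.differentiable (by simp) x
    have h2 : DifferentiableAt ℝ (fun x => rp (u x) (I * fderiv ℝ u x (bv i))) x :=
      (rp_smooth hu (hp i)).differentiable (by simp) x
    have e1 : fderiv ℝ (H i) x (bv i) = ρ x * fderiv ℝ
        (fun x => rp (u x) (I * fderiv ℝ u x (bv i))) x (bv i) +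
        rp (u x) (I * fderiv ℝ u x (bv i)) * fderiv ℝ ρ x (bv i) := by
      show fderiv ℝ (fun x => ρ x * rp (u x) (I * fderiv ℝ u x (bv i))) x (bv i) = _
      rw [fderiv_fun_mul h1 h2]; simp
    have e2 : fderiv ℝ (fun x => I * fderiv ℝ u x (bv i)) x (bv i) = I * dl [i, i] u x := by
      rw [fderiv_const_mul ((pd_smooth hu _).differentiable (by simp) x)]; rfl
    rw [e1, rp_fderiv (hu.differentiable (by simp) x) ((hp i).differentiable (by simp) x), e2, rp_I]
    simp only [A, B]; ring
  have nA : ∀ i x, ‖A i x‖ ≤ C * dec x := by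
    intro i x
    refine le_trans ?_ (hC x)
    rw [norm_mul, Real.norm_eq_abs (rp _ _)]
    have h1 := rp_le (u x) (I * fderiv ℝ u x (bv i))
    rw [norm_mul, norm_I, one_mul] at h1
    have h2 := norm_le_NN u 2 x
    have h3 := (norm_pd_le u i x).trans (norm_fderiv_le_NN u one_le_two x)
    calc _ ≤ ‖fderiv ℝ ρ x‖ * (NN 2 u x * NN 2 u x) :=
          mul_le_mul (norm_pd_le ρ i x) (h1.trans (mul_le_mul h2 h3 (norm_nonneg _)
            (NN_nonneg _ _ _))) (abs_nonneg _) (norm_nonneg _)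
      _ ≤ _ := by nlinarith [abs_nonneg (ρ x), sq_nonneg (NN 2 u x)]
  have nB : ∀ i x, ‖B i x‖ ≤ C * dec x := by
    intro i x
    refine le_trans ?_ (hC x)
    rw [norm_mul, Real.norm_eq_abs (rp _ _), Real.norm_eq_abs]
    have h1 := rp_le (u x) (I * dl [i, i] u x)
    rw [norm_mul, norm_I, one_mul] at h1
    have h2 := norm_le_NN u 2 x
    have h3 := dl_le_NN hu (l := [i, i]) (s := 2) (by simp) x
    calc _ ≤ |ρ x| * (NN 2 u x * NN 2 u x) :=
          mul_le_mul_of_nonneg_left (h1.trans (mul_le_mul h2 h3 (norm_nonneg _)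
            (NN_nonneg _ _ _))) (abs_nonneg _)
      _ ≤ _ := by nlinarith [norm_nonneg (fderiv ℝ ρ x), sq_nonneg (NN 2 u x)]
  have nH : ∀ i x, ‖H i x‖ ≤ C * dec x := by
    intro i x
    refine le_trans ?_ (hC x)
    rw [norm_mul, Real.norm_eq_abs (rp _ _), Real.norm_eq_abs]
    have h1 := rp_le (u x) (I * fderiv ℝ u x (bv i))
    rw [norm_mul, norm_I, one_mul] at h1
    have h2 := norm_le_NN u 2 x
    have h3 := (norm_pd_le u i x).trans (norm_fderiv_le_NN u one_le_two x)
    calc _ ≤ |ρ x| * (NN 2 u x * NN 2 u x) :=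
          mul_le_mul_of_nonneg_left (h1.trans (mul_le_mul h2 h3 (norm_nonneg _)
            (NN_nonneg _ _ _))) (abs_nonneg _)
      _ ≤ _ := by nlinarith [norm_nonneg (fderiv ℝ ρ x), sq_nonneg (NN 2 u x)]
  have iA : ∀ i, Integrable (A i) := fun i => integrable_of_dec
    ((pd_smooth hρ _).continuous.mul (rp_smooth hu (hp i)).continuous) (nA i)
  have iB : ∀ i, Integrable (B i) := fun i => integrable_of_dec
    (hρ.continuous.mul (rp_smooth hu (hpp i)).continuous) (nB i)
  have eB : ∀ x, ρ x * rp (u x) (I * lap d u x) = ∑ i, B i x := by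
    intro x
    rw [lap_eq_dl, Finset.mul_sum, rp_sum, Finset.mul_sum]
  simp_rw [eB]
  refine ⟨integrable_finsetSum _ fun i _ => iB i, integrable_finsetSum _ fun i _ => iA i, ?_⟩
  rw [integral_finsetSum _ fun i _ => iB i, integral_finsetSum _ fun i _ => iA i,
    ← Finset.sum_neg_distrib]
  refine Finset.sum_congr rfl fun i _ => ?_
  have := (int_div (sH i) (bv i) (C := 2 * C) (fun x => (nH i x).trans ?_) fun x => ?_).2
  · simp_rw [dH] at this
    rw [integral_add (iA i) (iB i)] at this
    linarith
  · have := (norm_nonneg _).trans (nH i x); linarith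
  · rw [dH]
    refine (norm_add_le _ _).trans ?_
    have := nA i x; have := nB i x; linarith

/-- The transport part of the energy identity: the flux is `h b`. -/
lemma transport_flux {b : Ed d → Ed d} {h : Ed d → ℝ} (hb : ContDiff ℝ (⊤ : ℕ∞) b)
    (hh : ContDiff ℝ (⊤ : ℕ∞) h) {C : ℝ}
    (hC : ∀ x, (‖b x‖ + ‖fderiv ℝ b x‖) * (|h x| + ‖fderiv ℝ h x‖) ≤ C * dec x) :
    Integrable (fun x => fderiv ℝ h x (b x) + dv b x * h x) ∧
    ∫ x, (fderiv ℝ h x (b x) + dv b x * h x) = 0 := by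
  set H : Fin d → Ed d → ℝ := fun i x => b x i * h x
  have sb : ∀ i, ContDiff ℝ (⊤ : ℕ∞) (fun x => b x i) := fun i =>
    (EuclideanSpace.proj i : Ed d →L[ℝ] ℝ).contDiff.comp hb
  have db : ∀ i x v, fderiv ℝ (fun x => b x i) x v = fderiv ℝ b x v i := fun i x v => by
    have := ((EuclideanSpace.proj i : Ed d →L[ℝ] ℝ).hasFDerivAt.comp x
      (hb.differentiable (by simp) x).hasFDerivAt)
    have q : HasFDerivAt (fun x => b x i) _ x := this
    rw [q.fderiv]; rfl
  have sH : ∀ i, ContDiff ℝ (⊤ : ℕ∞) (H i) := fun i => (sb i).mul hh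
  have dH : ∀ i x, fderiv ℝ (H i) x (bv i) =
      b x i * fderiv ℝ h x (bv i) + fderiv ℝ b x (bv i) i * h x := by
    intro i x
    show fderiv ℝ (fun x => b x i * h x) x (bv i) = _
    rw [fderiv_fun_mul ((sb i).differentiable (by simp) x) (hh.differentiable (by simp) x)]
    simp only [add_apply, smul_apply, smul_eq_mul, db]
    ring
  have hcoord : ∀ (y : Ed d) i, |y i| ≤ ‖y‖ := fun y i => PiLp.norm_apply_le y i
  have nH : ∀ i x, ‖H i x‖ ≤ C * dec x := by
    intro i x
    refine le_trans ?_ (hC x)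
    rw [norm_mul, Real.norm_eq_abs, Real.norm_eq_abs]
    have h1 := hcoord (b x) i
    have := norm_nonneg (fderiv ℝ b x)
    have := norm_nonneg (fderiv ℝ h x)
    have := abs_nonneg (h x)
    have := norm_nonneg (b x)
    calc _ ≤ ‖b x‖ * |h x| := by gcongr
      _ ≤ _ := by nlinarith [mul_nonneg ‹0 ≤ ‖b x‖› ‹0 ≤ ‖fderiv ℝ h x‖›,
        mul_nonneg ‹0 ≤ ‖fderiv ℝ b x‖› ‹0 ≤ |h x|›,
        mul_nonneg ‹0 ≤ ‖fderiv ℝ b x‖› ‹0 ≤ ‖fderiv ℝ h x‖›]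
  have nH' : ∀ i x, ‖fderiv ℝ (H i) x (bv i)‖ ≤ C * dec x := by
    intro i x
    refine le_trans ?_ (hC x)
    rw [dH]
    refine (norm_add_le _ _).trans ?_
    rw [norm_mul, norm_mul, Real.norm_eq_abs, Real.norm_eq_abs (fderiv ℝ b x (bv i) i),
      Real.norm_eq_abs (h x)]
    have h1 := hcoord (b x) i
    have h2 := norm_pd_le h i x
    have h3 := (hcoord (fderiv ℝ b x (bv i)) i).trans (norm_pd_le b i x)
    have := norm_nonneg (fderiv ℝ b x)
    have := norm_nonneg (fderiv ℝ h x)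
    have := abs_nonneg (h x)
    have := norm_nonneg (b x)
    calc _ ≤ ‖b x‖ * ‖fderiv ℝ h x‖ + ‖fderiv ℝ b x‖ * |h x| := by gcongr
      _ ≤ _ := by nlinarith [mul_nonneg ‹0 ≤ ‖b x‖› ‹0 ≤ |h x|›,
        mul_nonneg ‹0 ≤ ‖fderiv ℝ b x‖› ‹0 ≤ ‖fderiv ℝ h x‖›]
  have e : ∀ x, fderiv ℝ h x (b x) + dv b x * h x = ∑ i, fderiv ℝ (H i) x (bv i) := by
    intro x
    simp_rw [dH]
    rw [Finset.sum_add_distrib, dv, Finset.sum_mul]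
    congr 1
    have hx : b x = ∑ i, b x i • bv i := by ext j; simp [bv, Pi.single_apply]
    conv_lhs => rw [hx]
    simp [map_sum]
  simp_rw [e]
  have key := fun i => int_div (sH i) (bv i) (nH i) (nH' i)
  refine ⟨integrable_finsetSum _ fun i _ => (key i).1, ?_⟩
  rw [integral_finsetSum _ fun i _ => (key i).1]
  exact Finset.sum_eq_zero fun i _ => (key i).2

end Energy

end WKB

namespace WKB

/-! ### Commutators with first-order operators -/

section Commutators

variable {d : ℕ} {ι : Type} {S : Set ι}

/-- The sum of the norms of the first `M` derivatives (orders `0, …, M - 1`). -/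
def NS (M : ℕ) (u : Ed d → ℂ) (x : Ed d) : ℝ := ∑ n ∈ Finset.range M, ‖iteratedFDeriv ℝ n u x‖

lemma NS_succ (s : ℕ) (u : Ed d → ℂ) (x : Ed d) : NS (s + 1) u x = NN s u x := rfl

lemma NS_nonneg (s : ℕ) (u : Ed d → ℂ) (x : Ed d) : 0 ≤ NS s u x :=
  Finset.sum_nonneg fun _ _ => norm_nonneg _

lemma NS_mono {s s' : ℕ} (h : s ≤ s') (u : Ed d → ℂ) (x : Ed d) : NS s u x ≤ NS s' u x :=
  Finset.sum_le_sum_of_subset_of_nonneg (Finset.range_mono h) fun _ _ _ => norm_nonneg _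

/-- Leibniz rule for a coefficient times an arbitrary smooth function. -/
lemma leib {c : ι → Ed d → ℝ} {ω : ι → Ed d → ℝ} (sc : Sm S c) (hc : ∀ n, Bd S ω n c) (n : ℕ) :
    ∃ C : ℝ, 0 ≤ C ∧ ∀ i ∈ S, ∀ v : Ed d → ℂ, ContDiff ℝ (⊤ : ℕ∞) v → ∀ x,
      ‖iteratedFDeriv ℝ n (fun x => c i x • v x) x‖ ≤ C * ω i x * NN n v x := by
  choose C hC b using hc
  refine ⟨∑ k ∈ Finset.range (n + 1), (n.choose k : ℝ) * C k,
    Finset.sum_nonneg fun k _ => mul_nonneg (Nat.cast_nonneg _) (hC k), fun i hi v hv x => ?_⟩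
  refine (norm_iteratedFDeriv_smul_le (sc i hi) hv x (n := n) (mod_cast le_top)).trans ?_
  rw [Finset.sum_mul, Finset.sum_mul]
  refine Finset.sum_le_sum fun k _ => ?_
  have h1 := b k i hi x
  have h2 : ‖iteratedFDeriv ℝ (n - k) v x‖ ≤ NN n v x := le_NN (Nat.sub_le _ _) _ _
  rw [mul_assoc (n.choose k : ℝ), mul_assoc (n.choose k : ℝ), mul_assoc (n.choose k : ℝ)]
  exact mul_le_mul_of_nonneg_left (mul_le_mul h1 h2 (norm_nonneg _) ((norm_nonneg _).trans h1))
    (Nat.cast_nonneg _)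

lemma iter_add {u v : Ed d → ℂ} (hu : ContDiff ℝ (⊤ : ℕ∞) u) (hv : ContDiff ℝ (⊤ : ℕ∞) v)
    (n : ℕ) (x : Ed d) : ‖iteratedFDeriv ℝ n (fun x => u x + v x) x‖ ≤
      ‖iteratedFDeriv ℝ n u x‖ + ‖iteratedFDeriv ℝ n v x‖ := by
  have e : iteratedFDeriv ℝ n (fun x => u x + v x) x
      = iteratedFDeriv ℝ n u x + iteratedFDeriv ℝ n v x :=
    iteratedFDeriv_add_apply (hu.contDiffAt.of_le (mod_cast le_top))
      (hv.contDiffAt.of_le (mod_cast le_top))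
  rw [e]; exact norm_add_le _ _

/-- If the commutators of `T` with the partial derivatives have order `m` (with coefficients of
size `ω`), then the commutators with partial derivatives along a word `l` have order
`|l| + m - 1`. -/
lemma comm_bound {T : ι → (Ed d → ℂ) → Ed d → ℂ} {ω : ι → Ed d → ℝ} (hω : ∀ i ∈ S, ∀ x, 0 ≤ ω i x)
    {m : ℕ} (sT : ∀ i ∈ S, ∀ v : Ed d → ℂ, ContDiff ℝ (⊤ : ℕ∞) v → ContDiff ℝ (⊤ : ℕ∞) (T i v))
    (hT : ∀ j n, ∃ C : ℝ, 0 ≤ C ∧ ∀ i ∈ S, ∀ v : Ed d → ℂ, ContDiff ℝ (⊤ : ℕ∞) v → ∀ x,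
      ‖iteratedFDeriv ℝ n (fun x => fderiv ℝ (T i v) x (bv j) -
        T i (fun y => fderiv ℝ v y (bv j)) x) x‖ ≤ C * ω i x * NN (m + n) v x)
    (l : List (Fin d)) (n M : ℕ) (hM : n + l.length + m ≤ M) :
    ∃ C : ℝ, 0 ≤ C ∧ ∀ i ∈ S, ∀ v : Ed d → ℂ, ContDiff ℝ (⊤ : ℕ∞) v → ∀ x,
      ‖iteratedFDeriv ℝ n (fun x => dl l (T i v) x - T i (dl l v) x) x‖ ≤
        C * ω i x * NS M v x := by
  induction l generalizing n with
  | nil =>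
    refine ⟨0, le_rfl, fun i hi v hv x => ?_⟩
    have : (fun x => dl [] (T i v) x - T i (dl [] v) x) = fun _ => (0 : ℂ) := by
      funext x; simp [dl]
    rw [this, iteratedFDeriv_fun_zero]; simp
  | cons j l ih =>
    obtain ⟨C1, h1, b1⟩ := ih (n + 1) (by simp at hM; omega)
    obtain ⟨C2, h2, b2⟩ := hT j n
    refine ⟨C1 + C2 * (m + n + 1), by positivity, fun i hi v hv x => ?_⟩
    have s1 : ContDiff ℝ (⊤ : ℕ∞) (fun x => dl l (T i v) x - T i (dl l v) x) :=
      (dl_smooth (sT i hi v hv) l).sub (sT i hi _ (dl_smooth hv l))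
    have s2 : ContDiff ℝ (⊤ : ℕ∞) (fun x => fderiv ℝ (T i (dl l v)) x (bv j) -
        T i (fun y => fderiv ℝ (dl l v) y (bv j)) x) :=
      (pd_smooth (sT i hi _ (dl_smooth hv l)) _).sub (sT i hi _ (pd_smooth (dl_smooth hv l) _))
    have e : (fun x => dl (j :: l) (T i v) x - T i (dl (j :: l) v) x) = fun x =>
        fderiv ℝ (fun x => dl l (T i v) x - T i (dl l v) x) x (bv j) +
        (fderiv ℝ (T i (dl l v)) x (bv j) - T i (fun y => fderiv ℝ (dl l v) y (bv j)) x) := by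
      funext x
      rw [fderiv_fun_sub ((dl_smooth (sT i hi v hv) l).differentiable (by simp) x)
        ((sT i hi _ (dl_smooth hv l)).differentiable (by simp) x)]
      simp [dl]
    rw [e]
    refine (iter_add (pd_smooth s1 _) s2 n x).trans ?_
    have q1 := (norm_iter_fderiv_apply s1 n j x).trans (b1 i hi v hv x)
    have q2 := b2 i hi _ (dl_smooth hv l) x
    have q3 : NN (m + n) (dl l v) x ≤ (m + n + 1) * NS M v x := by
      have h3 := NN_dl_le hv (l := l) le_rfl (m + n) x
      push_cast at h3
      refine h3.trans (mul_le_mul_of_nonneg_left ?_ (by positivity))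
      rw [← NS_succ]
      exact NS_mono (by simp at hM; omega) _ _
    have q4 : C2 * ω i x * NN (m + n) (dl l v) x ≤ C2 * ω i x * ((m + n + 1) * NS M v x) :=
      mul_le_mul_of_nonneg_left q3 (mul_nonneg h2 (hω i hi x))
    calc _ ≤ C1 * ω i x * NS M v x + C2 * ω i x * ((m + n + 1) * NS M v x) :=
          add_le_add q1 (q2.trans q4)
      _ = _ := by ring

/-- Multiplication by a real function. -/
lemma comm_mul {U : ι → Ed d → ℝ} {ω : ι → Ed d → ℝ} (hω : ∀ i ∈ S, ∀ x, 0 ≤ ω i x)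
    (sU : Sm S U) (hU : ∀ n, Bd S ω (n + 1) U) (l : List (Fin d)) :
    ∃ C : ℝ, 0 ≤ C ∧ ∀ i ∈ S, ∀ v : Ed d → ℂ, ContDiff ℝ (⊤ : ℕ∞) v → ∀ x,
      ‖dl l (fun x => U i x • v x) x - U i x • dl l v x‖ ≤ C * ω i x * NS l.length v x := by
  obtain ⟨C, hC, b⟩ := comm_bound (T := fun i v x => U i x • v x) (m := 0) hω
    (fun i hi v hv => (sU i hi).smul hv) (fun j n => by
      obtain ⟨C, hC, b⟩ := leib (c := fun i x => fderiv ℝ (U i) x (bv j)) (ω := ω)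
        (fun i hi => (sU i hi).fderiv_right (by simp) |>.clm_apply contDiff_const)
        (fun n => Bd.clm sU.fderiv (hU n).fderiv (ContinuousLinearMap.apply ℝ ℝ (bv j))) n
      refine ⟨C, hC, fun i hi v hv x => ?_⟩
      have e : (fun x => fderiv ℝ (fun x => U i x • v x) x (bv j) -
          U i x • fderiv ℝ v x (bv j)) = fun x => fderiv ℝ (U i) x (bv j) • v x := by
        funext x
        rw [fderiv_fun_smul ((sU i hi).differentiable (by simp) x) (hv.differentiable (by simp) x)]
        simp
      rw [e, Nat.zero_add]
      exact b i hi v hv x) l 0 l.length (by omega)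
  exact ⟨C, hC, fun i hi v hv x => by simpa using b i hi v hv x⟩

/-- The symmetrised transport operator `b · ∇ + (div b) / 2`. -/
def Tr (b : Ed d → Ed d) (v : Ed d → ℂ) (x : Ed d) : ℂ :=
  fderiv ℝ v x (b x) + (1 / 2 * dv b x) • v x

lemma dv_smooth {b : Ed d → Ed d} (hb : ContDiff ℝ (⊤ : ℕ∞) b) : ContDiff ℝ (⊤ : ℕ∞) (dv b) :=
  ContDiff.sum fun i _ => (EuclideanSpace.proj i : Ed d →L[ℝ] ℝ).contDiff.comp (pd_smooth hb _)

lemma Tr_smooth {b : Ed d → Ed d} (hb : ContDiff ℝ (⊤ : ℕ∞) b) {v : Ed d → ℂ}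
    (hv : ContDiff ℝ (⊤ : ℕ∞) v) : ContDiff ℝ (⊤ : ℕ∞) (Tr b v) :=
  ((hv.fderiv_right (by simp)).clm_apply hb).add
    ((contDiff_const.mul (dv_smooth hb)).smul hv)

lemma expand (y : Ed d) : y = ∑ i, y i • bv i := by ext j; simp [bv, Pi.single_apply]

lemma comm_Tr_eq {b : Ed d → Ed d} (hb : ContDiff ℝ (⊤ : ℕ∞) b) {v : Ed d → ℂ}
    (hv : ContDiff ℝ (⊤ : ℕ∞) v) (j : Fin d) (x : Ed d) :
    fderiv ℝ (Tr b v) x (bv j) - Tr b (fun y => fderiv ℝ v y (bv j)) x =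
      (∑ i, fderiv ℝ b x (bv j) i • fderiv ℝ v x (bv i)) +
        (1 / 2 * fderiv ℝ (dv b) x (bv j)) • v x := by
  have d1 : DifferentiableAt ℝ (fderiv ℝ v) x :=
    ((hv.fderiv_right (m := ((⊤ : ℕ∞) : WithTop ℕ∞)) (by simp)).differentiable (by simp)) x
  have d2 : DifferentiableAt ℝ b x := hb.differentiable (by simp) x
  have d3 : DifferentiableAt ℝ (dv b) x := (dv_smooth hb).differentiable (by simp) x
  have d4 : DifferentiableAt ℝ v x := hv.differentiable (by simp) x
  have e1 : fderiv ℝ (Tr b v) x (bv j) = (fderiv ℝ (fderiv ℝ v) x (bv j) (b x) +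
      fderiv ℝ v x (fderiv ℝ b x (bv j))) + ((1 / 2 * dv b x) • fderiv ℝ v x (bv j) +
      (1 / 2 * fderiv ℝ (dv b) x (bv j)) • v x) := by
    have h1 := d1.hasFDerivAt.clm_apply d2.hasFDerivAt
    have h2 := (d3.hasFDerivAt.const_mul (1 / 2 : ℝ)).fun_smul d4.hasFDerivAt
    have q : HasFDerivAt (Tr b v) _ x := h1.add h2
    rw [q.fderiv]
    simp
    ring
  have e2 : fderiv ℝ (fun y => fderiv ℝ v y (bv j)) x (b x) =
      fderiv ℝ (fderiv ℝ v) x (bv j) (b x) := by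
    rw [fderiv_apply_const hv]
    exact ((hv.contDiffAt.isSymmSndFDerivAt
      (by simp; exact WithTop.coe_le_coe.2 (le_top (a := (2 : ℕ∞))))).eq _ _).symm
  have e3 : fderiv ℝ v x (fderiv ℝ b x (bv j)) =
      ∑ i, fderiv ℝ b x (bv j) i • fderiv ℝ v x (bv i) := by
    conv_lhs => rw [expand (fderiv ℝ b x (bv j))]
    simp [map_sum]
  rw [e1, Tr, e2, e3]
  ring

lemma comm_Tr {b : ι → Ed d → Ed d} (sb : Sm S b) (hb : BB S (fun i => fderiv ℝ (b i)))
    (hdv : BB S (fun i => dv (b i))) (l : List (Fin d)) :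
    ∃ C : ℝ, 0 ≤ C ∧ ∀ i ∈ S, ∀ v : Ed d → ℂ, ContDiff ℝ (⊤ : ℕ∞) v → ∀ x,
      ‖dl l (Tr (b i) v) x - Tr (b i) (dl l v) x‖ ≤ C * NN l.length v x := by
  obtain ⟨C, hC, h⟩ := comm_bound (S := S) (T := fun i v x => Tr (b i) v x) (ω := one) (m := 1)
    (fun _ _ _ => by simp [one])
    (fun i hi v hv => Tr_smooth (sb i hi) hv) (fun j n => by
      have c1 : ∀ k, BB S (fun i x => fderiv ℝ (b i) x (bv j) k) := fun k =>
        BB.clm (BB.clm hb (ContinuousLinearMap.apply ℝ (Ed d) (bv j)))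
          (EuclideanSpace.proj k : Ed d →L[ℝ] ℝ)
      have c2 : BB S (fun i x => 1 / 2 * fderiv ℝ (dv (b i)) x (bv j)) :=
        BB.clm (hdv.pd (bv j)) ((1 / 2 : ℝ) • ContinuousLinearMap.id ℝ ℝ)
      choose C1 h1 b1 using fun k => leib (c1 k).1 (c1 k).2 n
      obtain ⟨C2, h2, b2⟩ := leib c2.1 c2.2 n
      refine ⟨(∑ k, C1 k * (n + 1)) + C2, by
        have := fun k => mul_nonneg (h1 k) (by positivity : (0 : ℝ) ≤ n + 1)
        have := Finset.sum_nonneg fun k (_ : k ∈ Finset.univ) => this k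
        positivity, fun i hi v hv x => ?_⟩
      have e : (fun x => fderiv ℝ (Tr (b i) v) x (bv j) -
          Tr (b i) (fun y => fderiv ℝ v y (bv j)) x) = fun x =>
          (∑ k, fderiv ℝ (b i) x (bv j) k • fderiv ℝ v x (bv k)) +
            (1 / 2 * fderiv ℝ (dv (b i)) x (bv j)) • v x :=
        funext fun x => comm_Tr_eq (sb i hi) hv j x
      have s1 : ∀ k, ContDiff ℝ (⊤ : ℕ∞) fun x =>
          fderiv ℝ (b i) x (bv j) k • fderiv ℝ v x (bv k) := fun k =>
        ((c1 k).1 i hi).smul (pd_smooth hv _)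
      rw [e]
      refine (iter_add (ContDiff.sum fun k _ => s1 k) ((c2.1 i hi).smul hv) n x).trans ?_
      rw [iteratedFDeriv_fun_sum_apply fun k _ =>
        ((s1 k).contDiffAt.of_le (mod_cast le_top))]
      have hNN := NN_mono (show n ≤ 1 + n by omega) v x
      have q2 := b2 i hi v hv x
      have q1 : ∀ k, ‖iteratedFDeriv ℝ n (fun x => fderiv ℝ (b i) x (bv j) k •
          fderiv ℝ v x (bv k)) x‖ ≤ C1 k * (n + 1) * NN (1 + n) v x := by
        intro k
        have := b1 k i hi _ (pd_smooth hv (bv k)) x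
        have h3 := NN_dl_le hv (l := [k]) (m := 1) (by simp) n x
        refine this.trans ?_
        simp only [one, mul_one, mul_assoc]
        exact mul_le_mul_of_nonneg_left h3 (h1 k)
      refine (add_le_add ((norm_sum_le _ _).trans (Finset.sum_le_sum fun k _ => q1 k)) q2).trans ?_
      simp only [one, mul_one, ← Finset.sum_mul, add_mul]
      gcongr) l 0 (l.length + 1) (by omega)
  exact ⟨C, hC, fun i hi v hv x => by simpa [one, NS_succ] using h i hi v hv x⟩

end Commutators

end WKB

namespace WKB

/-! ### Pointwise estimates for nonlinear functions -/

section Nonlinear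

variable {d : ℕ} {ι : Type} {S : Set ι}

lemma leibB {F G H : Type} [NormedAddCommGroup F] [NormedSpace ℝ F] [NormedAddCommGroup G]
    [NormedSpace ℝ G] [NormedAddCommGroup H] [NormedSpace ℝ H] (B : F →L[ℝ] G →L[ℝ] H) (n : ℕ) :
    ∃ K : ℝ, 0 ≤ K ∧ ∀ (f : Ed d → F) (g : Ed d → G), ContDiff ℝ (⊤ : ℕ∞) f →
    ContDiff ℝ (⊤ : ℕ∞) g → ∀ (x : Ed d) (M : ℝ),
    (∀ k ≤ n, ‖iteratedFDeriv ℝ k f x‖ * ‖iteratedFDeriv ℝ (n - k) g x‖ ≤ M) →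
    ‖iteratedFDeriv ℝ n (fun x => B (f x) (g x)) x‖ ≤ K * M := by
  refine ⟨‖B‖ * 2 ^ n, mul_nonneg (norm_nonneg B) (by positivity), fun f g hf hg x M h => ?_⟩
  refine (B.norm_iteratedFDeriv_le_of_bilinear hf hg x (n := n) (mod_cast le_top)).trans ?_
  rw [mul_assoc]
  refine mul_le_mul_of_nonneg_left ?_ (norm_nonneg B)
  have e : (2 : ℝ) ^ n = ∑ k ∈ Finset.range (n + 1), (n.choose k : ℝ) := by
    have := Nat.sum_range_choose n
    exact_mod_cast this.symm
  rw [e, Finset.sum_mul]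
  refine Finset.sum_le_sum fun k hk => ?_
  rw [mul_assoc]
  exact mul_le_mul_of_nonneg_left (h k (by simp at hk; omega)) (Nat.cast_nonneg _)

lemma iter_addF {F : Type} [NormedAddCommGroup F] [NormedSpace ℝ F] {u v : Ed d → F}
    (hu : ContDiff ℝ (⊤ : ℕ∞) u) (hv : ContDiff ℝ (⊤ : ℕ∞) v)
    (n : ℕ) (x : Ed d) : ‖iteratedFDeriv ℝ n (fun x => u x + v x) x‖ ≤
      ‖iteratedFDeriv ℝ n u x‖ + ‖iteratedFDeriv ℝ n v x‖ := by
  have e : iteratedFDeriv ℝ n (fun x => u x + v x) x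
      = iteratedFDeriv ℝ n u x + iteratedFDeriv ℝ n v x :=
    iteratedFDeriv_add_apply (hu.contDiffAt.of_le (mod_cast le_top))
      (hv.contDiffAt.of_le (mod_cast le_top))
  rw [e]; exact norm_add_le _ _

/-- Tame estimate at a point: as long as the derivatives of `w` of order at most `s₀` are small,
derivatives of `g (A + w) - g A` of order at most `2 s₀ + 1` are controlled linearly by those
of `w`, because in every product at most one factor carries more than `s₀` derivatives. -/
lemma nonlin {A : ι → Ed d → ℂ} (hA : BB S A) (s₀ : ℕ) (n : ℕ) (hn : n ≤ 2 * s₀ + 1) :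
    ∀ (F : Type) [NormedAddCommGroup F] [NormedSpace ℝ F] (g : ℂ → F),
    ContDiff ℝ (⊤ : ℕ∞) g → ∃ C : ℝ, 0 ≤ C ∧ ∀ i ∈ S, ∀ w : Ed d → ℂ,
      ContDiff ℝ (⊤ : ℕ∞) w → ∀ x, NN s₀ w x ≤ 1 →
      ‖iteratedFDeriv ℝ n (fun x => g (A i x + w x) - g (A i x)) x‖ ≤ C * NN n w x := by
  induction n using Nat.strong_induction_on with
  | _ n ih =>
  intro F _ _ g hg
  rcases n with _ | n
  · obtain ⟨R, hR, bR⟩ := hA.2 0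
    have hK : IsCompact (Metric.closedBall (0 : ℂ) (R + 1)) := isCompact_closedBall _ _
    obtain ⟨K, bK⟩ := hK.exists_bound_of_continuousOn
      (f := fderiv ℝ g) ((hg.continuous_fderiv (by simp)).continuousOn)
    have hK0 : 0 ≤ K := (norm_nonneg _).trans (bK 0 (by simp; positivity))
    refine ⟨K, hK0, fun i hi w hw x hx => ?_⟩
    have h0 : ‖w x‖ ≤ 1 := by
      have := le_NN (Nat.zero_le s₀) w x
      rw [norm_iteratedFDeriv_zero] at this
      exact this.trans hx
    have hAx : ‖A i x‖ ≤ R := by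
      have := bR i hi x
      rwa [norm_iteratedFDeriv_zero, one, mul_one] at this
    have := (convex_closedBall (0 : ℂ) (R + 1)).norm_image_sub_le_of_norm_fderiv_le (𝕜 := ℝ)
      (fun y _ => hg.differentiable (by simp) y) bK (x := A i x) (y := A i x + w x)
      (by simp; linarith) (by simpa using (norm_add_le _ _).trans (add_le_add hAx h0))
    rw [norm_iteratedFDeriv_zero]
    refine this.trans (mul_le_mul_of_nonneg_left ?_ hK0)
    rw [add_sub_cancel_left]
    exact norm_le_NN _ _ _
  · have hg' : ContDiff ℝ (⊤ : ℕ∞) (fderiv ℝ g) := hg.fderiv_right (by simp)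
    have ih' : ∀ k, ∃ C : ℝ, 0 ≤ C ∧ (k ≤ n → ∀ i ∈ S, ∀ w : Ed d → ℂ,
        ContDiff ℝ (⊤ : ℕ∞) w → ∀ x, NN s₀ w x ≤ 1 →
        ‖iteratedFDeriv ℝ k (fun x => fderiv ℝ g (A i x + w x) - fderiv ℝ g (A i x)) x‖ ≤
          C * NN k w x) := by
      intro k
      by_cases hk : k ≤ n
      · obtain ⟨C, hC, h⟩ := ih k (by omega) (by omega) (ℂ →L[ℝ] F) (fderiv ℝ g) hg'
        exact ⟨C, hC, fun _ => h⟩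
      · exact ⟨0, le_rfl, fun h => absurd h hk⟩
    choose C hC bC using ih'
    have hQ : BB S (fun i x => fderiv ℝ g (A i x)) := hA.comp_smooth hg'
    choose CQ hCQ bQ using hQ.2
    choose CA hCA bA using hA.fderiv.2
    let B : (ℂ →L[ℝ] F) →L[ℝ] (Ed d →L[ℝ] ℂ) →L[ℝ] Ed d →L[ℝ] F :=
      ContinuousLinearMap.compL ℝ (Ed d) ℂ F
    obtain ⟨K, hK, bK⟩ := leibB (d := d) B n
    set M := ∑ k ∈ Finset.range (n + 1), C k with hM
    set MA := ∑ k ∈ Finset.range (n + 1), CA k with hMA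
    set MQ := ∑ k ∈ Finset.range (n + 1), CQ k with hMQ
    have iM : ∀ k ≤ n, C k ≤ M := fun k hk =>
      Finset.single_le_sum (fun j _ => hC j) (by simp; omega)
    have iA : ∀ k ≤ n, CA k ≤ MA := fun k hk =>
      Finset.single_le_sum (fun j _ => hCA j) (by simp; omega)
    have iQ : ∀ k ≤ n, CQ k ≤ MQ := fun k hk =>
      Finset.single_le_sum (fun j _ => hCQ j) (by simp; omega)
    have M0 : 0 ≤ M := (hC 0).trans (iM 0 (by omega))
    have A0 : 0 ≤ MA := (hCA 0).trans (iA 0 (by omega))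
    have Q0 : 0 ≤ MQ := (hCQ 0).trans (iQ 0 (by omega))
    refine ⟨K * (M * MA) + K * M + K * MQ, by positivity,
      fun i hi w hw x hx => ?_⟩
    have sA := hA.1 i hi
    have sP : ContDiff ℝ (⊤ : ℕ∞)
        (fun x => fderiv ℝ g (A i x + w x) - fderiv ℝ g (A i x)) :=
      (hg'.comp (sA.add hw)).sub (hg'.comp sA)
    have sDA : ContDiff ℝ (⊤ : ℕ∞) (fderiv ℝ (A i)) := sA.fderiv_right (by simp)
    have sDw : ContDiff ℝ (⊤ : ℕ∞) (fderiv ℝ w) := hw.fderiv_right (by simp)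
    have e : fderiv ℝ (fun x => g (A i x + w x) - g (A i x)) = fun x =>
        (B (fderiv ℝ g (A i x + w x) - fderiv ℝ g (A i x)) (fderiv ℝ (A i) x) +
        B (fderiv ℝ g (A i x + w x) - fderiv ℝ g (A i x)) (fderiv ℝ w x)) +
        B (fderiv ℝ g (A i x)) (fderiv ℝ w x) := by
      funext x
      have d1 := (sA.differentiable (by simp) x).hasFDerivAt
      have d2 := (hw.differentiable (by simp) x).hasFDerivAt
      have d3 := (hg.differentiable (by simp) (A i x)).hasFDerivAt.comp x d1
      have d4 := (hg.differentiable (by simp) (A i x + w x)).hasFDerivAt.comp x (d1.add d2)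
      have q : HasFDerivAt (fun x => g (A i x + w x) - g (A i x)) _ x := d4.sub d3
      rw [q.fderiv]
      ext y
      simp [B]
      abel
    have N0 := NN_nonneg (n + 1) w x
    rw [← norm_iteratedFDeriv_fderiv, e]
    have s1 := B.isBoundedBilinearMap.contDiff.comp (sP.prodMk sDA)
    have s2 := B.isBoundedBilinearMap.contDiff.comp (sP.prodMk sDw)
    have s3 := B.isBoundedBilinearMap.contDiff.comp ((hg'.comp sA).prodMk sDw)
    refine (iter_addF (s1.add s2) s3 n x).trans ?_
    have t3 := bK _ _ (hg'.comp sA) sDw x (MQ * NN (n + 1) w x) (fun k hk => by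
      have q := bQ k i hi x
      rw [one, mul_one] at q
      rw [norm_iteratedFDeriv_fderiv]
      exact mul_le_mul (q.trans (iQ k hk)) (le_NN (by omega) _ _) (norm_nonneg _) Q0)
    have t1 := bK _ _ sP sDA x ((M * MA) * NN (n + 1) w x) (fun k hk => by
      have q := bA (n - k) i hi x
      rw [one, mul_one] at q
      have p := bC k hk i hi w hw x hx
      calc _ ≤ (M * NN (n + 1) w x) * MA :=
            mul_le_mul (p.trans (mul_le_mul (iM k hk) (NN_mono (by omega) _ _)
              (NN_nonneg _ _ _) M0)) (q.trans (iA _ (by omega))) (norm_nonneg _) (by positivity)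
        _ = _ := by ring)
    have t2 := bK _ _ sP sDw x (M * NN (n + 1) w x) (fun k hk => by
      rw [norm_iteratedFDeriv_fderiv]
      have p := bC k hk i hi w hw x hx
      by_cases hks : k ≤ s₀
      · have h1 : NN k w x ≤ 1 := (NN_mono hks _ _).trans hx
        refine mul_le_mul (p.trans ?_) (le_NN (by omega) _ _) (norm_nonneg _) M0
        exact (mul_le_mul (iM k hk) h1 (NN_nonneg _ _ _) M0).trans (by rw [mul_one])
      · have h1 : ‖iteratedFDeriv ℝ (n - k + 1) w x‖ ≤ 1 :=
          (le_NN (by omega) _ _).trans hx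
        refine (mul_le_mul (p.trans (mul_le_mul (iM k hk) (NN_mono (show k ≤ n + 1 by omega) _ _)
          (NN_nonneg _ _ _) M0)) h1 (norm_nonneg _) (by positivity)).trans (by rw [mul_one]))
    have t12 := iter_addF s1 s2 n x
    calc _ ≤ K * ((M * MA) * NN (n + 1) w x) + K * (M * NN (n + 1) w x)
        + K * (MQ * NN (n + 1) w x) :=
          add_le_add (t12.trans (add_le_add t1 t2)) t3
      _ = _ := by ring

end Nonlinear

end WKB

namespace WKB

/-! ### Calculus of partial derivatives along words -/

section Words

variable {d : ℕ} {ι : Type} {S : Set ι}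

lemma dl_add {u v : Ed d → ℂ} (hu : ContDiff ℝ (⊤ : ℕ∞) u) (hv : ContDiff ℝ (⊤ : ℕ∞) v)
    (l : List (Fin d)) (x : Ed d) : dl l (fun x => u x + v x) x = dl l u x + dl l v x := by
  induction l generalizing x with
  | nil => rfl
  | cons i l ih =>
    have : dl l (fun x => u x + v x) = fun x => dl l u x + dl l v x := funext ih
    simp only [dl]
    rw [this, fderiv_fun_add ((dl_smooth hu l).differentiable (by simp) x)
      ((dl_smooth hv l).differentiable (by simp) x)]
    rfl

lemma dl_clm {u : Ed d → ℂ} (hu : ContDiff ℝ (⊤ : ℕ∞) u) (L : ℂ →L[ℝ] ℂ) (l : List (Fin d))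
    (x : Ed d) : dl l (fun x => L (u x)) x = L (dl l u x) := by
  induction l generalizing x with
  | nil => rfl
  | cons i l ih =>
    have : dl l (fun x => L (u x)) = fun x => L (dl l u x) := funext ih
    simp only [dl]
    rw [this]
    have q := L.hasFDerivAt.comp x ((dl_smooth hu l).differentiable (by simp) x).hasFDerivAt
    have q' : HasFDerivAt (fun x => L (dl l u x)) _ x := q
    rw [q'.fderiv]; rfl

lemma dl_mul {u : Ed d → ℂ} (hu : ContDiff ℝ (⊤ : ℕ∞) u) (c : ℂ) (l : List (Fin d))
    (x : Ed d) : dl l (fun x => c * u x) x = c * dl l u x :=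
  dl_clm hu (ContinuousLinearMap.mul ℝ ℂ c) l x

lemma dl_zero (l : List (Fin d)) (x : Ed d) : dl l (fun _ => (0 : ℂ)) x = 0 := by
  have := dl_mul (u := fun _ : Ed d => (0 : ℂ)) contDiff_const 0 l x
  simpa using this

lemma dl_sum {α : Type} (s : Finset α) {u : α → Ed d → ℂ}
    (hu : ∀ i, ContDiff ℝ (⊤ : ℕ∞) (u i)) (l : List (Fin d)) (x : Ed d) :
    dl l (fun x => ∑ i ∈ s, u i x) x = ∑ i ∈ s, dl l (u i) x := by
  classical
  induction s using Finset.induction_on with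
  | empty => simpa using dl_zero l x
  | insert i s hi ih =>
    simp only [Finset.sum_insert hi]
    rw [dl_add (hu i) (ContDiff.sum fun j _ => hu j), ih]

lemma dl_pd {u : Ed d → ℂ} (hu : ContDiff ℝ (⊤ : ℕ∞) u) (i : Fin d) (l : List (Fin d))
    (x : Ed d) : dl l (fun x => fderiv ℝ u x (bv i)) x = dl (i :: l) u x := by
  induction l generalizing x with
  | nil => rfl
  | cons j l ih =>
    have : dl l (fun x => fderiv ℝ u x (bv i)) = dl (i :: l) u := funext ih
    have hv := dl_smooth hu l
    have e1 : dl (j :: l) (fun x => fderiv ℝ u x (bv i)) x =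
      fderiv ℝ (fun y => fderiv ℝ (dl l u) y (bv i)) x (bv j) := by
      simp only [dl] at this ⊢
      rw [this]
    have e2 : dl (i :: j :: l) u x =
      fderiv ℝ (fun y => fderiv ℝ (dl l u) y (bv j)) x (bv i) := rfl
    rw [e1, e2, fderiv_apply_const hv, fderiv_apply_const hv]
    exact (hv.contDiffAt.isSymmSndFDerivAt
      (by simp; exact WithTop.coe_le_coe.2 (le_top (a := (2 : ℕ∞))))).eq _ _

lemma dl_lap {u : Ed d → ℂ} (hu : ContDiff ℝ (⊤ : ℕ∞) u) (l : List (Fin d)) (x : Ed d) :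
    dl l (lap d u) x = lap d (dl l u) x := by
  have e : lap d u = fun x => ∑ i, dl [i, i] u x := rfl
  rw [e, dl_sum _ (fun i => dl_smooth hu _)]
  refine Finset.sum_congr rfl fun i _ => ?_
  have e1 : dl [i, i] u = fun x => fderiv ℝ (dl [i] u) x (bv i) := rfl
  have e2 : dl [i] u = fun x => fderiv ℝ u x (bv i) := rfl
  have e3 : dl l (dl [i] u) = dl (i :: l) u := funext fun x => by rw [e2]; exact dl_pd hu i l x
  rw [e1, dl_pd (dl_smooth hu [i])]
  change fderiv ℝ (dl l (dl [i] u)) x (bv i) = _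
  rw [e3]; rfl

lemma lap_smooth {u : Ed d → ℂ} (hu : ContDiff ℝ (⊤ : ℕ∞) u) : ContDiff ℝ (⊤ : ℕ∞) (lap d u) :=
  ContDiff.sum fun i _ => dl_smooth hu [i, i]

lemma Sm.dl {u : ι → Ed d → ℂ} (hu : Sm S u) (l : List (Fin d)) : Sm S (fun i => dl l (u i)) :=
  fun i hi => dl_smooth (hu i hi) l

lemma PG.dl {u : ι → Ed d → ℂ} (hu : PG S u) (l : List (Fin d)) : PG S (fun i => dl l (u i)) := by
  induction l with
  | nil => exact hu
  | cons j l ih => exact ih.pd _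

lemma US.dl {u : ι → Ed d → ℂ} (hu : US S u) (l : List (Fin d)) : US S (fun i => dl l (u i)) := by
  induction l with
  | nil => exact hu
  | cons j l ih => exact ih.pd _

lemma TD.dl {T : ℝ} {u g : ℝ → Ed d → ℂ} (h : TD T u g) (su : Sm (Icc 0 T) u)
    (sg : PG (Icc 0 T) g) (l : List (Fin d)) :
    TD T (fun t => dl l (u t)) (fun t => dl l (g t)) := by
  induction l with
  | nil => exact h
  | cons j l ih => exact ih.pd (su.dl l) (sg.dl l) _

lemma PG.lap {u : ι → Ed d → ℂ} (hu : PG S u) : PG S (fun i => _root_.lap d (u i)) :=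
  (hu.fderiv.fderiv.clm (lapL d)).congr fun i hi x => lap_eq (hu.1 i hi) x

lemma BB.lap {u : ι → Ed d → ℂ} (hu : BB S u) : BB S (fun i => _root_.lap d (u i)) :=
  (hu.fderiv.fderiv.clm (lapL d)).congr fun i hi x => lap_eq (hu.1 i hi) x

end Words

/-- Integrated Gronwall inequality with a one-sided bound on the derivative. -/
lemma gron {T K ε δ : ℝ} {F F' : ℝ → ℝ} (hK : 0 ≤ K) (hε : 0 ≤ ε)
    (hc : ContinuousOn F (Icc 0 T)) (hd : ∀ t ∈ Ioo 0 T, HasDerivAt F (F' t) t)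
    (h0 : F 0 ≤ δ) (hb : ∀ t ∈ Ioo 0 T, F' t ≤ K * F t + ε) {t : ℝ} (ht : t ∈ Icc 0 T) :
    F t ≤ (δ + ε * t) * Real.exp (K * t) := by
  have hdG : ∀ s ∈ Ioo 0 T, HasDerivAt (fun s => Real.exp (-(K * s)) * F s - ε * s)
      (Real.exp (-(K * s)) * (F' s - K * F s) - ε) s := by
    intro s hs
    have e1 : HasDerivAt (fun s : ℝ => Real.exp (-(K * s))) (Real.exp (-(K * s)) * -(K * 1)) s :=
      (((hasDerivAt_id s).const_mul K).neg).exp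
    have e2 : HasDerivAt (fun s : ℝ => ε * s) (ε * 1) s := (hasDerivAt_id s).const_mul ε
    exact ((e1.mul (hd s hs)).sub e2).congr_deriv (by ring)
  have anti : AntitoneOn (fun s => Real.exp (-(K * s)) * F s - ε * s) (Icc 0 T) := by
    refine antitoneOn_of_deriv_nonpos (convex_Icc _ _) ?_ ?_ ?_
    · exact ((by fun_prop : Continuous fun s : ℝ => Real.exp (-(K * s))).continuousOn.mul hc).sub
        (by fun_prop)
    · rw [interior_Icc]
      exact fun s hs => (hdG s hs).differentiableAt.differentiableWithinAt
    · rw [interior_Icc]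
      intro s hs
      rw [(hdG s hs).deriv]
      have h1 : Real.exp (-(K * s)) ≤ 1 := Real.exp_le_one_iff.2 (by
        have := mul_nonneg hK hs.1.le; linarith)
      have h2 := hb s hs
      have h3 : Real.exp (-(K * s)) * (F' s - K * F s) ≤ Real.exp (-(K * s)) * ε :=
        mul_le_mul_of_nonneg_left (by linarith) (Real.exp_pos _).le
      have h4 : Real.exp (-(K * s)) * ε ≤ 1 * ε := mul_le_mul_of_nonneg_right h1 hε
      linarith
  have := anti ⟨le_rfl, ht.1.trans ht.2⟩ ht ht.1
  simp only [mul_zero, neg_zero, Real.exp_zero, one_mul, sub_zero] at this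
  have h5 : Real.exp (-(K * t)) * F t ≤ δ + ε * t := by linarith
  have h6 := mul_le_mul_of_nonneg_right h5 (Real.exp_pos (K * t)).le
  rwa [mul_right_comm, ← Real.exp_add, neg_add_cancel, Real.exp_zero, one_mul] at h6

/-! ### Decay of solutions at fixed parameter: weights -/

section Weights

variable {d : ℕ}

/-- The weight `(1 + |x|²)^j (1 + δ |x|²)^{-N}`: it is integrable against polynomials when `N` is
large, and increases to the polynomial weight `(1 + |x|²)^j` as `δ → 0`. -/
def rho (δ : ℝ) (N j : ℕ) (x : Ed d) : ℝ := (1 + ‖x‖ ^ 2) ^ j * ((1 + δ * ‖x‖ ^ 2) ^ N)⁻¹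

variable {δ : ℝ} {N : ℕ}

lemma rho_pos (hδ : 0 < δ) (j : ℕ) (x : Ed d) : 0 < rho δ N j x := by
  unfold rho; positivity

lemma rho_smooth (hδ : 0 < δ) (j : ℕ) : ContDiff ℝ (⊤ : ℕ∞) (rho (d := d) δ N j) := by
  have h : ContDiff ℝ (⊤ : ℕ∞) fun x : Ed d => ‖x‖ ^ 2 := contDiff_norm_sq ℝ
  refine ((contDiff_const.add h).pow j).mul (ContDiff.inv ((contDiff_const.add
    (contDiff_const.mul h)).pow N) fun x => ?_)
  positivity

lemma rho_succ (j : ℕ) (x : Ed d) : rho δ N (j + 1) x = (1 + ‖x‖ ^ 2) * rho δ N j x := by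
  unfold rho; ring

lemma rho_mono (hδ : 0 < δ) {j j' : ℕ} (h : j ≤ j') (x : Ed d) : rho δ N j x ≤ rho δ N j' x := by
  unfold rho
  gcongr
  nlinarith [sq_nonneg ‖x‖]

lemma rho_zero_le (hδ : 0 < δ) (x : Ed d) : rho δ N 0 x ≤ 1 := by
  unfold rho
  rw [pow_zero, one_mul]
  exact inv_le_one_of_one_le₀ (one_le_pow₀ (by nlinarith [mul_nonneg hδ.le (sq_nonneg ‖x‖)]))

lemma rho_le_pow (hδ : 0 < δ) (j : ℕ) (x : Ed d) : rho δ N j x ≤ (1 + ‖x‖ ^ 2) ^ j := by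
  have h : ((1 + δ * ‖x‖ ^ 2) ^ N)⁻¹ ≤ 1 :=
    inv_le_one_of_one_le₀ (one_le_pow₀ (by nlinarith [mul_nonneg hδ.le (sq_nonneg ‖x‖)]))
  exact (mul_le_mul_of_nonneg_left h (by positivity)).trans (by rw [mul_one])

/-- The weight varies slowly: its logarithmic derivative is `O(|x| / (1 + |x|²))`, uniformly in
`δ ∈ (0, 1]`. -/
lemma rho_fderiv (hδ : 0 < δ) (h1 : δ ≤ 1) (j : ℕ) (x : Ed d) :
    (1 + ‖x‖ ^ 2) * ‖fderiv ℝ (rho δ N j) x‖ ≤ 2 * (j + N) * ‖x‖ * rho δ N j x := by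
  have hn : HasFDerivAt (fun x : Ed d => ‖x‖ ^ 2) (2 • innerSL ℝ x) x :=
    (hasStrictFDerivAt_norm_sq x).hasFDerivAt
  set p : ℝ := 1 + ‖x‖ ^ 2 with hp
  set q : ℝ := 1 + δ * ‖x‖ ^ 2 with hq
  have hp0 : 0 < p := by positivity
  have hq0 : 0 < q := by positivity
  have e1 : HasFDerivAt (fun x : Ed d => (1 + ‖x‖ ^ 2) ^ j)
      ((j * p ^ (j - 1)) • (2 • innerSL ℝ x : Ed d →L[ℝ] ℝ)) x := by
    have := (hn.const_add 1).pow j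
    simpa using this
  have e2 : HasFDerivAt (fun x : Ed d => ((1 + δ * ‖x‖ ^ 2) ^ N)⁻¹)
      ((-(N * q ^ (N - 1) * δ) / (q ^ N) ^ 2) • (2 • innerSL ℝ x : Ed d →L[ℝ] ℝ)) x := by
    have h2 : HasFDerivAt (fun x : Ed d => (1 + δ * ‖x‖ ^ 2) ^ N)
        ((N * q ^ (N - 1) * δ) • (2 • innerSL ℝ x : Ed d →L[ℝ] ℝ)) x := by
      have := ((hn.const_mul δ).const_add 1).pow N
      refine this.congr_fderiv ?_
      ext y; simp [hq]; ring
    have h3 := (hasDerivAt_inv (x := q ^ N) (by positivity)).comp_hasFDerivAt x h2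
    refine h3.congr_fderiv ?_
    ext y; simp; ring
  have q3 : HasFDerivAt (rho δ N j) _ x := e1.mul e2
  have e4 : fderiv ℝ (rho δ N j) x = ((j * p ^ (j - 1)) * (q ^ N)⁻¹ +
      p ^ j * (-(N * q ^ (N - 1) * δ) / (q ^ N) ^ 2)) • (2 • innerSL ℝ x : Ed d →L[ℝ] ℝ) := by
    rw [q3.fderiv]
    ext y; simp; ring
  have e5 : ‖(2 • innerSL ℝ x : Ed d →L[ℝ] ℝ)‖ = 2 * ‖x‖ := by
    rw [← Nat.cast_smul_eq_nsmul ℝ, norm_smul, innerSL_apply_norm]; simp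
  rw [e4, norm_smul, e5]
  have hdq : δ * p ≤ q := by rw [hp, hq]; nlinarith [sq_nonneg ‖x‖]
  have b1 : p * (j * p ^ (j - 1) * (q ^ N)⁻¹) = j * rho δ N j x := by
    unfold rho
    rcases j with _ | j
    · simp
    · simp only [Nat.add_sub_cancel, pow_succ]; push_cast; ring
  have b2 : p * (p ^ j * ((N * q ^ (N - 1) * δ) / (q ^ N) ^ 2)) ≤ N * rho δ N j x := by
    unfold rho
    rw [← hp, ← hq]
    rcases N with _ | N
    · simp
    · have : p * (p ^ j * (((N + 1 : ℕ) * q ^ (N + 1 - 1) * δ) / (q ^ (N + 1)) ^ 2)) =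
          ((N + 1 : ℕ) * (p ^ j * (q ^ (N + 1))⁻¹)) * (δ * p / q) := by
        simp only [Nat.add_sub_cancel]; field_simp; ring
      rw [this]
      refine mul_le_of_le_one_right (by positivity) ((div_le_one hq0).2 hdq)
  have b3 : p * ‖(j * p ^ (j - 1)) * (q ^ N)⁻¹ + p ^ j * (-(N * q ^ (N - 1) * δ) / (q ^ N) ^ 2)‖
      ≤ (j + N) * rho δ N j x := by
    have := norm_add_le ((j * p ^ (j - 1)) * (q ^ N)⁻¹)
      (p ^ j * (-(N * q ^ (N - 1) * δ) / (q ^ N) ^ 2))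
    rw [neg_div, mul_neg, norm_neg, Real.norm_of_nonneg
      (show 0 ≤ (j * p ^ (j - 1)) * (q ^ N)⁻¹ by positivity), Real.norm_of_nonneg
      (show 0 ≤ p ^ j * ((N * q ^ (N - 1) * δ) / (q ^ N) ^ 2) by positivity)] at this
    rw [neg_div, mul_neg]
    nlinarith [mul_le_mul_of_nonneg_left this hp0.le]
  nlinarith [mul_le_mul_of_nonneg_right b3 (norm_nonneg x)]

/-- For `N` large the weight times a power of `1 + |x|` is integrable (for fixed `δ > 0`). -/
lemma rho_dec (hδ : 0 < δ) (h1 : δ ≤ 1) {j r : ℕ} (hN : j + r + (d + 1) ≤ N) :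
    ∃ C : ℝ, 0 ≤ C ∧ ∀ x : Ed d, rho δ N j x * (1 + ‖x‖) ^ r ≤ C * dec x ∧
      ‖fderiv ℝ (rho δ N j) x‖ * (1 + ‖x‖) ^ r ≤ C * dec x := by
  have key : ∀ x : Ed d, rho δ N j x * (1 + ‖x‖) ^ r ≤ ((δ ^ N)⁻¹ * 2 ^ (r + (d + 1))) * dec x := by
    intro x
    set p : ℝ := 1 + ‖x‖ ^ 2 with hp
    set q : ℝ := 1 + δ * ‖x‖ ^ 2 with hq
    have hp1 : 1 ≤ p := by rw [hp]; nlinarith [sq_nonneg ‖x‖]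
    have hdq : δ * p ≤ q := by rw [hp, hq]; nlinarith [sq_nonneg ‖x‖]
    have hx : 1 + ‖x‖ ≤ 2 * p := by rw [hp]; nlinarith [sq_nonneg (‖x‖ - 1), norm_nonneg x]
    have h0 := w_pos x
    unfold rho dec
    rw [← hp, ← hq, ← div_eq_mul_inv _ ((1 + ‖x‖) ^ (d + 1)), le_div_iff₀ (by positivity)]
    calc p ^ j * (q ^ N)⁻¹ * (1 + ‖x‖) ^ r * (1 + ‖x‖) ^ (d + 1)
        = p ^ j * (q ^ N)⁻¹ * (1 + ‖x‖) ^ (r + (d + 1)) := by ring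
      _ ≤ p ^ j * ((δ * p) ^ N)⁻¹ * (2 * p) ^ (r + (d + 1)) := by gcongr
      _ = ((δ ^ N)⁻¹ * 2 ^ (r + (d + 1))) * (p ^ (j + (r + (d + 1))) / p ^ N) := by
          rw [mul_pow, mul_pow, mul_inv]; field_simp; ring
      _ ≤ ((δ ^ N)⁻¹ * 2 ^ (r + (d + 1))) * 1 := by
          gcongr
          exact (div_le_one (by positivity)).2 (pow_le_pow_right₀ hp1 (by omega))
      _ = _ := mul_one _
  set C := (δ ^ N)⁻¹ * 2 ^ (r + (d + 1)) with hC
  have hC0 : 0 ≤ C := by positivity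
  refine ⟨(1 + 2 * (j + N)) * C, by positivity, fun x => ⟨?_, ?_⟩⟩
  · have := key x
    have h2 : 0 ≤ 2 * ((j : ℝ) + N) * (C * dec x) := by
      have := (dec_pos x).le; positivity
    linarith
  · have h3 := rho_fderiv (N := N) hδ h1 j x
    have h4 : ‖fderiv ℝ (rho δ N j) x‖ ≤ 2 * (j + N) * rho δ N j x := by
      have hp : 0 < 1 + ‖x‖ ^ 2 := by positivity
      have hx : ‖x‖ ≤ 1 + ‖x‖ ^ 2 := by nlinarith [sq_nonneg (‖x‖ - 1), norm_nonneg x]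
      have h5 : 2 * (j + N) * ‖x‖ * rho δ N j x ≤ (1 + ‖x‖ ^ 2) * (2 * (j + N) * rho δ N j x) := by
        have := mul_le_mul_of_nonneg_right hx
          (mul_nonneg (by positivity : 0 ≤ 2 * ((j : ℝ) + N)) (rho_pos (N := N) hδ j x).le)
        linarith
      exact le_of_mul_le_mul_left (h3.trans h5) hp
    have h6 := mul_le_mul_of_nonneg_right h4 (pow_nonneg (w_pos x).le r)
    have h7 := mul_le_mul_of_nonneg_left (key x) (by positivity : 0 ≤ 2 * ((j : ℝ) + N))
    have h8 := mul_nonneg hC0 (dec_pos x).le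
    linarith

end Weights

end WKB

namespace WKB

/-! ### Decay of solutions at fixed parameter: energy estimate -/

section Decay

variable {d : ℕ}

/-- The weighted energy density: a derivative of order `m ≤ k` carries the weight
`rho δ N (k + 1 - m)`, so that one derivative is traded for one power of the weight. -/
def Dn (δ : ℝ) (N k : ℕ) (v : Ed d → ℂ) (x : Ed d) : ℝ :=
  ∑ l ∈ W d k, rho δ N (k + 1 - l.length) x * ‖dl l v x‖ ^ 2

lemma le_Dn {δ : ℝ} (hδ : 0 < δ) (N : ℕ) {k : ℕ} {l : List (Fin d)} (hl : l ∈ W d k)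
    (v : Ed d → ℂ) (x : Ed d) :
    rho δ N (k + 1 - l.length) x * ‖dl l v x‖ ^ 2 ≤ Dn δ N k v x :=
  Finset.single_le_sum (f := fun l : List (Fin d) => rho δ N (k + 1 - l.length) x * ‖dl l v x‖ ^ 2)
    (fun _ _ => mul_nonneg (rho_pos hδ _ _).le (sq_nonneg _)) hl

lemma Dn_nonneg {δ : ℝ} (hδ : 0 < δ) (N k : ℕ) (v : Ed d → ℂ) (x : Ed d) : 0 ≤ Dn δ N k v x :=
  Finset.sum_nonneg fun _ _ => mul_nonneg (rho_pos hδ _ _).le (sq_nonneg _)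

/-- The flux of the Schrödinger operator against the weight is controlled by the density. -/
lemma flux_le {δ : ℝ} (hδ : 0 < δ) (h1 : δ ≤ 1) (N : ℕ) {k : ℕ} {l : List (Fin d)} (hl : l ∈ W d k)
    (v : Ed d → ℂ) (x : Ed d) :
    |∑ i, fderiv ℝ (rho δ N (k + 1 - l.length)) x (bv i) *
      rp (dl l v x) (I * fderiv ℝ (dl l v) x (bv i))| ≤
      d * ((k + 1 + N) * (2 * (Dn δ N k v x + Q (k + 1) v x))) := by
  have hl' := mem_W.1 hl
  set u := dl l v with hu
  set j := k + 1 - l.length with hj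
  have hD := Dn_nonneg hδ N k v x
  have hQ := Q_nonneg (k + 1) v x
  have term : ∀ i : Fin d, |fderiv ℝ (rho δ N j) x (bv i) *
      rp (u x) (I * fderiv ℝ u x (bv i))| ≤
      (k + 1 + N) * (2 * (Dn δ N k v x + Q (k + 1) v x)) := by
    intro i
    set z := fderiv ℝ u x (bv i) with hz
    have r0 := rho_pos (N := N) hδ j x
    set p : ℝ := 1 + ‖x‖ ^ 2 with hp
    have hp0 : 0 < p := by positivity
    have a1 : rho δ N j x * ‖u x‖ ^ 2 ≤ Dn δ N k v x := le_Dn hδ N hl v x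
    have a2 : rho δ N j x * ‖z‖ ^ 2 ≤ p * (Dn δ N k v x + Q (k + 1) v x) := by
      have e : rho δ N j x = p * rho δ N (k - l.length) x := by
        rw [hj, show k + 1 - l.length = (k - l.length) + 1 by omega, rho_succ]
      rw [e, mul_assoc]
      refine mul_le_mul_of_nonneg_left ?_ hp0.le
      by_cases hk : l.length < k
      · have h2 := le_Dn hδ N (mem_W.2 (show (i :: l).length ≤ k by simpa using hk)) v x
        have e2 : k + 1 - (i :: l).length = k - l.length := by simp
        rw [e2] at h2
        change rho δ N (k - l.length) x * ‖dl (i :: l) v x‖ ^ 2 ≤ _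
        linarith
      · have e2 : k - l.length = 0 := by omega
        have h3 : ‖dl (i :: l) v x‖ ^ 2 ≤ Q (k + 1) v x :=
          Finset.single_le_sum (f := fun l => ‖dl l v x‖ ^ 2) (fun _ _ => sq_nonneg _)
            (mem_W.2 (by simpa using hl'))
        rw [e2]
        change rho δ N 0 x * ‖dl (i :: l) v x‖ ^ 2 ≤ _
        have h4 := mul_le_mul_of_nonneg_right (rho_zero_le (N := N) hδ x)
          (sq_nonneg ‖dl (i :: l) v x‖)
        linarith
    have b1 : |fderiv ℝ (rho δ N j) x (bv i)| ≤ ‖fderiv ℝ (rho δ N j) x‖ := by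
      rw [← Real.norm_eq_abs]; simpa using (fderiv ℝ (rho δ N j) x).le_opNorm (bv i)
    have b2 : |rp (u x) (I * z)| ≤ ‖u x‖ * ‖z‖ := (rp_le _ _).trans (by simp)
    have b3 := rho_fderiv (N := N) hδ h1 j x
    have hjk : (j : ℝ) + N ≤ k + 1 + N := by
      have : j ≤ k + 1 := by omega
      have : (j : ℝ) ≤ (k + 1 : ℕ) := by exact_mod_cast this
      push_cast at this; linarith
    have hxp : ‖x‖ ^ 2 ≤ p := by rw [hp]; linarith
    have c1 : 2 * ‖x‖ * (‖u x‖ * ‖z‖) ≤ p * ‖u x‖ ^ 2 + ‖z‖ ^ 2 := by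
      nlinarith [sq_nonneg (‖x‖ * ‖u x‖ - ‖z‖), mul_le_mul_of_nonneg_right hxp (sq_nonneg ‖u x‖)]
    have hM : 0 ≤ ‖u x‖ * ‖z‖ := by positivity
    refine le_of_mul_le_mul_left ?_ hp0
    rw [abs_mul]
    calc p * (|fderiv ℝ (rho δ N j) x (bv i)| * |rp (u x) (I * z)|)
        ≤ p * (‖fderiv ℝ (rho δ N j) x‖ * (‖u x‖ * ‖z‖)) := by gcongr
      _ = (p * ‖fderiv ℝ (rho δ N j) x‖) * (‖u x‖ * ‖z‖) := by ring
      _ ≤ (2 * (j + N) * ‖x‖ * rho δ N j x) * (‖u x‖ * ‖z‖) :=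
          mul_le_mul_of_nonneg_right b3 hM
      _ = ((j + N) * rho δ N j x) * (2 * ‖x‖ * (‖u x‖ * ‖z‖)) := by ring
      _ ≤ ((j + N) * rho δ N j x) * (p * ‖u x‖ ^ 2 + ‖z‖ ^ 2) :=
          mul_le_mul_of_nonneg_left c1 (by positivity)
      _ = (j + N) * (p * (rho δ N j x * ‖u x‖ ^ 2) + rho δ N j x * ‖z‖ ^ 2) := by ring
      _ ≤ (j + N) * (p * Dn δ N k v x + p * (Dn δ N k v x + Q (k + 1) v x)) := by gcongr
      _ ≤ (k + 1 + N) * (p * Dn δ N k v x + p * (Dn δ N k v x + Q (k + 1) v x)) := by gcongr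
      _ ≤ p * ((k + 1 + N) * (2 * (Dn δ N k v x + Q (k + 1) v x))) := by
          have : 0 ≤ ((k : ℝ) + 1 + N) * (p * Q (k + 1) v x) := by positivity
          linarith
  refine (Finset.abs_sum_le_sum_abs _ _).trans ((Finset.sum_le_sum fun i _ => term i).trans ?_)
  simp

/-- Commutator terms of lower order, but with one more power of `1 + |x|`, are controlled by the
density. -/
lemma comm_le (d k : ℕ) : ∃ C : ℝ, 0 ≤ C ∧ ∀ v : Ed d → ℂ, ContDiff ℝ (⊤ : ℕ∞) v → ∀ (δ : ℝ),
    0 < δ → ∀ (N : ℕ) (l : List (Fin d)), l ∈ W d k → ∀ x,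
    rho δ N (k + 1 - l.length) x * ((1 + ‖x‖) * ‖dl l v x‖ * NS l.length v x) ≤
      C * Dn δ N k v x := by
  choose K hK bK using fun m => NN_sq_le_Q d m
  set M := ∑ m ∈ Finset.range (k + 1), K m with hM
  have hM0 : 0 ≤ M := Finset.sum_nonneg fun m _ => hK m
  refine ⟨1 + 2 * M, by positivity, fun v hv δ hδ N l hl x => ?_⟩
  have hl' := mem_W.1 hl
  set j := k + 1 - l.length with hj
  have r0 := rho_pos (N := N) hδ j x
  have a1 : rho δ N j x * ‖dl l v x‖ ^ 2 ≤ Dn δ N k v x := le_Dn hδ N hl v x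
  have hD := Dn_nonneg hδ N k v x
  have a2 : rho δ N (j + 1) x * NS l.length v x ^ 2 ≤ M * Dn δ N k v x := by
    rcases hm : l.length with _ | m
    · have : NS 0 v x = 0 := by simp [NS]
      rw [this]
      have := mul_nonneg hM0 hD
      simpa using this
    · rw [NS_succ]
      have hKM : K m ≤ M := Finset.single_le_sum (fun m _ => hK m) (by simp; omega)
      have hQ : rho δ N (j + 1) x * Q m v x ≤ Dn δ N k v x := by
        unfold Q Dn
        rw [Finset.mul_sum]
        refine (Finset.sum_le_sum fun l' hl' => ?_).trans
          (Finset.sum_le_sum_of_subset_of_nonneg (s := W d m) (t := W d k) ?_ fun l' _ _ =>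
            mul_nonneg (rho_pos hδ _ _).le (sq_nonneg _))
        · refine mul_le_mul_of_nonneg_right (rho_mono hδ ?_ x) (sq_nonneg _)
          have := mem_W.1 hl'
          omega
        · intro l' hl'
          rw [mem_W] at hl' ⊢
          omega
      have hr := (rho_pos (N := N) hδ (j + 1) x).le
      calc _ ≤ rho δ N (j + 1) x * (K m * Q m v x) :=
            mul_le_mul_of_nonneg_left (bK m v hv x) hr
        _ = K m * (rho δ N (j + 1) x * Q m v x) := by ring
        _ ≤ M * Dn δ N k v x := mul_le_mul hKM hQ
            (mul_nonneg hr (Q_nonneg _ _ _)) hM0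
  rw [rho_succ] at a2
  have h2 : (1 + ‖x‖) ^ 2 ≤ 2 * (1 + ‖x‖ ^ 2) := by nlinarith [sq_nonneg (‖x‖ - 1)]
  have h3 : (1 + ‖x‖) * ‖dl l v x‖ * NS l.length v x ≤ ‖dl l v x‖ ^ 2 +
      2 * (1 + ‖x‖ ^ 2) * NS l.length v x ^ 2 := by
    have := mul_le_mul_of_nonneg_right h2 (sq_nonneg (NS l.length v x))
    nlinarith [sq_nonneg (‖dl l v x‖ - (1 + ‖x‖) * NS l.length v x),
      sq_nonneg (‖dl l v x‖), sq_nonneg ((1 + ‖x‖) * NS l.length v x)]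
  have h4 := mul_le_mul_of_nonneg_left h3 r0.le
  nlinarith

lemma NN_bd {ι : Type} {S : Set ι} {u : ι → Ed d → ℂ} {w : ι → Ed d → ℝ} {s : ℕ}
    (h : ∀ m ≤ s, Bd S w m u) : ∃ C : ℝ, 0 ≤ C ∧ ∀ i ∈ S, ∀ x, NN s (u i) x ≤ C * w i x := by
  choose! C hC b using h
  refine ⟨∑ m ∈ Finset.range (s + 1), C m,
    Finset.sum_nonneg fun m hm => hC m (by simp at hm; omega), fun i hi x => ?_⟩
  unfold NN
  rw [Finset.sum_mul]
  exact Finset.sum_le_sum fun m hm => b m (by simp at hm; omega) i hi x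

/-- A bounded solution of `∂ₜ ψ = i κ Δψ - i U ψ` on `[0, T]`, with bounded `L²` norms, where the
potential `U` is real and subquadratic. -/
structure Sch (T κ : ℝ) (U : ℝ → Ed d → ℝ) (ψ : ℝ → Ed d → ℂ) : Prop where
  td : TD T ψ (fun t x => (κ * I : ℂ) * lap d (ψ t) x + (-I) * (U t x • ψ t x))
  bb : BB (Icc 0 T) ψ
  sU : Sm (Icc 0 T) U
  bU : ∀ n, Bd (Icc 0 T) (pw 1) (n + 1) U
  pU : PG (Icc 0 T) U
  l2 : ∀ s, ∃ M : ℝ, 0 ≤ M ∧ ∀ t ∈ Icc (0 : ℝ) T,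
    Integrable (Q s (ψ t)) ∧ ∫ x, Q s (ψ t) x ≤ M

variable {T κ : ℝ} {U : ℝ → Ed d → ℝ} {ψ : ℝ → Ed d → ℂ}

lemma Sch.pg (h : Sch T κ U ψ) : PG (Icc 0 T)
    (fun t x => (κ * I : ℂ) * lap d (ψ t) x + (-I) * (U t x • ψ t x)) := by
  have h1 : PG (Icc 0 T) (fun t x => (κ * I : ℂ) * lap d (ψ t) x) :=
    h.bb.toPG.lap.clm (ContinuousLinearMap.mul ℝ ℂ (κ * I))
  have h2 : PG (Icc 0 T) (fun t x => U t x • ψ t x) :=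
    h.pU.bilin (ContinuousLinearMap.lsmul ℝ ℝ) h.bb.toPG
  exact h1.add (h2.clm (ContinuousLinearMap.mul ℝ ℂ (-I)))

/-- After differentiation, the potential only contributes its commutators to the energy. -/
lemma Sch.rp_bound (h : Sch T κ U ψ) (l : List (Fin d)) : ∃ C : ℝ, 0 ≤ C ∧ ∀ t ∈ Icc (0 : ℝ) T,
    ∀ x, |rp (dl l (ψ t) x) (dl l (fun x => (κ * I : ℂ) * lap d (ψ t) x +
      (-I) * (U t x • ψ t x)) x) - κ * rp (dl l (ψ t) x) (I * lap d (dl l (ψ t)) x)| ≤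
      C * ((1 + ‖x‖) * ‖dl l (ψ t) x‖ * NS l.length (ψ t) x) := by
  obtain ⟨C, hC, b⟩ := comm_mul (S := Icc 0 T) (ω := pw 1)
    (fun i _ x => (pw_pos 1 i x).le) h.sU h.bU l
  refine ⟨C, hC, fun t ht x => ?_⟩
  have sψ := h.bb.1 t ht
  have sm : ContDiff ℝ (⊤ : ℕ∞) (fun x => U t x • ψ t x) := (h.sU t ht).smul sψ
  rw [dl_add (contDiff_const.mul (lap_smooth sψ)) (contDiff_const.mul sm),
    dl_mul (lap_smooth sψ), dl_mul sm, dl_lap sψ, rp_add]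
  have e1 : (κ * I : ℂ) * lap d (dl l (ψ t)) x = (κ : ℂ) * (I * lap d (dl l (ψ t)) x) := by ring
  rw [e1, rp_smul, add_sub_cancel_left]
  set u := dl l (ψ t) x with hu
  set R := dl l (fun x => U t x • ψ t x) x - U t x • u with hR
  have e2 : (-I) * dl l (fun x => U t x • ψ t x) x = ((-(U t x) : ℝ) : ℂ) * (I * u) + (-I) * R := by
    rw [hR, real_smul]; push_cast; ring
  rw [e2, rp_add, rp_smul, rp_I, mul_zero, zero_add]
  have q := b t ht (ψ t) sψ x
  have q1 := rp_le u (-I * R)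
  have q2 : ‖-I * R‖ = ‖R‖ := by simp
  rw [q2] at q1
  refine q1.trans ((mul_le_mul_of_nonneg_left q (norm_nonneg u)).trans (le_of_eq ?_))
  simp only [pw, pow_one]; ring

/-- The weighted energy satisfies a differential inequality with a constant which does not depend
on the truncation parameter `δ`. -/
lemma Sch.energy (h : Sch T κ U ψ) (k : ℕ) : ∃ N : ℕ, ∃ C : ℝ, 0 ≤ C ∧ ∀ δ : ℝ, 0 < δ → δ ≤ 1 →
    (∀ t ∈ Icc (0 : ℝ) T, Integrable (Dn δ N k (ψ t))) ∧
    ContinuousOn (fun t => ∫ x, Dn δ N k (ψ t) x) (Icc 0 T) ∧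
    ∃ F' : ℝ → ℝ, ∀ t ∈ Ioo (0 : ℝ) T,
      HasDerivAt (fun t => ∫ x, Dn δ N k (ψ t) x) (F' t) t ∧
      F' t ≤ C * (∫ x, Dn δ N k (ψ t) x) + C := by
  set g : ℝ → Ed d → ℂ := fun t x => (κ * I : ℂ) * lap d (ψ t) x + (-I) * (U t x • ψ t x) with hg
  have pg : PG (Icc 0 T) g := h.pg
  obtain ⟨Cψ, hCψ, bψ⟩ := NN_bd (s := k + 2) fun m _ => h.bb.2 m
  obtain ⟨r, hr⟩ := pg.exists_le k
  obtain ⟨Cg, hCg, bg⟩ := NN_bd hr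
  choose Cr hCr bCr using fun l => h.rp_bound l
  obtain ⟨Cc, hCc, bCc⟩ := comm_le d k
  obtain ⟨M, hM, bM⟩ := h.l2 (k + 1)
  simp only [one, mul_one, pw] at bψ bg
  set N := (k + 1) + r + (d + 1) with hN
  -- pointwise constants for each word, and their sum
  set Kl : List (Fin d) → ℝ := fun l =>
    2 * |κ| * (d * ((k + 1 + N) * 2)) + 2 * (Cr l * Cc) with hKl
  have hKl0 : ∀ l, 0 ≤ Kl l := fun l => by have := hCr l; simp only [hKl]; positivity
  set K := ∑ l ∈ W d k, Kl l with hK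
  have hK0 : 0 ≤ K := Finset.sum_nonneg fun l _ => hKl0 l
  refine ⟨N, K * (1 + M), by positivity, fun δ hδ h1 => ?_⟩
  have sψ : ∀ t ∈ Icc (0 : ℝ) T, ContDiff ℝ (⊤ : ℕ∞) (ψ t) := h.bb.1
  have sdl : ∀ l, ∀ t ∈ Icc (0 : ℝ) T, ContDiff ℝ (⊤ : ℕ∞) (dl l (ψ t)) := fun l t ht =>
    dl_smooth (sψ t ht) l
  have sgl : ∀ l, ∀ t ∈ Icc (0 : ℝ) T, ContDiff ℝ (⊤ : ℕ∞) (dl l (g t)) := fun l t ht =>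
    dl_smooth (pg.1 t ht) l
  -- the contribution of one word to the energy and its time derivative
  set q : List (Fin d) → ℝ → Ed d → ℝ := fun l t x =>
    rho δ N (k + 1 - l.length) x * ‖dl l (ψ t) x‖ ^ 2 with hq
  set q' : List (Fin d) → ℝ → Ed d → ℝ := fun l t x =>
    rho δ N (k + 1 - l.length) x * (2 * rp (dl l (ψ t) x) (dl l (g t) x)) with hq'
  have td : ∀ l, TD T (q l) (q' l) := by
    intro l
    have t1 := h.td.dl h.bb.1 pg l
    refine ⟨fun x => continuousOn_const.mul ((t1.ct x).norm.pow 2), fun x =>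
      continuousOn_const.mul (continuousOn_const.mul (ContinuousOn.inner (𝕜 := ℝ) (t1.ct x) (t1.cg x))), ?_⟩
    intro t ht x
    exact ((t1.hd t ht x).norm_sq).const_mul _
  have main : ∀ l ∈ W d k, (∀ t ∈ Icc (0 : ℝ) T, Integrable (q l t)) ∧
      ContinuousOn (fun t => ∫ x, q l t x) (Icc 0 T) ∧
      ∀ t ∈ Ioo (0 : ℝ) T, HasDerivAt (fun t => ∫ x, q l t x) (∫ x, q' l t x) t ∧
        ((∀ l' ∈ W d k, Integrable (q l' t)) →
          ∫ x, q' l t x ≤ Kl l * ((∫ x, Dn δ N k (ψ t) x) + M)) := by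
    intro l hl
    have hl' := mem_W.1 hl
    set j := k + 1 - l.length with hj
    have sρ : ContDiff ℝ (⊤ : ℕ∞) (rho (d := d) δ N j) := rho_smooth hδ j
    obtain ⟨A, hA, bA⟩ := rho_dec (d := d) (N := N) hδ h1 (j := j) (r := r) (by omega)
    have hdl : ∀ t ∈ Icc (0 : ℝ) T, ∀ x, ‖dl l (ψ t) x‖ ≤ Cψ := fun t ht x =>
      (dl_le_NN (sψ t ht) (show l.length ≤ k + 2 by omega) x).trans (bψ t ht x)
    have hdg : ∀ t ∈ Icc (0 : ℝ) T, ∀ x, ‖dl l (g t) x‖ ≤ Cg * (1 + ‖x‖) ^ r := fun t ht x =>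
      (dl_le_NN (pg.1 t ht) hl' x).trans (bg t ht x)
    have hw1 : ∀ x : Ed d, 1 ≤ (1 + ‖x‖) ^ r := fun x => one_le_pow₀ (one_le_w x)
    have bq : ∀ t ∈ Icc (0 : ℝ) T, ∀ x, ‖q l t x‖ ≤ (A * (Cψ ^ 2 + 2 * (Cψ * Cg))) * dec x := by
      intro t ht x
      have r0 := rho_pos (N := N) hδ j x
      simp only [hq]
      rw [Real.norm_of_nonneg (by positivity)]
      calc _ ≤ (rho δ N j x * (1 + ‖x‖) ^ r) * Cψ ^ 2 := by
            refine mul_le_mul (le_mul_of_one_le_right r0.le (hw1 x)) ?_ (sq_nonneg _)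
              (mul_nonneg r0.le (zero_le_one.trans (hw1 x)))
            exact pow_le_pow_left₀ (norm_nonneg _) (hdl t ht x) 2
        _ ≤ (A * dec x) * Cψ ^ 2 := mul_le_mul_of_nonneg_right (bA x).1 (sq_nonneg _)
        _ ≤ _ := by
            have := mul_nonneg (mul_nonneg hA (dec_pos x).le) (mul_nonneg hCψ hCg)
            linarith
    have bq' : ∀ t ∈ Icc (0 : ℝ) T, ∀ x, ‖q' l t x‖ ≤ (A * (Cψ ^ 2 + 2 * (Cψ * Cg))) * dec x := by
      intro t ht x
      have r0 := rho_pos (N := N) hδ j x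
      simp only [hq']
      rw [norm_mul, norm_mul, Real.norm_of_nonneg r0.le]
      have e1 : ‖rp (dl l (ψ t) x) (dl l (g t) x)‖ ≤ Cψ * (Cg * (1 + ‖x‖) ^ r) :=
        (rp_le _ _).trans (mul_le_mul (hdl t ht x) (hdg t ht x) (norm_nonneg _) hCψ)
      calc _ ≤ rho δ N j x * (2 * (Cψ * (Cg * (1 + ‖x‖) ^ r))) := by
            rw [Real.norm_of_nonneg (zero_le_two : (0 : ℝ) ≤ 2)]
            gcongr
        _ = (rho δ N j x * (1 + ‖x‖) ^ r) * (2 * (Cψ * Cg)) := by ring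
        _ ≤ (A * dec x) * (2 * (Cψ * Cg)) :=
            mul_le_mul_of_nonneg_right (bA x).1 (by positivity)
        _ ≤ _ := by
            have := mul_nonneg (mul_nonneg hA (dec_pos x).le) (sq_nonneg Cψ)
            linarith
    have cq : ∀ t ∈ Icc (0 : ℝ) T, Continuous (q l t) := fun t ht =>
      sρ.continuous.mul ((sdl l t ht).continuous.norm.pow 2)
    have cq' : ∀ t ∈ Icc (0 : ℝ) T, Continuous (q' l t) := fun t ht =>
      sρ.continuous.mul (continuous_const.mul
        (rp_smooth (sdl l t ht) (sgl l t ht)).continuous)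
    obtain ⟨I1, I2⟩ := int_TD (td l) cq cq' bq bq'
    refine ⟨fun t ht => integrable_of_dec (cq t ht) (bq t ht), I1, fun t ht => ⟨I2 t ht, ?_⟩⟩
    intro hint
    have ht' := Ioo_subset_Icc_self ht
    have iD : Integrable (Dn δ N k (ψ t)) := integrable_finsetSum _ hint
    have iQ := (bM t ht').1
    obtain ⟨f1, f2, f3⟩ := schr_flux (ρ := rho δ N j) (u := dl l (ψ t)) sρ (sdl l t ht')
      (C := 2 * A * (3 * Cψ) ^ 2) (fun x => by
        have n1 : NN 2 (dl l (ψ t)) x ≤ 3 * Cψ := by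
          have n2 := NN_dl_le (sψ t ht') hl' 2 x
          have n3 := bψ t ht' x
          push_cast at n2
          linarith
        have n4 : NN 2 (dl l (ψ t)) x ^ 2 ≤ (3 * Cψ) ^ 2 :=
          pow_le_pow_left₀ (NN_nonneg _ _ _) n1 2
        have r0 := rho_pos (N := N) hδ j x
        rw [abs_of_pos r0]
        have n5 := (le_mul_of_one_le_right r0.le (hw1 x)).trans (bA x).1
        have n6 := (le_mul_of_one_le_right (norm_nonneg (fderiv ℝ (rho δ N j) x)) (hw1 x)).trans
          (bA x).2
        calc _ ≤ (A * dec x + A * dec x) * (3 * Cψ) ^ 2 :=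
              mul_le_mul (add_le_add n5 n6) n4 (sq_nonneg _)
                (by have := mul_nonneg hA (dec_pos x).le; linarith)
          _ = _ := by ring)
    set fl : Ed d → ℝ := fun x => ∑ i, fderiv ℝ (rho δ N j) x (bv i) *
      rp (dl l (ψ t) x) (I * fderiv ℝ (dl l (ψ t)) x (bv i)) with hfl
    set m : Ed d → ℝ := fun x => rho δ N j x * rp (dl l (ψ t) x) (I * lap d (dl l (ψ t)) x) with hm
    have iq' : Integrable (q' l t) := integrable_of_dec (cq' t ht') (bq' t ht')
    have irem : Integrable (fun x => q' l t x - 2 * κ * m x) := iq'.sub (f1.const_mul _)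
    have e1 : ∫ x, q' l t x = ∫ x, ((q' l t x - 2 * κ * m x) - 2 * κ * fl x) := by
      have i1 : ∫ x, ((q' l t x - 2 * κ * m x) - 2 * κ * fl x) =
          (∫ x, (q' l t x - 2 * κ * m x)) - ∫ x, 2 * κ * fl x :=
        integral_sub irem (f2.const_mul _)
      have i2 : ∫ x, (q' l t x - 2 * κ * m x) = (∫ x, q' l t x) - ∫ x, 2 * κ * m x :=
        integral_sub iq' (f1.const_mul _)
      rw [i1, i2, integral_const_mul, integral_const_mul, f3]; ring
    rw [e1]
    have e2 : Kl l * ((∫ x, Dn δ N k (ψ t) x) + ∫ x, Q (k + 1) (ψ t) x) =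
        ∫ x, Kl l * (Dn δ N k (ψ t) x + Q (k + 1) (ψ t) x) := by
      rw [integral_const_mul]
      have : ∫ x, (Dn δ N k (ψ t) x + Q (k + 1) (ψ t) x) =
          (∫ x, Dn δ N k (ψ t) x) + ∫ x, Q (k + 1) (ψ t) x := integral_add iD iQ
      rw [this]
    refine le_trans (b := Kl l * ((∫ x, Dn δ N k (ψ t) x) + ∫ x, Q (k + 1) (ψ t) x)) ?_
      (mul_le_mul_of_nonneg_left (by have := (bM t ht').2; linarith) (hKl0 l))
    rw [e2]
    refine integral_mono (irem.sub (f2.const_mul _)) ((iD.add iQ).const_mul _) fun x => ?_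
    have hD := Dn_nonneg hδ N k (ψ t) x
    have hQ := Q_nonneg (k + 1) (ψ t) x
    have r0 := rho_pos (N := N) hδ j x
    have p1 : |fl x| ≤ _ := flux_le hδ h1 N hl (ψ t) x
    have p2 := bCr l t ht' x
    have p3 := bCc (ψ t) (sψ t ht') δ hδ N l hl x
    have p4 : q' l t x - 2 * κ * m x = 2 * (rho δ N j x * (rp (dl l (ψ t) x) (dl l (g t) x) -
        κ * rp (dl l (ψ t) x) (I * lap d (dl l (ψ t)) x))) := by
      simp only [hq', hm]; ring
    have p5 : rho δ N j x * (rp (dl l (ψ t) x) (dl l (g t) x) -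
        κ * rp (dl l (ψ t) x) (I * lap d (dl l (ψ t)) x)) ≤ Cr l * (Cc * Dn δ N k (ψ t) x) :=
      calc _ ≤ rho δ N j x * (Cr l * ((1 + ‖x‖) * ‖dl l (ψ t) x‖ * NS l.length (ψ t) x)) :=
            mul_le_mul_of_nonneg_left ((le_abs_self _).trans p2) r0.le
        _ = Cr l * (rho δ N j x * ((1 + ‖x‖) * ‖dl l (ψ t) x‖ * NS l.length (ψ t) x)) := by ring
        _ ≤ _ := mul_le_mul_of_nonneg_left p3 (hCr l)
    have p6 : -(2 * κ * fl x) ≤ 2 * |κ| * (d * ((k + 1 + N) *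
        (2 * (Dn δ N k (ψ t) x + Q (k + 1) (ψ t) x)))) := by
      refine (neg_le_abs _).trans ?_
      rw [abs_mul, abs_mul, abs_two]
      exact mul_le_mul_of_nonneg_left p1 (by positivity)
    have p7 : 0 ≤ Cr l * Cc * Q (k + 1) (ψ t) x := by have := hCr l; positivity
    change (q' l t x - 2 * κ * m x) - 2 * κ * fl x ≤
      Kl l * (Dn δ N k (ψ t) x + Q (k + 1) (ψ t) x)
    rw [p4]
    have p8 : Kl l * (Dn δ N k (ψ t) x + Q (k + 1) (ψ t) x) =
        2 * |κ| * (d * ((k + 1 + N) * (2 * (Dn δ N k (ψ t) x + Q (k + 1) (ψ t) x)))) +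
        2 * (Cr l * (Cc * Dn δ N k (ψ t) x)) + 2 * (Cr l * Cc * Q (k + 1) (ψ t) x) := by
      simp only [hKl]; ring
    rw [p8]
    linarith
  have esum : ∀ t ∈ Icc (0 : ℝ) T, ∫ x, Dn δ N k (ψ t) x = ∑ l ∈ W d k, ∫ x, q l t x :=
    fun t ht => integral_finsetSum _ fun l hl => (main l hl).1 t ht
  refine ⟨fun t ht => integrable_finsetSum _ fun l hl => (main l hl).1 t ht, ?_,
    fun t => ∑ l ∈ W d k, ∫ x, q' l t x, fun t ht => ⟨?_, ?_⟩⟩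
  · exact (continuousOn_finsetSum _ fun l hl => (main l hl).2.1).congr esum
  · have hs : HasDerivAt (fun t => ∑ l ∈ W d k, ∫ x, q l t x) (∑ l ∈ W d k, ∫ x, q' l t x) t :=
      HasDerivAt.fun_sum fun l hl => ((main l hl).2.2 t ht).1
    refine hs.congr_of_eventuallyEq ?_
    filter_upwards [Icc_mem_nhds ht.1 ht.2] with s hs
    exact esum s hs
  · have ht' := Ioo_subset_Icc_self ht
    have hF : 0 ≤ ∫ x, Dn δ N k (ψ t) x := integral_nonneg fun x => Dn_nonneg hδ N k _ x
    refine (Finset.sum_le_sum fun l hl => ((main l hl).2.2 t ht).2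
      fun l' hl' => (main l' hl').1 t ht').trans ?_
    rw [← Finset.sum_mul, ← hK]
    nlinarith [mul_nonneg hK0 hM, mul_nonneg (mul_nonneg hK0 hM) hF]

end Decay

end WKB

namespace WKB

/-! ### Decay of solutions at fixed parameter: conclusion -/

section DecayEnd

variable {d : ℕ} {T κ : ℝ} {U : ℝ → Ed d → ℝ} {ψ : ℝ → Ed d → ℂ}

/-- For a Schwartz function the weighted energies are bounded independently of the truncation. -/
lemma Dn_init {u : Ed d → ℂ} (h : US (univ : Set Unit) (fun _ => u)) (N k : ℕ) :
    ∃ M : ℝ, 0 ≤ M ∧ ∀ δ : ℝ, 0 < δ → ∫ x, Dn δ N k u x ≤ M := by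
  obtain ⟨C, hC, b⟩ := NN_bd (s := k) fun m _ => h.2 m ((k + 1) + (d + 1))
  have hd : 0 ≤ ∫ x : Ed d, dec x := integral_nonneg fun x => (dec_pos x).le
  refine ⟨(W d k).card * C ^ 2 * ∫ x : Ed d, dec x, by positivity, fun δ hδ => ?_⟩
  rw [← integral_const_mul]
  refine integral_mono_of_nonneg (Eventually.of_forall fun x => Dn_nonneg hδ N k u x)
    (integrable_dec.const_mul _) (Eventually.of_forall fun x => ?_)
  change Dn δ N k u x ≤ _
  refine (Finset.sum_le_card_nsmul _ _ (C ^ 2 * dec x) fun l hl => ?_).trans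
    (by rw [nsmul_eq_mul]; linarith)
  have hl' := mem_W.1 hl
  have h1 : ‖dl l u x‖ ≤ C * dw ((k + 1) + (d + 1)) () x :=
    (dl_le_NN (h.1 () (mem_univ _)) hl' x).trans (b () (mem_univ _) x)
  set p : ℝ := 1 + ‖x‖ with hp
  have p1 : 1 ≤ p := one_le_w x
  have p0 : 0 < p := by linarith
  have h2 : rho δ N (k + 1 - l.length) x ≤ p ^ (2 * (k + 1)) := by
    refine (rho_mono hδ (show k + 1 - l.length ≤ k + 1 by omega) x).trans
      ((rho_le_pow hδ (k + 1) x).trans ?_)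
    rw [pow_mul]
    refine pow_le_pow_left₀ (by positivity) ?_ _
    rw [hp]; nlinarith [norm_nonneg x]
  calc rho δ N (k + 1 - l.length) x * ‖dl l u x‖ ^ 2
      ≤ p ^ (2 * (k + 1)) * (C * (p ^ ((k + 1) + (d + 1)))⁻¹) ^ 2 := by
        refine mul_le_mul h2 (pow_le_pow_left₀ (norm_nonneg _) h1 2) (sq_nonneg _) (by positivity)
    _ = C ^ 2 * (p ^ (2 * (d + 1)))⁻¹ := by
        have e : (p ^ ((k + 1) + (d + 1))) ^ 2 = p ^ (2 * (k + 1)) * p ^ (2 * (d + 1)) := by ring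
        rw [mul_pow, inv_pow, e]
        field_simp
    _ ≤ C ^ 2 * dec x := by
        refine mul_le_mul_of_nonneg_left ?_ (sq_nonneg _)
        unfold dec
        exact inv_anti₀ (by positivity) (pow_le_pow_right₀ p1 (by omega))

/-- The Schwartz property propagates along the Schrödinger flow with a subquadratic potential. The
truncation parameter is chosen as `(1 + |x₀|)⁻²`, so that the truncated weight is comparable with
the full one on the unit ball around `x₀`. -/
lemma Sch.us (hT : 0 ≤ T) (h : Sch T κ U ψ) (h0 : US (univ : Set Unit) (fun _ => ψ 0)) :
    US (Icc 0 T) ψ := by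
  refine ⟨h.bb.1, fun n J => ?_⟩
  obtain ⟨C1, hC1, b1⟩ := sobolev_loc d n
  set m := n + 2 * (d + 1) with hm
  obtain ⟨C2, hC2, b2⟩ := NN_sq_le_Q d m
  set k := m + J with hk
  obtain ⟨N, C, hC, en⟩ := h.energy k
  obtain ⟨M, hM, bM⟩ := Dn_init h0 N k
  set B := (M + C * T) * Real.exp (C * T) with hB
  have hB0 : 0 ≤ B := by positivity
  have bF : ∀ δ : ℝ, 0 < δ → δ ≤ 1 → ∀ t ∈ Icc (0 : ℝ) T,
      Integrable (Dn δ N k (ψ t)) ∧ ∫ x, Dn δ N k (ψ t) x ≤ B := by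
    intro δ hδ h1 t ht
    obtain ⟨e1, e2, F', e3⟩ := en δ hδ h1
    refine ⟨e1 t ht, (gron hC hC e2 (fun t ht => (e3 t ht).1) (bM δ hδ)
      (fun t ht => (e3 t ht).2) ht).trans ?_⟩
    have := ht.1; have := ht.2
    rw [hB]
    gcongr
  set K := C1 * (C2 * (8 ^ J * 2 ^ N * B)) with hK
  have hK0 : 0 ≤ K := by positivity
  refine ⟨√K, Real.sqrt_nonneg _, fun t ht x₀ => ?_⟩
  have sψ := h.bb.1 t ht
  set p : ℝ := 1 + ‖x₀‖ with hp
  have p1 : 1 ≤ p := one_le_w x₀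
  have p0 : 0 < p := by linarith
  set δ : ℝ := (p ^ 2)⁻¹ with hδ'
  have hδ : 0 < δ := by positivity
  have h1 : δ ≤ 1 := inv_le_one_of_one_le₀ (one_le_pow₀ p1)
  obtain ⟨iD, bD⟩ := bF δ hδ h1 t ht
  have key : ∀ x ∈ Metric.closedBall x₀ 1,
      (p ^ 2) ^ J * NN m (ψ t) x ^ 2 ≤ C2 * (8 ^ J * 2 ^ N * Dn δ N k (ψ t) x) := by
    intro x hx
    have hx1 : ‖x - x₀‖ ≤ 1 := by simpa [dist_eq_norm] using hx
    have hx2 : ‖x‖ ≤ p := by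
      have := norm_le_norm_add_norm_sub' x x₀; rw [hp]; linarith
    have hx3 : p ≤ 2 + ‖x‖ := by
      have := norm_le_norm_add_norm_sub' x₀ x; rw [norm_sub_rev] at this; rw [hp]; linarith
    have q1 : 1 + δ * ‖x‖ ^ 2 ≤ 2 := by
      have : δ * ‖x‖ ^ 2 ≤ δ * p ^ 2 := by gcongr
      have e : δ * p ^ 2 = 1 := by rw [hδ']; field_simp
      linarith
    have q2 : p ^ 2 ≤ 8 * (1 + ‖x‖ ^ 2) := by
      nlinarith [norm_nonneg x, sq_nonneg (‖x‖ - 1)]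
    have q3 : ∀ l ∈ W d m, (p ^ 2) ^ J ≤ 8 ^ J * 2 ^ N * rho δ N (k + 1 - l.length) x := by
      intro l hl
      have hl' := mem_W.1 hl
      have r1 : (p ^ 2) ^ J ≤ 8 ^ J * (1 + ‖x‖ ^ 2) ^ J := by
        rw [← mul_pow]; exact pow_le_pow_left₀ (by positivity) q2 J
      have r2 : (1 + ‖x‖ ^ 2) ^ J ≤ 2 ^ N * rho δ N J x := by
        unfold rho
        have r3 : 1 ≤ 2 ^ N * ((1 + δ * ‖x‖ ^ 2) ^ N)⁻¹ := by
          rw [← div_eq_mul_inv, one_le_div (by positivity)]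
          exact pow_le_pow_left₀ (by positivity) q1 N
        calc (1 + ‖x‖ ^ 2) ^ J = (1 + ‖x‖ ^ 2) ^ J * 1 := by ring
          _ ≤ (1 + ‖x‖ ^ 2) ^ J * (2 ^ N * ((1 + δ * ‖x‖ ^ 2) ^ N)⁻¹) := by gcongr
          _ = _ := by ring
      have r4 := rho_mono (N := N) hδ (show J ≤ k + 1 - l.length by omega) x
      calc (p ^ 2) ^ J ≤ 8 ^ J * (1 + ‖x‖ ^ 2) ^ J := r1
        _ ≤ 8 ^ J * (2 ^ N * rho δ N J x) := by gcongr
        _ ≤ 8 ^ J * (2 ^ N * rho δ N (k + 1 - l.length) x) := by gcongr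
        _ = _ := by ring
    have q4 : (p ^ 2) ^ J * Q m (ψ t) x ≤ 8 ^ J * 2 ^ N * Dn δ N k (ψ t) x := by
      unfold Q Dn
      rw [Finset.mul_sum, Finset.mul_sum]
      refine (Finset.sum_le_sum fun l hl => ?_).trans
        (Finset.sum_le_sum_of_subset_of_nonneg (s := W d m) (fun l hl => mem_W.2
          ((mem_W.1 hl).trans (by omega))) fun l _ _ => ?_)
      · rw [← mul_assoc]
        exact mul_le_mul_of_nonneg_right (q3 l hl) (sq_nonneg _)
      · have := rho_pos (N := N) hδ (k + 1 - l.length) x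
        positivity
    calc (p ^ 2) ^ J * NN m (ψ t) x ^ 2 ≤ (p ^ 2) ^ J * (C2 * Q m (ψ t) x) :=
          mul_le_mul_of_nonneg_left (b2 _ sψ x) (by positivity)
      _ = C2 * ((p ^ 2) ^ J * Q m (ψ t) x) := by ring
      _ ≤ _ := mul_le_mul_of_nonneg_left q4 hC2
  have i1 : IntegrableOn (fun x => C2 * (8 ^ J * 2 ^ N * Dn δ N k (ψ t) x))
      (Metric.closedBall x₀ 1) := ((iD.const_mul _).const_mul _).integrableOn
  have i2 : (p ^ 2) ^ J * ∫ x in Metric.closedBall x₀ 1, NN m (ψ t) x ^ 2 ≤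
      C2 * (8 ^ J * 2 ^ N * B) := by
    rw [← integral_const_mul]
    refine (setIntegral_mono_on (g := fun x => C2 * (8 ^ J * 2 ^ N * Dn δ N k (ψ t) x)) ?_ i1
      Metric.isClosed_closedBall.measurableSet key).trans ?_
    · exact (continuous_const.mul ((NN_continuous sψ _).pow 2)).continuousOn.integrableOn_compact
        (isCompact_closedBall x₀ 1)
    · refine (setIntegral_le_integral ((iD.const_mul _).const_mul _)
        (Eventually.of_forall fun x => ?_)).trans ?_
      · have := Dn_nonneg hδ N k (ψ t) x
        change 0 ≤ C2 * (8 ^ J * 2 ^ N * Dn δ N k (ψ t) x)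
        positivity
      · rw [integral_const_mul, integral_const_mul]
        gcongr
  have i3 : (NN n (ψ t) x₀ * p ^ J) ^ 2 ≤ K := by
    have e : (p ^ J) ^ 2 = (p ^ 2) ^ J := by rw [← pow_mul, ← pow_mul, mul_comm]
    calc (NN n (ψ t) x₀ * p ^ J) ^ 2 = (p ^ 2) ^ J * NN n (ψ t) x₀ ^ 2 := by
          rw [mul_pow, e, mul_comm]
      _ ≤ (p ^ 2) ^ J * (C1 * ∫ x in Metric.closedBall x₀ 1, NN m (ψ t) x ^ 2) :=
          mul_le_mul_of_nonneg_left (b1 _ sψ x₀) (by positivity)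
      _ = C1 * ((p ^ 2) ^ J * ∫ x in Metric.closedBall x₀ 1, NN m (ψ t) x ^ 2) := by ring
      _ ≤ K := mul_le_mul_of_nonneg_left i2 hC1
  have i4 : NN n (ψ t) x₀ * p ^ J ≤ √K := Real.le_sqrt_of_sq_le i3
  refine (le_NN (le_refl n) (ψ t) x₀).trans ?_
  change _ ≤ √K * (p ^ J)⁻¹
  rw [← div_eq_mul_inv, le_div_iff₀ (by positivity)]
  exact i4

end DecayEnd

end WKB

namespace WKB

/-! ### The exact solution at fixed parameter is Schwartz -/

section Admissible

variable {d : ℕ} {T : ℝ}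

lemma eLpNorm_two {F : Type} [NormedAddCommGroup F] {f : Ed d → F} (hf : MemLp f 2 volume) :
    eLpNorm f 2 volume = ENNReal.ofReal (√(∫ x, ‖f x‖ ^ 2)) := by
  rw [hf.eLpNorm_eq_integral_rpow_norm (by simp) (by simp), Real.sqrt_eq_rpow]
  simp

/-- A unimodular exponential with a phase of polynomial growth has polynomial growth. -/
lemma PG.exp {ι : Type} {S : Set ι} {θ : ι → Ed d → ℝ} (h : PG S θ) :
    PG S (fun i x => cexp (I * (θ i x : ℂ))) := by
  set e : ι → Ed d → ℂ := fun i x => cexp (I * (θ i x : ℂ)) with he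
  have se : Sm S e := fun i hi =>
    (contDiff_const.mul (ofRealCLM.contDiff.comp (h.1 i hi))).cexp
  set θ' : ι → Ed d → (Ed d →L[ℝ] ℂ) := fun i x =>
    (ContinuousLinearMap.compL ℝ (Ed d) ℝ ℂ (I • ofRealCLM)) (_root_.fderiv ℝ (θ i) x) with hθ'
  have pθ : PG S θ' := h.fderiv.clm _
  have fe : ∀ i ∈ S, ∀ x, _root_.fderiv ℝ (e i) x =
      ContinuousLinearMap.lsmul ℝ ℂ (e i x) (θ' i x) := by
    intro i hi x
    have h1 : HasFDerivAt (θ i) (_root_.fderiv ℝ (θ i) x) x :=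
      ((h.1.diff hi) x).hasFDerivAt
    have h2 := (((ofRealCLM.hasFDerivAt (x := θ i x)).comp x h1).const_mul I).cexp
    have h3 : HasFDerivAt (e i) _ x := h2
    rw [h3.fderiv]
    ext v
    simp [hθ', he]
  have main : ∀ n, ∀ m ≤ n, ∃ k, Bd S (pw k) m e := by
    intro n
    induction n with
    | zero =>
      intro m hm
      obtain rfl : m = 0 := by omega
      refine ⟨0, 1, zero_le_one, fun i _ x => ?_⟩
      rw [norm_iteratedFDeriv_zero, he]
      simp [Complex.norm_exp, pw]
    | succ n ih =>
      intro m hm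
      rcases Nat.lt_or_ge m (n + 1) with h' | h'
      · exact ih m (by omega)
      obtain rfl : m = n + 1 := by omega
      choose! k hk using ih
      obtain ⟨k', hk'⟩ := pθ.exists_le n
      set K := ∑ m ∈ Finset.range (n + 1), k m with hK
      have hk2 : ∀ m ≤ n, Bd S (pw K) m e := fun m hm => (hk m hm).pw_le
        (Finset.single_le_sum (f := k) (fun _ _ => Nat.zero_le _)
          (Finset.mem_range.2 (Nat.lt_succ_iff.2 hm)))
      refine ⟨K + k', Bd.of_fderiv (Bd.congr ?_ fe)⟩
      refine Bd.bilin (ContinuousLinearMap.lsmul ℝ ℂ) (fun _ => pw K) (fun _ => pw k') se pθ.1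
        hk2 hk' (fun _ _ => ⟨1, zero_le_one, fun i _ x => ⟨(pw_pos _ i x).le, ?_⟩⟩)
      simp [pw, pow_add]
  exact ⟨se, fun n => main n n le_rfl⟩

lemma PG.at {ι : Type} {S : Set ι} {F : Type} [NormedAddCommGroup F] [NormedSpace ℝ F]
    {u : ι → Ed d → F} (h : PG S u) {i : ι} (hi : i ∈ S) :
    PG (univ : Set Unit) (fun _ => u i) :=
  ⟨fun _ _ => h.1 i hi, fun n => (h.2 n).imp fun _ hk => hk.reindex (fun _ => i) fun _ _ => hi⟩

variable {ψ : ℝ → Ed d → ℂ}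

lemma adm_NN (hs : ∀ t, ContDiff ℝ (⊤ : ℕ∞) (ψ t))
    (hb : ∀ n : ℕ, ∃ C : ℝ, ∀ t ∈ Icc (0 : ℝ) T,
      eLpNorm (fun x => iteratedFDeriv ℝ n (ψ t) x) 2 volume ≤ ENNReal.ofReal C) (s : ℕ) :
    ∃ M : ℝ, 0 ≤ M ∧ ∀ t ∈ Icc (0 : ℝ) T, Integrable (fun x => NN s (ψ t) x ^ 2) ∧
      ∫ x, NN s (ψ t) x ^ 2 ≤ M := by
  choose C hC using hb
  have h1 : ∀ n, ∀ t ∈ Icc (0 : ℝ) T, Integrable (fun x => ‖iteratedFDeriv ℝ n (ψ t) x‖ ^ 2) ∧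
      ∫ x, ‖iteratedFDeriv ℝ n (ψ t) x‖ ^ 2 ≤ (max (C n) 0) ^ 2 := by
    intro n t ht
    have hm : AEStronglyMeasurable (fun x => iteratedFDeriv ℝ n (ψ t) x) volume :=
      ((hs t).continuous_iteratedFDeriv (m := n) (mod_cast le_top)).aestronglyMeasurable
    have hL : MemLp (fun x => iteratedFDeriv ℝ n (ψ t) x) 2 volume :=
      ⟨hm, (hC n t ht).trans_lt ENNReal.ofReal_lt_top⟩
    refine ⟨(memLp_two_iff_integrable_sq_norm hm).1 hL, ?_⟩
    have e := hC n t ht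
    rw [eLpNorm_two hL] at e
    have e2 : √(∫ x, ‖iteratedFDeriv ℝ n (ψ t) x‖ ^ 2) ≤ max (C n) 0 := by
      rcases le_or_gt 0 (C n) with h | h
      · exact ((ENNReal.ofReal_le_ofReal_iff h).1 e).trans (le_max_left _ _)
      · rw [ENNReal.ofReal_of_nonpos h.le] at e
        exact (ENNReal.ofReal_eq_zero.1 (le_antisymm e bot_le)).trans (le_max_right _ _)
    exact (Real.sqrt_le_left (le_max_right _ _)).1 e2
  refine ⟨(s + 1) * ∑ n ∈ Finset.range (s + 1), (max (C n) 0) ^ 2, by positivity, fun t ht => ?_⟩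
  have h2 : ∀ x, NN s (ψ t) x ^ 2 ≤
      (s + 1) * ∑ n ∈ Finset.range (s + 1), ‖iteratedFDeriv ℝ n (ψ t) x‖ ^ 2 := fun x => by
    refine (sq_sum_le_card_mul_sum_sq (s := Finset.range (s + 1))
      (f := fun n => ‖iteratedFDeriv ℝ n (ψ t) x‖)).trans (le_of_eq ?_)
    simp
  have h3 : Integrable (fun x => ((s : ℝ) + 1) *
      ∑ n ∈ Finset.range (s + 1), ‖iteratedFDeriv ℝ n (ψ t) x‖ ^ 2) :=
    (integrable_finsetSum _ fun n _ => (h1 n t ht).1).const_mul _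
  have h4 : Integrable (fun x => NN s (ψ t) x ^ 2) := by
    refine h3.mono' ((NN_continuous (hs t) s).pow 2).aestronglyMeasurable
      (Eventually.of_forall fun x => ?_)
    rw [Real.norm_of_nonneg (sq_nonneg _)]
    exact h2 x
  refine ⟨h4, (integral_mono h4 h3 h2).trans ?_⟩
  rw [integral_const_mul, integral_finsetSum _ fun n _ => (h1 n t ht).1]
  gcongr with n hn
  exact (h1 n t ht).2

lemma adm_bb (hs : ∀ t, ContDiff ℝ (⊤ : ℕ∞) (ψ t))
    (hb : ∀ n : ℕ, ∃ C : ℝ, ∀ t ∈ Icc (0 : ℝ) T,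
      eLpNorm (fun x => iteratedFDeriv ℝ n (ψ t) x) 2 volume ≤ ENNReal.ofReal C) :
    BB (Icc 0 T) ψ := by
  refine ⟨fun t _ => hs t, fun n => ?_⟩
  obtain ⟨C, hC, b⟩ := sobolev_loc d n
  obtain ⟨M, hM, bM⟩ := adm_NN (T := T) hs hb (n + 2 * (d + 1))
  refine ⟨√(C * M), Real.sqrt_nonneg _, fun t ht x => ?_⟩
  refine (le_NN le_rfl (ψ t) x).trans ?_
  simp only [one, mul_one]
  refine Real.le_sqrt_of_sq_le ((b _ (hs t) x).trans (mul_le_mul_of_nonneg_left ?_ hC))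
  exact (setIntegral_le_integral (bM t ht).1 (Eventually.of_forall fun x => sq_nonneg _)).trans
    (bM t ht).2

variable {V : ℝ → Ed d → ℝ} {f : ℝ → ℝ}

/-- An admissible solution at fixed `ε` solves a linear Schrödinger equation with the subquadratic
potential `V / ε + f(|ψ|²)`. -/
lemma adm_sch {ε : ℝ} (hε : 0 < ε) (hf : ContDiff ℝ (⊤ : ℕ∞) f) (hV : JS V)
    (bV : ∀ n, 2 ≤ n → Bd (Icc 0 T) one n V)
    (hc : Continuous (fun p : ℝ × Ed d => ψ p.1 p.2))
    (h1 : ∀ x, ContDiff ℝ 1 (fun t => ψ t x))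
    (hs : ∀ t, ContDiff ℝ (⊤ : ℕ∞) (ψ t))
    (hb : ∀ n : ℕ, ∃ C : ℝ, ∀ t ∈ Icc (0 : ℝ) T,
      eLpNorm (fun x => iteratedFDeriv ℝ n (ψ t) x) 2 volume ≤ ENNReal.ofReal C)
    (heq : ∀ t ∈ Icc (0 : ℝ) T, ∀ x : Ed d,
      I * (ε : ℂ) * deriv (fun s => ψ s x) t =
        -(((ε : ℂ) ^ 2) / 2) * lap d (ψ t) x + ((V t x : ℝ) : ℂ) * ψ t x +
          (ε : ℂ) * ((f (‖ψ t x‖ ^ 2) : ℝ) : ℂ) * ψ t x) :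
    Sch T (ε / 2) (fun t x => ε⁻¹ * V t x + f (‖ψ t x‖ ^ 2)) ψ := by
  have bb : BB (Icc 0 T) ψ := adm_bb hs hb
  obtain ⟨-, v1, pV⟩ := hV.subquadratic bV
  set N : ℝ → Ed d → ℝ := fun t x => f (‖ψ t x‖ ^ 2) with hN
  have bN : BB (Icc 0 T) N := bb.comp_smooth (g := fun z : ℂ => f (‖z‖ ^ 2))
    (hf.comp (contDiff_norm_sq ℝ))
  set V' : ℝ → Ed d → ℝ := fun t x => ε⁻¹ * V t x with hV'
  have pV' : PG (Icc 0 T) V' := pV.clm (ContinuousLinearMap.mul ℝ ℝ ε⁻¹)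
  have bV' : ∀ n, Bd (Icc 0 T) (pw 1) (n + 1) V' := by
    intro n
    refine Bd.clm pV.1 ?_ (ContinuousLinearMap.mul ℝ ℝ ε⁻¹)
    rcases n with _ | n
    · exact v1
    · exact (bV (n + 2) (by omega)).mono' fun _ _ x => by simp [pw, one]
  have ct : CT T ψ := fun x => (hc.comp (continuous_id.prodMk continuous_const)).continuousOn
  have ctV : CT T V := hV.ct
  have cl : CT T (fun t => lap d (ψ t)) := by
    have c2 := bb.toPG.fderiv.ct_fderiv (bb.toPG.ct_fderiv ct)
    exact (c2.clm (lapL d)).congr fun t ht x => lap_eq (hs t) x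
  refine ⟨⟨ct, fun x => ?_, fun t ht x => ?_⟩, bb, pV'.1.add bN.1, fun n =>
    (bV' n).add pV'.1 bN.1 ((bN.2 (n + 1)).mono' fun _ _ x => by simp [pw, one]),
    pV'.add bN.toPG, fun s => ?_⟩
  · have c1 : ContinuousOn (fun t => ε⁻¹ * V t x + f (‖ψ t x‖ ^ 2)) (Icc 0 T) :=
      (continuousOn_const.mul (ctV x)).add (hf.continuous.comp_continuousOn ((ct x).norm.pow 2))
    exact (continuousOn_const.mul (cl x)).add (continuousOn_const.mul (c1.smul (ct x)))
  · have hd : HasDerivAt (fun s => ψ s x) (deriv (fun s => ψ s x) t) t :=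
      ((h1 x).differentiable (by simp) t).hasDerivAt
    refine hd.congr_deriv ?_
    have e := heq t (Ioo_subset_Icc_self ht) x
    have hε' : (ε : ℂ) ≠ 0 := by exact_mod_cast hε.ne'
    have hI : I * (ε : ℂ) ≠ 0 := mul_ne_zero I_ne_zero hε'
    refine mul_left_cancel₀ hI ?_
    rw [e, real_smul]
    push_cast
    field_simp
    linear_combination (-(ε : ℂ) ^ 2 * lap d (ψ t) x + 2 * ((V t x : ℂ) +
      ε * (f (‖ψ t x‖ ^ 2) : ℂ)) * ψ t x) * I_sq
  · obtain ⟨C, hC, bQ⟩ := Q_le_NN_sq d s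
    obtain ⟨M, hM, bM⟩ := adm_NN (T := T) hs hb s
    refine ⟨C * M, by positivity, fun t ht => ?_⟩
    have iN := (bM t ht).1.const_mul C
    have iQ : Integrable (Q s (ψ t)) := by
      refine iN.mono' (Continuous.aestronglyMeasurable (continuous_finsetSum _ fun l _ =>
        (dl_smooth (hs t) l).continuous.norm.pow 2)) (Eventually.of_forall fun x => ?_)
      rw [Real.norm_of_nonneg (Q_nonneg _ _ _)]
      exact bQ _ (hs t) x
    refine ⟨iQ, (integral_mono iQ iN (bQ _ (hs t))).trans ?_⟩
    rw [integral_const_mul]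
    exact mul_le_mul_of_nonneg_left (bM t ht).2 hC

end Admissible

end WKB

namespace WKB

/-! ### The equation for the remainder -/

section Remainder

variable {d : ℕ} {T : ℝ}

/-- The oscillating factor `exp(-iφ/ε)`. -/
def ph (ε : ℝ) (φ : Ed d → ℝ) (x : Ed d) : ℂ := cexp (I * ((-(φ x / ε) : ℝ) : ℂ))

lemma ph_smooth {φ : Ed d → ℝ} (hφ : ContDiff ℝ (⊤ : ℕ∞) φ) (ε : ℝ) :
    ContDiff ℝ (⊤ : ℕ∞) (ph ε φ) :=
  (contDiff_const.mul (ofRealCLM.contDiff.comp (hφ.div_const ε).neg)).cexp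

lemma norm_ph (ε : ℝ) (φ : Ed d → ℝ) (x : Ed d) : ‖ph ε φ x‖ = 1 := by
  simp [ph, Complex.norm_exp]

lemma pd_ph {φ : Ed d → ℝ} (hφ : ContDiff ℝ (⊤ : ℕ∞) φ) (ε : ℝ) {u : Ed d → ℂ}
    (hu : ContDiff ℝ (⊤ : ℕ∞) u) (x e : Ed d) :
    fderiv ℝ (fun y => ph ε φ y * u y) x e =
      ph ε φ x * fderiv ℝ u x e - (I / ε) * ((fderiv ℝ φ x e : ℝ) : ℂ) * (ph ε φ x * u x) := by
  have h0 : HasFDerivAt φ (fderiv ℝ φ x) x := (hφ.differentiable (by simp) x).hasFDerivAt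
  have h1 : HasFDerivAt (fun y => -(φ y / ε)) (-(ε⁻¹ • fderiv ℝ φ x)) x := by
    have : HasFDerivAt (fun y => -(φ y * ε⁻¹)) (-(ε⁻¹ • fderiv ℝ φ x)) x :=
      (h0.mul_const ε⁻¹).neg
    simp only [div_eq_mul_inv]
    exact this
  have h2 : HasFDerivAt (ph ε φ) _ x :=
    ((ofRealCLM.hasFDerivAt.comp x h1).const_mul I).cexp
  have h3 : HasFDerivAt (fun y => ph ε φ y * u y) _ x :=
    h2.mul (hu.differentiable (by simp) x).hasFDerivAt
  rw [h3.fderiv]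
  simp [ph]
  ring

/-- Conjugating the Laplacian with the oscillating factor produces the transport operator. -/
lemma lap_ph {φ : Ed d → ℝ} (hφ : ContDiff ℝ (⊤ : ℕ∞) φ) {ε : ℝ} (hε : ε ≠ 0) {u : Ed d → ℂ}
    (hu : ContDiff ℝ (⊤ : ℕ∞) u) (x : Ed d) :
    (ε / 2 * I : ℂ) * (ph ε φ x * lap d u x) =
      (ε / 2 * I : ℂ) * lap d (fun y => ph ε φ y * u y) x -
      Tr (gradient φ) (fun y => ph ε φ y * u y) x -
      (I / (2 * ε)) * ((‖gradient φ x‖ ^ 2 : ℝ) : ℂ) * (ph ε φ x * u x) := by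
  set a : Ed d → ℂ := fun y => ph ε φ y * u y with ha
  have sa : ContDiff ℝ (⊤ : ℕ∞) a := (ph_smooth hφ ε).mul hu
  have hε' : (ε : ℂ) ≠ 0 := by exact_mod_cast hε
  have sp : ∀ i, ContDiff ℝ (⊤ : ℕ∞) (fun y => fderiv ℝ φ y (bv i)) := fun i =>
    (hφ.fderiv_right (by simp)).clm_apply contDiff_const
  have e0 : ∀ i, fderiv ℝ (fun y => fderiv ℝ φ y (bv i)) x (bv i) =
      fderiv ℝ (fderiv ℝ φ) x (bv i) (bv i) := by
    intro i
    have hd : DifferentiableAt ℝ (fderiv ℝ φ) x :=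
      ((hφ.fderiv_right (m := ((⊤ : ℕ∞) : WithTop ℕ∞)) (by simp)).differentiable (by simp)) x
    have := ((ContinuousLinearMap.apply ℝ ℝ (bv i)).hasFDerivAt.comp x hd.hasFDerivAt)
    have q : HasFDerivAt (fun y => fderiv ℝ φ y (bv i)) _ x := this
    rw [q.fderiv]; rfl
  have e1 : ∀ i, fderiv ℝ (fun y => fderiv ℝ a y (bv i)) x (bv i) =
      ph ε φ x * fderiv ℝ (fun y => fderiv ℝ u y (bv i)) x (bv i)
      - (2 * (I / ε)) * ((fderiv ℝ φ x (bv i) : ℝ) : ℂ) * fderiv ℝ a x (bv i)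
      - (I / ε) ^ 2 * ((fderiv ℝ φ x (bv i) : ℝ) : ℂ) ^ 2 * a x
      - (I / ε) * ((fderiv ℝ (fderiv ℝ φ) x (bv i) (bv i) : ℝ) : ℂ) * a x := by
    intro i
    have f1 : (fun y => fderiv ℝ a y (bv i)) = fun y => ph ε φ y * fderiv ℝ u y (bv i) -
        (I / ε) * (((fderiv ℝ φ y (bv i) : ℝ) : ℂ) * a y) := by
      funext y; rw [pd_ph hφ ε hu]; ring
    have f2 : fderiv ℝ a x (bv i) = ph ε φ x * fderiv ℝ u x (bv i) -
        (I / ε) * ((fderiv ℝ φ x (bv i) : ℝ) : ℂ) * a x := pd_ph hφ ε hu x _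
    have hu' : ContDiff ℝ (⊤ : ℕ∞) (fun y => fderiv ℝ u y (bv i)) := pd_smooth hu _
    have g1 : HasFDerivAt (fun y => ph ε φ y * fderiv ℝ u y (bv i)) _ x :=
      ((((ph_smooth hφ ε).mul hu').differentiable (by simp)) x).hasFDerivAt
    have g2 : HasFDerivAt (fun y => ((fderiv ℝ φ y (bv i) : ℝ) : ℂ))
        (ofRealCLM.comp (fderiv ℝ (fun y => fderiv ℝ φ y (bv i)) x)) x :=
      ofRealCLM.hasFDerivAt.comp x ((sp i).differentiable (by simp) x).hasFDerivAt
    have g3 : HasFDerivAt a _ x := (sa.differentiable (by simp) x).hasFDerivAt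
    have g4 : HasFDerivAt (fun y => ph ε φ y * fderiv ℝ u y (bv i) -
        (I / ε) * (((fderiv ℝ φ y (bv i) : ℝ) : ℂ) * a y)) _ x :=
      g1.sub ((g2.mul g3).const_mul (I / ε))
    have g5 := pd_ph hφ ε hu' x (bv i)
    rw [f1, g4.fderiv]
    change fderiv ℝ (fun y => ph ε φ y * fderiv ℝ u y (bv i)) x (bv i) -
      (I / ε) * (((fderiv ℝ φ x (bv i) : ℝ) : ℂ) * fderiv ℝ a x (bv i) +
        a x * ((fderiv ℝ (fun y => fderiv ℝ φ y (bv i)) x (bv i) : ℝ) : ℂ)) = _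
    rw [g5, e0 i]
    have f3 : ph ε φ x * fderiv ℝ u x (bv i) = fderiv ℝ a x (bv i) +
        (I / ε) * ((fderiv ℝ φ x (bv i) : ℝ) : ℂ) * a x := by rw [f2]; ring
    rw [f3]; ring
  have e2 : lap d a x = ph ε φ x * lap d u x
      - (2 * (I / ε)) * ∑ i, ((fderiv ℝ φ x (bv i) : ℝ) : ℂ) * fderiv ℝ a x (bv i)
      - (I / ε) ^ 2 * (∑ i, ((fderiv ℝ φ x (bv i) : ℝ) : ℂ) ^ 2) * a x
      - (I / ε) * (∑ i, ((fderiv ℝ (fderiv ℝ φ) x (bv i) (bv i) : ℝ) : ℂ)) * a x := by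
    unfold lap
    simp only [Finset.mul_sum, Finset.sum_mul, ← Finset.sum_sub_distrib]
    refine Finset.sum_congr rfl fun i _ => ?_
    rw [e1 i]
    ring
  have e3 : fderiv ℝ a x (gradient φ x) =
      ∑ i, ((fderiv ℝ φ x (bv i) : ℝ) : ℂ) * fderiv ℝ a x (bv i) := by
    rw [gradient_eq]
    conv_lhs => rw [expand (gr (fderiv ℝ φ x))]
    rw [map_sum]
    refine Finset.sum_congr rfl fun i _ => ?_
    rw [map_smul, gr_apply, real_smul]
  have e4 : ((‖gradient φ x‖ ^ 2 : ℝ) : ℂ) = ∑ i, ((fderiv ℝ φ x (bv i) : ℝ) : ℂ) ^ 2 := by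
    rw [gradient_eq, EuclideanSpace.norm_sq_eq]
    push_cast
    refine Finset.sum_congr rfl fun i _ => ?_
    rw [gr_apply, Real.norm_eq_abs, ← ofReal_pow, sq_abs, ofReal_pow]
  have e5 : Tr (gradient φ) a x = fderiv ℝ a x (gradient φ x) +
      (1 / 2 * ∑ i, ((fderiv ℝ (fderiv ℝ φ) x (bv i) (bv i) : ℝ) : ℂ)) * a x := by
    unfold Tr
    rw [dv_gradient hφ, real_smul]
    push_cast
    rfl
  have ea : ph ε φ x * u x = a x := rfl
  rw [e5, e3, e4, e2, ea]
  field_simp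
  generalize (∑ i, ((fderiv ℝ φ x (bv i) : ℝ) : ℂ) * fderiv ℝ a x (bv i)) = s₁
  generalize (∑ i, ((fderiv ℝ φ x (bv i) : ℝ) : ℂ) ^ 2) = s₂
  generalize (∑ i, ((fderiv ℝ (fderiv ℝ φ) x (bv i) (bv i) : ℝ) : ℂ)) = s₃
  linear_combination (2 * (ε : ℂ) * s₁ + ε * a x * s₃ + I * a x * s₂) * I_sq

/-- The nonlinearity `z ↦ f(|z|²) z`. -/
def nl (f : ℝ → ℝ) (z : ℂ) : ℂ := ((f (‖z‖ ^ 2) : ℝ) : ℂ) * z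

lemma nl_smooth {f : ℝ → ℝ} (hf : ContDiff ℝ (⊤ : ℕ∞) f) : ContDiff ℝ (⊤ : ℕ∞) (nl f) :=
  (ofRealCLM.contDiff.comp (hf.comp (contDiff_norm_sq ℝ))).mul contDiff_id

lemma Tr_add {b : Ed d → Ed d} {u v : Ed d → ℂ} (hu : ContDiff ℝ (⊤ : ℕ∞) u)
    (hv : ContDiff ℝ (⊤ : ℕ∞) v) (x : Ed d) :
    Tr b (fun y => u y + v y) x = Tr b u x + Tr b v x := by
  unfold Tr
  rw [fderiv_fun_add (hu.differentiable (by simp) x) (hv.differentiable (by simp) x), smul_add]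
  simp only [add_apply]
  ring

lemma lap_add {u v : Ed d → ℂ} (hu : ContDiff ℝ (⊤ : ℕ∞) u)
    (hv : ContDiff ℝ (⊤ : ℕ∞) v) (x : Ed d) :
    lap d (fun y => u y + v y) x = lap d u x + lap d v x := by
  simp only [lap_eq_dl]
  rw [← Finset.sum_add_distrib]
  exact Finset.sum_congr rfl fun i _ => dl_add hu hv _ x

/-- The remainder `w` between the exact amplitude and the leading-order amplitude `A`: it solves
a transport equation with a dispersive correction of size `ε` and a source of size `ε`. -/
structure Err (f : ℝ → ℝ) (T ε : ℝ) (b : ℝ → Ed d → Ed d) (A w : ℝ → Ed d → ℂ) : Prop where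
  td : TD T w (fun t x => (ε / 2 * I : ℂ) * lap d (w t) x - Tr (b t) (w t) x +
    (ε / 2 * I : ℂ) * lap d (A t) x - I * (nl f (A t x + w t x) - nl f (A t x)))
  us : US (Icc 0 T) w
  w0 : ∀ x, w 0 x = 0

variable {f : ℝ → ℝ} {V φ : ℝ → Ed d → ℝ} {ψ A : ℝ → Ed d → ℂ}

/-- The remainder equation follows from the Schrödinger equation, the eikonal equation and the
transport equation for the leading-order amplitude. -/
lemma err_of {ε : ℝ} (hε : 0 < ε)
    (hT : 0 ≤ T) (tφ : TD T φ (fun t x => -((1 / 2) * ‖gradient (φ t) x‖ ^ 2) - V t x))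
    (pφ : PG (Icc 0 T) φ)
    (hψ : Sch T (ε / 2) (fun t x => ε⁻¹ * V t x + f (‖ψ t x‖ ^ 2)) ψ)
    (usA : US (Icc 0 T) A)
    (tA : TD T A (fun t x => - fderiv ℝ (A t) x (gradient (φ t) x)
      - ((1 / 2 * dv (gradient (φ t)) x : ℝ) : ℂ) * A t x
      - I * ((f (‖A t x‖ ^ 2) : ℝ) : ℂ) * A t x))
    (h0 : ∀ x, ph ε (φ 0) x * ψ 0 x = A 0 x) :
    Err f T ε (fun t => gradient (φ t)) A (fun t x => ph ε (φ t) x * ψ t x - A t x) := by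
  have zT : (0 : ℝ) ∈ Icc (0 : ℝ) T := left_mem_Icc.2 hT
  have pE : ∀ δ : ℝ, PG (Icc 0 T) (fun t x => cexp (I * (((-(φ t x / δ)) : ℝ) : ℂ))) := by
    intro δ
    have : PG (Icc 0 T) (fun t x => -(φ t x / δ)) :=
      (pφ.clm (ContinuousLinearMap.mul ℝ ℝ (-δ⁻¹))).congr fun t _ x => by
        simp [div_eq_mul_inv, mul_comm]
    exact this.exp
  have usψ : US (Icc 0 T) ψ := by
    refine hψ.us hT ?_
    have h1 : US (univ : Set Unit) (fun _ => A 0) := ⟨fun _ _ => usA.1 0 zT, fun n k =>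
      (usA.2 n k).reindex (fun _ => 0) fun _ _ => zT⟩
    refine (US.bilin (ContinuousLinearMap.mul ℝ ℂ) ((pE (-ε)).at zT) h1).congr fun _ _ x => ?_
    rw [← h0 x]
    change _ = cexp _ * (cexp _ * ψ 0 x)
    rw [← mul_assoc, ← Complex.exp_add]
    have : I * ((-(φ 0 x / -ε) : ℝ) : ℂ) + I * ((-(φ 0 x / ε) : ℝ) : ℂ) = 0 := by
      push_cast; rw [div_neg]; ring
    rw [this, Complex.exp_zero, one_mul]
  have usa : US (Icc 0 T) (fun t x => ph ε (φ t) x * ψ t x) :=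
    US.bilin (ContinuousLinearMap.mul ℝ ℂ) (pE ε) usψ
  have usw : US (Icc 0 T) (fun t x => ph ε (φ t) x * ψ t x - A t x) := by
    simp only [sub_eq_add_neg]; exact usa.add usA.neg
  have hε' : (ε : ℂ) ≠ 0 := by exact_mod_cast hε.ne'
  have ta : TD T (fun t x => ph ε (φ t) x * ψ t x) (fun t x =>
      (ph ε (φ t) x * (I * ((-((-((1 / 2) * ‖gradient (φ t) x‖ ^ 2) - V t x) / ε) : ℝ) : ℂ))) * ψ t x
      + ph ε (φ t) x * ((((ε / 2 : ℝ) : ℂ) * I) * lap d (ψ t) x +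
        (-I) * ((ε⁻¹ * V t x + f (‖ψ t x‖ ^ 2)) • ψ t x))) := by
    have c1 : ∀ x, ContinuousOn (fun t => ph ε (φ t) x) (Icc 0 T) := fun x =>
      (continuousOn_const.mul (continuous_ofReal.comp_continuousOn
        ((tφ.ct x).div_const ε).neg)).cexp
    refine ⟨fun x => (c1 x).mul (hψ.td.ct x), fun x => ?_, fun t ht x => ?_⟩
    · exact ((c1 x).mul (continuousOn_const.mul (continuous_ofReal.comp_continuousOn
        ((tφ.cg x).div_const ε).neg))).mul (hψ.td.ct x) |>.add ((c1 x).mul (hψ.td.cg x))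
    · have k1 : HasDerivAt (fun s => ph ε (φ s) x) _ t :=
        ((((tφ.hd t ht x).div_const ε).neg.ofReal_comp).const_mul I).cexp
      exact k1.mul (hψ.td.hd t ht x)
  refine ⟨(ta.add tA.neg).congr (fun t ht x => sub_eq_add_neg _ _) fun t ht x => ?_, usw,
    fun x => by rw [h0 x, sub_self]⟩
  have sφ := pφ.1 t ht
  have sψ := usψ.1 t ht
  have sA := usA.1 t ht
  have sw0 := usw.1 t ht
  have L := lap_ph sφ hε.ne' sψ x
  obtain ⟨w, hw⟩ : ∃ w : Ed d → ℂ, w = fun x => ph ε (φ t) x * ψ t x - A t x := ⟨_, rfl⟩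
  have sw : ContDiff ℝ (⊤ : ℕ∞) w := hw ▸ sw0
  change (ε / 2 * I : ℂ) * lap d (fun x => ph ε (φ t) x * ψ t x - A t x) x -
    Tr (gradient (φ t)) (fun x => ph ε (φ t) x * ψ t x - A t x) x +
    (ε / 2 * I : ℂ) * lap d (A t) x - I * (nl f (A t x +
      (fun x => ph ε (φ t) x * ψ t x - A t x) x) - nl f (A t x)) = _
  rw [← hw]
  have ea : (fun y => ph ε (φ t) y * ψ t y) = fun y => A t y + w y := by
    funext y; simp only [hw]; ring
  have el := lap_add sA sw x
  have et := Tr_add (b := gradient (φ t)) sA sw x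
  rw [ea, el, et] at L
  have eT : Tr (gradient (φ t)) (A t) x = fderiv ℝ (A t) x (gradient (φ t) x) +
      ((1 / 2 * dv (gradient (φ t)) x : ℝ) : ℂ) * A t x := by
    unfold Tr; rw [real_smul]
  have en : ‖ψ t x‖ = ‖ph ε (φ t) x * ψ t x‖ := by rw [norm_mul, norm_ph, one_mul]
  have ex : ph ε (φ t) x * ψ t x = A t x + w x := congrFun ea x
  rw [real_smul, en, ex]
  unfold nl
  rw [eT] at L
  set F : ℂ := ((f (‖A t x + w x‖ ^ 2) : ℝ) : ℂ)
  set F' : ℂ := ((f (‖A t x‖ ^ 2) : ℝ) : ℂ)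
  have ex' : ph ε (φ t) x * ψ t x = A t x + w x := ex
  rw [ex'] at L
  push_cast at L ⊢
  linear_combination -L - (I * (‖gradient (φ t) x‖ : ℂ) ^ 2 / (2 * ε) - I * F) * ex'

end Remainder

end WKB

namespace WKB

/-! ### The energy estimate for the remainder -/

section Energy

variable {d : ℕ} {T : ℝ} {f : ℝ → ℝ} {b : ℝ → Ed d → Ed d} {A : ℝ → Ed d → ℂ}

lemma dec_le_one (x : Ed d) : dec x ≤ 1 := inv_le_one_of_one_le₀ (one_le_pow₀ (one_le_w x))

lemma US.dec {F : Type} [NormedAddCommGroup F] [NormedSpace ℝ F] {ι : Type} {S : Set ι}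
    {u : ι → Ed d → F} (hu : US S u) : ∃ C : ℝ, 0 ≤ C ∧ ∀ i ∈ S, ∀ x, ‖u i x‖ ≤ C * dec x := by
  obtain ⟨C, hC, h⟩ := hu.2 0 (d + 1)
  refine ⟨C, hC, fun i hi x => ?_⟩
  have q := h i hi x
  rw [norm_iteratedFDeriv_zero] at q
  exact q

lemma US.NN_dec {ι : Type} {S : Set ι} {u : ι → Ed d → ℂ} (hu : US S u) (s : ℕ) :
    ∃ C : ℝ, 0 ≤ C ∧ ∀ i ∈ S, ∀ x, NN s (u i) x ≤ C * WKB.dec x :=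
  NN_bd (w := dw (d + 1)) fun n _ => hu.2 n (d + 1)

lemma US.dec_mul {F G : Type} [NormedAddCommGroup F] [NormedSpace ℝ F] [NormedAddCommGroup G]
    [NormedSpace ℝ G] {ι : Type} {S : Set ι} {u : ι → Ed d → F} {v : ι → Ed d → G}
    (hu : PG S u) (hv : US S v) :
    ∃ C : ℝ, 0 ≤ C ∧ ∀ i ∈ S, ∀ x, ‖u i x‖ * ‖v i x‖ ≤ C * WKB.dec x := by
  obtain ⟨r, C, hC, h⟩ := hu.2 0
  obtain ⟨C', hC', h'⟩ := hv.2 0 (r + (d + 1))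
  refine ⟨C * C', by positivity, fun i hi x => ?_⟩
  have h1 := h i hi x
  have h2 := h' i hi x
  rw [norm_iteratedFDeriv_zero] at h1 h2
  refine (mul_le_mul h1 h2 (norm_nonneg _) (mul_nonneg hC (pw_pos r i x).le)).trans (le_of_eq ?_)
  have := w_pos x
  simp only [pw, dw, WKB.dec, pow_add]
  field_simp

lemma lap_us {ι : Type} {S : Set ι} {u : ι → Ed d → ℂ} (hu : US S u) :
    US S (fun i => lap d (u i)) :=
  (hu.fderiv.fderiv.clm (lapL d)).congr fun i hi x => lap_eq (hu.1 i hi) x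

lemma us_rp {ι : Type} {S : Set ι} {u v : ι → Ed d → ℂ} (hu : PG S u) (hv : US S v) :
    US S (fun i x => rp (u i x) (v i x)) :=
  US.bilin (innerSL ℝ (E := ℂ)) hu hv

lemma us_Tr {S : Set ℝ} (pb : PG S b) (bb : BB S (fun t => fderiv ℝ (b t))) {w : ℝ → Ed d → ℂ}
    (hw : US S w) : US S (fun t => Tr (b t) (w t)) := by
  have h1 : US S (fun t x => fderiv ℝ (w t) x (b t x)) :=
    US.bilin (ContinuousLinearMap.apply ℝ ℂ) pb hw.fderiv
  have h2 : PG S (fun t x => 1 / 2 * dv (b t) x) :=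
    ((bb_dv bb).clm (ContinuousLinearMap.mul ℝ ℝ (1 / 2))).toPG
  exact h1.add (US.bilin (ContinuousLinearMap.lsmul ℝ ℝ) h2 hw)

lemma Err.pg {ε : ℝ} {w : ℝ → Ed d → ℂ} (hf : ContDiff ℝ (⊤ : ℕ∞) f) (pb : PG (Icc 0 T) b)
    (bb : BB (Icc 0 T) (fun t => fderiv ℝ (b t))) (hA : US (Icc 0 T) A)
    (h : Err f T ε b A w) : PG (Icc 0 T) (fun t x => (ε / 2 * I : ℂ) * lap d (w t) x
    - Tr (b t) (w t) x + (ε / 2 * I : ℂ) * lap d (A t) x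
    - I * (nl f (A t x + w t x) - nl f (A t x))) := by
  have h1 : PG (Icc 0 T) (fun t x => (ε / 2 * I : ℂ) * lap d (w t) x) :=
    (lap_us h.us).toPG.clm (ContinuousLinearMap.mul ℝ ℂ (ε / 2 * I))
  have h2 : PG (Icc 0 T) (fun t x => (ε / 2 * I : ℂ) * lap d (A t) x) :=
    (lap_us hA).toPG.clm (ContinuousLinearMap.mul ℝ ℂ (ε / 2 * I))
  have h3 := (us_Tr pb bb h.us).toPG
  have h4 : BB (Icc 0 T) (fun t x => nl f (A t x + w t x)) :=
    BB.comp_smooth (hA.toBB.add h.us.toBB) (nl_smooth hf)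
  have h5 : BB (Icc 0 T) (fun t x => nl f (A t x)) := BB.comp_smooth hA.toBB (nl_smooth hf)
  have h6 : PG (Icc 0 T) (fun t x => -I * (nl f (A t x + w t x) + -nl f (A t x))) :=
    (h4.add h5.neg).toPG.clm (ContinuousLinearMap.mul ℝ ℂ (-I))
  refine (((h1.add h3.neg).add h2).add h6).congr fun t _ x => ?_
  ring

/-- The transport operator is skew-adjoint up to a divergence. -/
lemma rp_Tr {v : Ed d → Ed d} {u : Ed d → ℂ} (hu : ContDiff ℝ (⊤ : ℕ∞) u) (x : Ed d) :
    2 * rp (u x) (Tr v u x) =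
      fderiv ℝ (fun y => rp (u y) (u y)) x (v x) + dv v x * rp (u x) (u x) := by
  have hd := hu.differentiable (by simp) x
  rw [rp_fderiv hd hd, rp_comm (fderiv ℝ u x (v x))]
  unfold Tr
  rw [rp_add, real_smul, rp_smul]
  ring

set_option maxHeartbeats 1000000 in
/-- The contribution of one word to the energy of the remainder. The constant depends neither on
`ε` nor on the remainder. -/
lemma word_energy (hf : ContDiff ℝ (⊤ : ℕ∞) f) (sb : Sm (Icc 0 T) b)
    (pb : PG (Icc 0 T) b) (bb : BB (Icc 0 T) (fun t => fderiv ℝ (b t))) (hA : US (Icc 0 T) A)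
    (s₀ s : ℕ) (hs : s ≤ 2 * s₀ + 1) (l : List (Fin d)) (hl : l.length ≤ s) :
    ∃ K : ℝ, 0 ≤ K ∧ ∀ (ε : ℝ) (w : ℝ → Ed d → ℂ), 0 < ε → Err f T ε b A w →
      (∀ t ∈ Icc (0 : ℝ) T, Integrable (fun x => ‖dl l (w t) x‖ ^ 2)) ∧
      ContinuousOn (fun t => ∫ x, ‖dl l (w t) x‖ ^ 2) (Icc 0 T) ∧
      ∃ F' : ℝ → ℝ, ∀ t ∈ Ioo (0 : ℝ) T,
        HasDerivAt (fun t => ∫ x, ‖dl l (w t) x‖ ^ 2) (F' t) t ∧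
        (Integrable (Q s (w t)) → (∀ x, NN s₀ (w t) x ≤ 1) →
          F' t ≤ K * (∫ x, Q s (w t) x) + K * ε ^ 2) := by
  obtain ⟨C1, hC1, b1⟩ := comm_Tr sb bb (bb_dv bb) l
  obtain ⟨C2, hC2, b2⟩ := nonlin hA.toBB s₀ l.length (hl.trans hs) ℂ (nl f) (nl_smooth hf)
  obtain ⟨C3, hC3, b3⟩ := ((lap_us hA).dl l).dec
  obtain ⟨C4, hC4, b4⟩ := NN_sq_le_Q d s
  have hdec : 0 ≤ ∫ x : Ed d, dec x := integral_nonneg fun x => (dec_pos x).le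
  refine ⟨(2 * (C1 + C2) + 1) * C4 + C3 ^ 2 * ∫ x : Ed d, dec x, by positivity,
    fun ε w hε h => ?_⟩
  set g : ℝ → Ed d → ℂ := fun t x => (ε / 2 * I : ℂ) * lap d (w t) x
    - Tr (b t) (w t) x + (ε / 2 * I : ℂ) * lap d (A t) x
    - I * (nl f (A t x + w t x) - nl f (A t x)) with hg
  have pg : PG (Icc 0 T) g := h.pg hf pb bb hA
  have sw := h.us.1
  have uu := h.us.dl l
  have pgl := pg.dl l
  have tl := h.td.dl sw pg l
  have uq : US (Icc 0 T) (fun t x => rp (dl l (w t) x) (dl l (w t) x)) := us_rp uu.toPG uu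
  have uq' : US (Icc 0 T) (fun t x => 2 * rp (dl l (w t) x) (dl l (g t) x)) :=
    ((us_rp pgl uu).clm (ContinuousLinearMap.mul ℝ ℝ 2)).congr fun t _ x => by
      rw [rp_comm]; rfl
  have eq : ∀ t x, rp (dl l (w t) x) (dl l (w t) x) = ‖dl l (w t) x‖ ^ 2 := fun t x => rp_self _
  obtain ⟨D1, hD1, k1⟩ := uq.dec
  obtain ⟨D2, hD2, k2⟩ := uq'.dec
  have td : TD T (fun t x => rp (dl l (w t) x) (dl l (w t) x))
      (fun t x => 2 * rp (dl l (w t) x) (dl l (g t) x)) := by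
    refine ⟨fun x => ContinuousOn.inner (𝕜 := ℝ) (tl.ct x) (tl.ct x), fun x =>
      continuousOn_const.mul (ContinuousOn.inner (𝕜 := ℝ) (tl.ct x) (tl.cg x)), fun t ht x => ?_⟩
    simp only [eq]
    exact (tl.hd t ht x).norm_sq
  obtain ⟨I1, I2⟩ := int_TD td (C := D1 + D2) (fun t ht => (uq.1 t ht).continuous)
    (fun t ht => (uq'.1 t ht).continuous)
    (fun t ht x => (k1 t ht x).trans (by have := mul_nonneg hD2 (dec_pos x).le; linarith))
    (fun t ht x => (k2 t ht x).trans (by have := mul_nonneg hD1 (dec_pos x).le; linarith))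
  have int1 : ∀ t ∈ Icc (0 : ℝ) T, Integrable (fun x => ‖dl l (w t) x‖ ^ 2) := fun t ht => by
    have := integrable_of_dec (uq.1 t ht).continuous (k1 t ht)
    simpa only [eq] using this
  simp only [eq] at I1 I2
  refine ⟨int1, I1, _, fun t ht => ⟨I2 t ht, fun iQ hsm => ?_⟩⟩
  have ht' := Ioo_subset_Icc_self ht
  have swt := sw t ht'
  have sA := hA.1 t ht'
  set u := dl l (w t) with hu
  have su : ContDiff ℝ (⊤ : ℕ∞) u := dl_smooth swt l
  -- the dispersive term integrates to zero
  obtain ⟨D3, hD3, k3⟩ := uu.NN_dec 2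
  obtain ⟨f1, f2, f3⟩ := schr_flux (ρ := fun _ => (1 : ℝ)) contDiff_const su (C := D3 ^ 2)
    (fun x => by
      have e1 : fderiv ℝ (fun _ : Ed d => (1 : ℝ)) x = 0 := fderiv_const_apply 1
      rw [e1, norm_zero, add_zero, abs_one, one_mul]
      have n0 : 0 ≤ D3 ^ 2 * dec x := mul_nonneg (sq_nonneg _) (dec_pos x).le
      calc NN 2 u x ^ 2 ≤ (D3 * dec x) ^ 2 := pow_le_pow_left₀ (NN_nonneg _ _ _) (k3 t ht' x) 2
        _ = (D3 ^ 2 * dec x) * dec x := by ring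
        _ ≤ D3 ^ 2 * dec x := mul_le_of_le_one_right n0 (dec_le_one x))
  have f4 : ∫ x, rp (u x) (I * lap d u x) = 0 := by
    have e1 : ∀ x, fderiv ℝ (fun _ : Ed d => (1 : ℝ)) x = 0 := fun x => fderiv_const_apply 1
    simpa [e1] using f3
  simp only [one_mul] at f1
  -- so does the transport term
  obtain ⟨E1, hE1, m1⟩ := US.dec_mul pb uq
  obtain ⟨E2, hE2, m2⟩ := US.dec_mul pb uq.fderiv
  obtain ⟨E3, hE3, m3⟩ := US.dec_mul bb.toPG uq
  obtain ⟨E4, hE4, m4⟩ := US.dec_mul bb.toPG uq.fderiv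
  obtain ⟨f5, f6⟩ := transport_flux (b := b t) (h := fun x => rp (u x) (u x)) (sb t ht')
    (uq.1 t ht') (C := E1 + E2 + E3 + E4) (fun x => by
      have n1 := m1 t ht' x
      have n2 := m2 t ht' x
      have n3 := m3 t ht' x
      have n4 := m4 t ht' x
      rw [Real.norm_eq_abs] at n1 n3
      linarith)
  set F : Ed d → ℝ := fun x => fderiv ℝ (fun y => rp (u y) (u y)) x (b t x) +
    dv (b t) x * rp (u x) (u x) with hF
  have iq' : Integrable (fun x => 2 * rp (u x) (dl l (g t) x)) :=
    integrable_of_dec (uq'.1 t ht').continuous (k2 t ht')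
  have irem : Integrable (fun x => 2 * rp (u x) (dl l (g t) x) -
      ε * rp (u x) (I * lap d u x)) := iq'.sub (f1.const_mul ε)
  have irem2 : Integrable (fun x => (2 * rp (u x) (dl l (g t) x) -
      ε * rp (u x) (I * lap d u x)) + F x) := irem.add f5
  have e1 : ∫ x, 2 * rp (u x) (dl l (g t) x) =
      ∫ x, ((2 * rp (u x) (dl l (g t) x) - ε * rp (u x) (I * lap d u x)) + F x) := by
    have i1 : ∫ x, ((2 * rp (u x) (dl l (g t) x) - ε * rp (u x) (I * lap d u x)) + F x) =
        (∫ x, (2 * rp (u x) (dl l (g t) x) - ε * rp (u x) (I * lap d u x))) + ∫ x, F x :=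
      integral_add irem f5
    have i2 : ∫ x, (2 * rp (u x) (dl l (g t) x) - ε * rp (u x) (I * lap d u x)) =
        (∫ x, 2 * rp (u x) (dl l (g t) x)) - ∫ x, ε * rp (u x) (I * lap d u x) :=
      integral_sub iq' (f1.const_mul ε)
    rw [i1, i2, integral_const_mul ε, f4, f6]; ring
  rw [e1]
  have e2 : ∫ x, (((2 * (C1 + C2) + 1) * C4) * Q s (w t) x + (C3 ^ 2 * ε ^ 2) * dec x) =
      ((2 * (C1 + C2) + 1) * C4) * (∫ x, Q s (w t) x) + (C3 ^ 2 * ε ^ 2) * ∫ x : Ed d, dec x := by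
    rw [← integral_const_mul, ← integral_const_mul]
    exact integral_add (iQ.const_mul _) (integrable_dec.const_mul _)
  have hQ0 : 0 ≤ ∫ x, Q s (w t) x := integral_nonneg fun x => Q_nonneg _ _ _
  refine le_trans (integral_mono irem2 ((iQ.const_mul _).add (integrable_dec.const_mul _))
    (g := fun x => ((2 * (C1 + C2) + 1) * C4) * Q s (w t) x + (C3 ^ 2 * ε ^ 2) * dec x) fun x => ?_) ?_
  · change 2 * rp (u x) (dl l (g t) x) - ε * rp (u x) (I * lap d u x) + F x ≤
      ((2 * (C1 + C2) + 1) * C4) * Q s (w t) x + (C3 ^ 2 * ε ^ 2) * dec x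
    have s1 : ContDiff ℝ (⊤ : ℕ∞) (Tr (b t) (w t)) := Tr_smooth (sb t ht') swt
    have s2 := lap_smooth swt
    have s3 := lap_smooth sA
    have s4 : ContDiff ℝ (⊤ : ℕ∞) (fun x => nl f (A t x + w t x) - nl f (A t x)) :=
      ((nl_smooth hf).comp (sA.add swt)).sub ((nl_smooth hf).comp sA)
    have eg : g t = fun x => ((ε / 2 * I : ℂ) * lap d (w t) x + (-1) * Tr (b t) (w t) x) +
        ((ε / 2 * I : ℂ) * lap d (A t) x + (-I) * (nl f (A t x + w t x) - nl f (A t x))) := by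
      funext x; simp only [hg]; ring
    have edl : dl l (g t) x = ((ε / 2 * I : ℂ) * lap d u x + (-1) * dl l (Tr (b t) (w t)) x) +
        ((ε / 2 * I : ℂ) * dl l (lap d (A t)) x +
          (-I) * dl l (fun x => nl f (A t x + w t x) - nl f (A t x)) x) := by
      rw [eg, dl_add ((contDiff_const.mul s2).add (contDiff_const.mul s1))
        ((contDiff_const.mul s3).add (contDiff_const.mul s4)),
        dl_add (contDiff_const.mul s2) (contDiff_const.mul s1),
        dl_add (contDiff_const.mul s3) (contDiff_const.mul s4), dl_mul s2, dl_mul s1, dl_mul s3,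
        dl_mul s4, dl_lap swt]
    set r1 := dl l (Tr (b t) (w t)) x - Tr (b t) u x with hr1
    set r2 := dl l (lap d (A t)) x with hr2
    set r3 := dl l (fun x => nl f (A t x + w t x) - nl f (A t x)) x with hr3
    have edl2 : dl l (g t) x = ((ε / 2 : ℝ) : ℂ) * (I * lap d u x) + (((-1 : ℝ) : ℂ) * Tr (b t) u x +
        (-r1 + (((ε / 2 : ℝ) : ℂ) * (I * r2) + (-(I * r3))))) := by
      rw [edl, hr1]; push_cast; ring
    have p1 : ‖r1‖ ≤ C1 * NN s (w t) x := (b1 t ht' (w t) swt x).trans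
      (mul_le_mul_of_nonneg_left (NN_mono hl _ _) hC1)
    have p2 : ‖r3‖ ≤ C2 * NN s (w t) x := (norm_dl s4 l x).trans
      ((b2 t ht' (w t) swt x (hsm x)).trans (mul_le_mul_of_nonneg_left (NN_mono hl _ _) hC2))
    have p3 : ‖r2‖ ≤ C3 * dec x := b3 t ht' x
    have p4 : ‖u x‖ ≤ NN s (w t) x := dl_le_NN swt hl x
    have p5 := b4 (w t) swt x
    have n0 := NN_nonneg s (w t) x
    have q1 : rp (u x) (-r1) ≤ NN s (w t) x * (C1 * NN s (w t) x) :=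
      (le_abs_self _).trans ((rp_le _ _).trans
        (mul_le_mul p4 (by rwa [norm_neg]) (norm_nonneg _) n0))
    have q2 : rp (u x) (-(I * r3)) ≤ NN s (w t) x * (C2 * NN s (w t) x) :=
      (le_abs_self _).trans ((rp_le _ _).trans
        (mul_le_mul p4 (by simpa using p2) (norm_nonneg _) n0))
    have q3 : rp (u x) (I * r2) ≤ NN s (w t) x * (C3 * dec x) :=
      (le_abs_self _).trans ((rp_le _ _).trans
        (mul_le_mul p4 (by simpa using p3) (norm_nonneg _) n0))
    have q4 := rp_Tr (v := b t) su x
    rw [edl2, rp_add, rp_smul, rp_add, rp_smul, rp_add, rp_add, rp_smul]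
    have d0 := (dec_pos x).le
    have d1 : (C3 * ε * dec x) ^ 2 ≤ C3 ^ 2 * ε ^ 2 * dec x := by
      have := mul_le_of_le_one_right (mul_nonneg (mul_nonneg (sq_nonneg C3) (sq_nonneg ε)) d0)
        (dec_le_one x)
      calc (C3 * ε * dec x) ^ 2 = C3 ^ 2 * ε ^ 2 * dec x * dec x := by ring
        _ ≤ _ := this
    have q5 : ε * rp (u x) (I * r2) ≤ NN s (w t) x ^ 2 + C3 ^ 2 * ε ^ 2 * dec x := by
      have := mul_le_mul_of_nonneg_left q3 hε.le
      nlinarith [sq_nonneg (NN s (w t) x - C3 * ε * dec x), sq_nonneg (NN s (w t) x),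
        sq_nonneg (C3 * ε * dec x)]
    have q6 : (2 * (C1 + C2) + 1) * NN s (w t) x ^ 2 ≤ (2 * (C1 + C2) + 1) * (C4 * Q s (w t) x) :=
      mul_le_mul_of_nonneg_left p5 (by positivity)
    simp only [hF]
    rw [← q4]
    generalize NN s (w t) x = N at *
    generalize Q s (w t) x = q at *
    linarith
  · rw [e2]
    have : 0 ≤ (2 * (C1 + C2) + 1) * C4 * ε ^ 2 := by positivity
    have : 0 ≤ (C3 ^ 2 * ∫ x : Ed d, dec x) * ∫ x, Q s (w t) x := by positivity
    linarith

/-- The local Sobolev inequality in terms of the energy density. -/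
lemma sob_Q (d m : ℕ) : ∃ C : ℝ, 0 ≤ C ∧ ∀ u : Ed d → ℂ, ContDiff ℝ (⊤ : ℕ∞) u →
    Integrable (Q (m + 2 * (d + 1)) u) →
    ∀ x, NN m u x ^ 2 ≤ C * ∫ x, Q (m + 2 * (d + 1)) u x := by
  obtain ⟨C1, h1, b1⟩ := sobolev_loc d m
  obtain ⟨C2, h2, b2⟩ := NN_sq_le_Q d (m + 2 * (d + 1))
  refine ⟨C1 * C2, by positivity, fun u hu hi x => (b1 u hu x).trans ?_⟩
  rw [mul_assoc]
  refine mul_le_mul_of_nonneg_left ?_ h1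
  rw [← integral_const_mul]
  refine le_trans (b := ∫ y in Metric.closedBall x 1, C2 * Q (m + 2 * (d + 1)) u y) ?_ ?_
  · refine setIntegral_mono_on ?_ (hi.const_mul _).integrableOn
      Metric.isClosed_closedBall.measurableSet fun y _ => b2 u hu y
    exact ((NN_continuous hu _).pow 2).continuousOn.integrableOn_compact
      (isCompact_closedBall x 1)
  · exact setIntegral_le_integral (hi.const_mul _)
      (Eventually.of_forall fun y => mul_nonneg h2 (Q_nonneg _ _ _))

/-- A differential inequality which holds as long as the energy is small holds on the whole
interval, if the resulting Gronwall bound is small. -/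
lemma bootstrap {K δ η : ℝ} {F F' : ℝ → ℝ} (hK : 0 ≤ K) (hδ : 0 ≤ δ)
    (hc : ContinuousOn F (Icc 0 T)) (hd : ∀ t ∈ Ioo 0 T, HasDerivAt F (F' t) t)
    (h0 : F 0 = 0) (hb : ∀ t ∈ Ioo 0 T, F t ≤ η → F' t ≤ K * F t + δ)
    (hη : δ * T * Real.exp (K * T) < η) {t : ℝ} (ht : t ∈ Icc 0 T) :
    F t ≤ δ * T * Real.exp (K * T) := by
  have step : ∀ τ ∈ Icc (0 : ℝ) T, (∀ r ∈ Ioo 0 τ, F r ≤ η) →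
      F τ ≤ δ * T * Real.exp (K * T) := by
    intro τ hτ hr
    have g := gron (T := τ) hK hδ (hc.mono (Icc_subset_Icc_right hτ.2))
      (fun r hr => hd r ⟨hr.1, hr.2.trans_le hτ.2⟩) (δ := 0) h0.le
      (fun r hr' => hb r ⟨hr'.1, hr'.2.trans_le hτ.2⟩ (hr r hr')) (t := τ) ⟨hτ.1, le_rfl⟩
    refine g.trans ?_
    rw [zero_add]
    have h1 : δ * τ ≤ δ * T := mul_le_mul_of_nonneg_left hτ.2 hδ
    have h2 : Real.exp (K * τ) ≤ Real.exp (K * T) :=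
      Real.exp_le_exp.2 (mul_le_mul_of_nonneg_left hτ.2 hK)
    exact mul_le_mul h1 h2 (Real.exp_pos _).le (mul_nonneg hδ (hτ.1.trans hτ.2))
  refine step t ht fun r hr => ?_
  by_contra hcon
  -- the first time at which the energy reaches the threshold
  set Z := Icc (0 : ℝ) T ∩ F ⁻¹' Ici η with hZ
  have cZ : IsCompact Z := isCompact_Icc.of_isClosed_subset
    (hc.preimage_isClosed_of_isClosed isClosed_Icc isClosed_Ici) inter_subset_left
  obtain ⟨τ, hτ, hmin⟩ := cZ.exists_isLeast
    ⟨r, ⟨hr.1.le, hr.2.le.trans ht.2⟩, (not_le.1 hcon).le⟩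
  have h1 := step τ hτ.1 fun r hr => by
    by_contra h2
    exact absurd (hmin ⟨⟨hr.1.le, hr.2.le.trans hτ.1.2⟩, (not_le.1 h2).le⟩) (not_le.2 hr.2)
  exact absurd (lt_of_le_of_lt h1 hη) (not_lt.2 hτ.2)

/-- The remainder is of size `ε` in the energy norm. -/
lemma energy (hT : 0 < T) (hf : ContDiff ℝ (⊤ : ℕ∞) f) (sb : Sm (Icc 0 T) b)
    (pb : PG (Icc 0 T) b) (bb : BB (Icc 0 T) (fun t => fderiv ℝ (b t))) (hA : US (Icc 0 T) A)
    {s : ℕ} (hs : s = 2 * (d + 1) + 2 * (d + 1)) :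
    ∃ C : ℝ, 0 ≤ C ∧ ∃ ε₁ : ℝ, 0 < ε₁ ∧ ∀ (ε : ℝ) (w : ℝ → Ed d → ℂ), 0 < ε → ε ≤ ε₁ →
      Err f T ε b A w → ∀ t ∈ Icc (0 : ℝ) T,
        Integrable (Q s (w t)) ∧ ∫ x, Q s (w t) x ≤ C * ε ^ 2 := by
  set s₀ := 2 * (d + 1) with hs₀
  have word : ∀ l : List (Fin d), ∃ K : ℝ, 0 ≤ K ∧ (l ∈ W d s →
      ∀ (ε : ℝ) (w : ℝ → Ed d → ℂ), 0 < ε → Err f T ε b A w →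
      (∀ t ∈ Icc (0 : ℝ) T, Integrable (fun x => ‖dl l (w t) x‖ ^ 2)) ∧
      ContinuousOn (fun t => ∫ x, ‖dl l (w t) x‖ ^ 2) (Icc 0 T) ∧
      ∃ F' : ℝ → ℝ, ∀ t ∈ Ioo (0 : ℝ) T,
        HasDerivAt (fun t => ∫ x, ‖dl l (w t) x‖ ^ 2) (F' t) t ∧
        (Integrable (Q s (w t)) → (∀ x, NN s₀ (w t) x ≤ 1) →
          F' t ≤ K * (∫ x, Q s (w t) x) + K * ε ^ 2)) := by
    intro l
    by_cases hl : l ∈ W d s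
    · obtain ⟨K, hK, h⟩ := word_energy hf sb pb bb hA s₀ s (by omega) l (mem_W.1 hl)
      exact ⟨K, hK, fun _ => h⟩
    · exact ⟨0, le_rfl, fun h => absurd h hl⟩
  choose Kl hKl hw using word
  set K := ∑ l ∈ W d s, Kl l with hKdef
  have hK : 0 ≤ K := Finset.sum_nonneg fun l _ => hKl l
  obtain ⟨C0, hC0, b0⟩ := sob_Q d s₀
  rw [← hs] at b0
  set η := (C0 + 1)⁻¹ with hη
  have hη0 : 0 < η := by positivity
  set M := K * T * Real.exp (K * T) with hM
  have hM0 : 0 ≤ M := by positivity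
  have hsq : 0 < η / (M + 1) := by positivity
  refine ⟨M, hM0, √(η / (M + 1)), Real.sqrt_pos.2 hsq, fun ε w hε hε1 h => ?_⟩
  have hε2 : ε ^ 2 ≤ η / (M + 1) := by
    have := pow_le_pow_left₀ hε.le hε1 2
    rwa [Real.sq_sqrt hsq.le] at this
  have iQ : ∀ t ∈ Icc (0 : ℝ) T, Integrable (Q s (w t)) := fun t ht =>
    integrable_finsetSum _ fun l hl => (hw l hl ε w hε h).1 t ht
  have esum : ∀ t ∈ Icc (0 : ℝ) T, ∫ x, Q s (w t) x = ∑ l ∈ W d s, ∫ x, ‖dl l (w t) x‖ ^ 2 :=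
    fun t ht => integral_finsetSum _ fun l hl => (hw l hl ε w hε h).1 t ht
  have wd : ∀ l : List (Fin d), ∃ F' : ℝ → ℝ, l ∈ W d s → ∀ t ∈ Ioo (0 : ℝ) T,
        HasDerivAt (fun t => ∫ x, ‖dl l (w t) x‖ ^ 2) (F' t) t ∧
        (Integrable (Q s (w t)) → (∀ x, NN s₀ (w t) x ≤ 1) →
          F' t ≤ Kl l * (∫ x, Q s (w t) x) + Kl l * ε ^ 2) := by
    intro l
    by_cases hl : l ∈ W d s
    · obtain ⟨F', hF'⟩ := (hw l hl ε w hε h).2.2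
      exact ⟨F', fun _ => hF'⟩
    · exact ⟨0, fun h => absurd h hl⟩
  choose F' hF' using wd
  have key : ∀ t ∈ Icc (0 : ℝ) T, ∫ x, Q s (w t) x ≤ K * ε ^ 2 * T * Real.exp (K * T) := by
    intro t ht
    refine bootstrap (F := fun t => ∫ x, Q s (w t) x) (F' := fun t => ∑ l ∈ W d s, F' l t)
      (η := η) hK (by positivity)
      ((continuousOn_finsetSum _ fun l hl => (hw l hl ε w hε h).2.1).congr esum)
      (fun t ht => ?_) ?_ (fun t ht hle => ?_) ?_ ht
    · have hs : HasDerivAt (fun t => ∑ l ∈ W d s, ∫ x, ‖dl l (w t) x‖ ^ 2)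
          (∑ l ∈ W d s, F' l t) t :=
        HasDerivAt.fun_sum fun l hl => (hF' l hl t ht).1
      refine hs.congr_of_eventuallyEq ?_
      filter_upwards [Icc_mem_nhds ht.1 ht.2] with s hs
      exact esum s hs
    · have e0 : w 0 = fun _ => (0 : ℂ) := funext h.w0
      simp [Q, e0, dl_zero]
    · have ht' := Ioo_subset_Icc_self ht
      have small : ∀ x, NN s₀ (w t) x ≤ 1 := fun x => by
        have h1 := b0 (w t) (h.us.1 t ht') (iQ t ht') x
        have h2 : C0 * ∫ x, Q s (w t) x ≤ C0 * η := mul_le_mul_of_nonneg_left hle hC0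
        have h3 : C0 * η ≤ 1 := by
          rw [hη, ← div_eq_mul_inv, div_le_one (by positivity)]; linarith
        exact (sq_le_one_iff₀ (NN_nonneg _ _ _)).1 (by linarith)
      refine (Finset.sum_le_sum fun l hl => (hF' l hl t ht).2 (iQ t ht') small).trans ?_
      rw [Finset.sum_add_distrib, ← Finset.sum_mul, ← Finset.sum_mul]
    · calc K * ε ^ 2 * T * Real.exp (K * T) = M * ε ^ 2 := by rw [hM]; ring
        _ ≤ M * (η / (M + 1)) := mul_le_mul_of_nonneg_left hε2 hM0
        _ < η := by
          rw [mul_div_assoc', div_lt_iff₀ (by positivity)]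
          linarith
  exact fun t ht => ⟨iQ t ht, (key t ht).trans (le_of_eq (by rw [hM]; ring))⟩

end Energy

end WKB

namespace WKB

/-! ### From the energy to the norms of the theorem -/

section Norms

variable {d : ℕ}

/-- Control of the `L²` and `L^∞` norms by a high-order energy. -/
lemma norms_le (d : ℕ) {s : ℕ} (hs : s = 2 * (d + 1) + 2 * (d + 1)) :
    ∃ B : ℝ, 0 ≤ B ∧ ∀ u : Ed d → ℂ, ContDiff ℝ (⊤ : ℕ∞) u → Integrable (Q s u) →
      ∀ M : ℝ, 0 ≤ M → ∫ x, Q s u x ≤ M ^ 2 →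
        (eLpNorm u 2 volume).toReal + (eLpNorm u ⊤ volume).toReal ≤ B * M := by
  obtain ⟨C, hC, b⟩ := sob_Q d (2 * (d + 1))
  refine ⟨1 + √C, by positivity, fun u hu hi M hM hQ => ?_⟩
  have le_Q : ∀ x, ‖u x‖ ^ 2 ≤ Q s u x := fun x =>
    Finset.single_le_sum (f := fun l => ‖dl l u x‖ ^ 2) (fun _ _ => sq_nonneg _)
      (mem_W.2 (Nat.zero_le s) : ([] : List (Fin d)) ∈ W d s)
  have isq : Integrable (fun x => ‖u x‖ ^ 2) :=
    hi.mono' (hu.continuous.norm.pow 2).aestronglyMeasurable (Eventually.of_forall fun x => by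
      rw [Real.norm_of_nonneg (sq_nonneg _)]; exact le_Q x)
  have mem : MemLp u 2 volume :=
    (memLp_two_iff_integrable_sq_norm hu.continuous.aestronglyMeasurable).2 isq
  have h1 : (eLpNorm u 2 volume).toReal ≤ M := by
    rw [eLpNorm_two mem, ENNReal.toReal_ofReal (Real.sqrt_nonneg _)]
    refine Real.sqrt_le_iff.2 ⟨hM, ?_⟩
    exact (integral_mono isq hi le_Q).trans hQ
  have h2 : (eLpNorm u ⊤ volume).toReal ≤ √C * M := by
    refine ENNReal.toReal_le_of_le_ofReal (by positivity) ?_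
    rw [eLpNorm_exponent_top]
    refine eLpNormEssSup_le_of_ae_bound (Eventually.of_forall fun x => ?_)
    refine (norm_le_NN u (2 * (d + 1)) x).trans ?_
    refine abs_le_of_sq_le_sq' ?_ (by positivity) |>.2
    rw [mul_pow, Real.sq_sqrt hC]
    subst hs
    exact (b u hu hi x).trans (mul_le_mul_of_nonneg_left hQ hC)
  linarith

end Norms

end WKB

/-- WKB asymptotics with a weakly nonlinear `O(ε)` perturbation. Before
any caustic, the solution of `iε∂_tψ = -(ε²/2)Δψ + Vψ + εf(|ψ|²)ψ` with WKB data
`a₀e^{iφ₀/ε}` is `a e^{iG} e^{iφ_eik/ε} + o(1)` in `L² ∩ L^∞`, uniformly on `[0,T]`,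
where the phase shift `G` records the leading-order nonlinear effect. -/
theorem weakly_nonlinear_wkb_asymptotics
    (d : ℕ) (hd : 1 ≤ d)
    (f : ℝ → ℝ) (hf : ContDiff ℝ (⊤ : ℕ∞) f)
    (a₀ : SchwartzMap (Ed d) ℂ)
    (V : ℝ → Ed d → ℝ)
    (hV_smooth : ContDiff ℝ (⊤ : ℕ∞) (fun p : ℝ × Ed d => V p.1 p.2))
    (hV_sub : ∀ T' : ℝ, 0 < T' → ∀ n : ℕ, 2 ≤ n → ∃ C : ℝ,
      ∀ t ∈ Set.Icc (-T') T', ∀ x : Ed d, ‖iteratedFDeriv ℝ n (V t) x‖ ≤ C)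
    (φ₀ : Ed d → ℝ)
    (hφ₀_smooth : ContDiff ℝ (⊤ : ℕ∞) φ₀)
    (hφ₀_sub : ∀ n : ℕ, 2 ≤ n → ∃ C : ℝ, ∀ x : Ed d, ‖iteratedFDeriv ℝ n φ₀ x‖ ≤ C)
    (T : ℝ) (hT : 0 < T)
    -- the eikonal phase
    (φ : ℝ → Ed d → ℝ)
    (hφ_smooth : ContDiff ℝ (⊤ : ℕ∞) (fun p : ℝ × Ed d => φ p.1 p.2))
    (hφ_eik : ∀ t ∈ Set.Icc (0 : ℝ) T, ∀ x : Ed d,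
      deriv (fun s => φ s x) t + (1 / 2) * ‖gradient (φ t) x‖ ^ 2 + V t x = 0)
    (hφ_init : ∀ x, φ 0 x = φ₀ x)
    (hφ_sub : ∀ n : ℕ, 2 ≤ n → ∃ C : ℝ,
      ∀ t ∈ Set.Icc (0 : ℝ) T, ∀ x : Ed d, ‖iteratedFDeriv ℝ n (φ t) x‖ ≤ C)
    -- the Hamiltonian flow and its inverse
    (X Ξ : ℝ → Ed d → Ed d)
    (hflow_init : ∀ y, X 0 y = y ∧ Ξ 0 y = gradient φ₀ y)
    (hflow_ode : ∀ t ∈ Set.Icc (0 : ℝ) T, ∀ y,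
      HasDerivAt (fun s => X s y) (Ξ t y) t ∧
      HasDerivAt (fun s => Ξ s y) (-gradient (V t) (X t y)) t)
    (Y : ℝ → Ed d → Ed d)
    (hdiffeo : ∀ t ∈ Set.Icc (0 : ℝ) T, ContDiff ℝ (⊤ : ℕ∞) (X t) ∧ ContDiff ℝ (⊤ : ℕ∞) (Y t) ∧
      Function.LeftInverse (Y t) (X t) ∧ Function.RightInverse (Y t) (X t))
    (c : ℝ) (hc : 0 < c)
    (hJ : ∀ t ∈ Set.Icc (0 : ℝ) T, ∀ y, c ≤ Jdet d X t y)
    -- the solution family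
    (ψ : ℝ → ℝ → Ed d → ℂ)
    (hadm : AdmissibleFamily d T ψ)
    (heq : ∀ ε ∈ Set.Ioc (0 : ℝ) 1, ∀ t ∈ Set.Icc (0 : ℝ) T, ∀ x : Ed d,
      Complex.I * (ε : ℂ) * deriv (fun s => ψ ε s x) t =
        -(((ε : ℂ) ^ 2) / 2) * lap d (ψ ε t) x + ((V t x : ℝ) : ℂ) * ψ ε t x +
          (ε : ℂ) * ((f (‖ψ ε t x‖ ^ 2) : ℝ) : ℂ) * ψ ε t x)
    (hinit : ∀ ε ∈ Set.Ioc (0 : ℝ) 1, ∀ x : Ed d,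
      ψ ε 0 x = a₀ x * Complex.exp (Complex.I * ((φ₀ x / ε : ℝ) : ℂ))) :
    Tendsto (fun ε : ℝ =>
        ⨆ t : Set.Icc (0 : ℝ) T,
          ((eLpNorm (fun x =>
              ψ ε (t : ℝ) x -
                (((Real.sqrt (Jdet d X (t : ℝ) (Y (t : ℝ) x)))⁻¹ : ℝ) : ℂ) *
                  a₀ (Y (t : ℝ) x) *
                  Complex.exp (Complex.I *
                    (((-∫ s in (0 : ℝ)..(t : ℝ),
                        f ((Jdet d X s (Y (t : ℝ) x))⁻¹ * ‖a₀ (Y (t : ℝ) x)‖ ^ 2) : ℝ)) : ℂ)) *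
                  Complex.exp (Complex.I * ((φ (t : ℝ) x / ε : ℝ) : ℂ)))
              2 volume).toReal +
            (eLpNorm (fun x =>
              ψ ε (t : ℝ) x -
                (((Real.sqrt (Jdet d X (t : ℝ) (Y (t : ℝ) x)))⁻¹ : ℝ) : ℂ) *
                  a₀ (Y (t : ℝ) x) *
                  Complex.exp (Complex.I *
                    (((-∫ s in (0 : ℝ)..(t : ℝ),
                        f ((Jdet d X s (Y (t : ℝ) x))⁻¹ * ‖a₀ (Y (t : ℝ) x)‖ ^ 2) : ℝ)) : ℂ)) *
                  Complex.exp (Complex.I * ((φ (t : ℝ) x / ε : ℝ) : ℂ)))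
              ⊤ volume).toReal))
      (nhdsWithin 0 (Set.Ioc 0 1)) (nhds 0) := by
  have bV : ∀ n, 2 ≤ n → WKB.Bd (Icc 0 T) WKB.one n V := fun n hn => WKB.Bd.of_forall (by
    obtain ⟨C, hC⟩ := hV_sub T hT n hn
    exact ⟨C, fun t ht x => hC t ⟨by linarith [ht.1], ht.2⟩ x⟩)
  have bφ : ∀ n, 2 ≤ n → WKB.Bd (Icc 0 T) WKB.one n φ := fun n hn =>
    WKB.Bd.of_forall (hφ_sub n hn)
  have jV : WKB.JS V := hV_smooth
  have jφ : WKB.JS φ := hφ_smooth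
  have eφ : φ 0 = φ₀ := funext hφ_init
  have flow : WKB.Flow T (fun t => gradient (φ t)) X Y :=
    WKB.flow_of_eik hT jφ jV bφ bV hφ_eik (by rw [eφ]; exact hflow_init) hflow_ode hdiffeo
  obtain ⟨tφ, -⟩ := WKB.eik_gradient jφ jV bφ bV hφ_eik
  have pφ := (jφ.subquadratic bφ).2.2
  obtain ⟨uA, tA⟩ := flow.amp hf a₀
  set A := WKB.amp f a₀ (fun t => gradient (φ t)) X Y with hA
  obtain ⟨B, hB, nB⟩ := WKB.norms_le d rfl
  obtain ⟨C, hC, ε₁, hε₁, en⟩ := WKB.energy hT hf flow.sb flow.pb flow.bb uA rfl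
  have bound : ∀ ε ∈ Ioc (0 : ℝ) 1, ε ≤ ε₁ → ∀ t ∈ Icc (0 : ℝ) T, ∀ R : Ed d → ℂ,
      (∀ x, R x = ψ ε t x - A t x * Complex.exp (Complex.I * ((φ t x / ε : ℝ) : ℂ))) →
      (eLpNorm R 2 volume).toReal + (eLpNorm R ⊤ volume).toReal ≤ B * (√C * ε) := by
    intro ε hε hε' t ht R hR
    obtain ⟨k1, k2, k3, k4, -⟩ := hadm ε hε
    have sch := WKB.adm_sch hε.1 hf jV bV k1 k2 k3 k4 (heq ε hε)
    have key : ∀ (t : ℝ) (x : Ed d), WKB.ph ε (φ t) x *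
        Complex.exp (Complex.I * ((φ t x / ε : ℝ) : ℂ)) = 1 := fun t x => by
      rw [WKB.ph, ← Complex.exp_add, ← mul_add, ← Complex.ofReal_add, neg_add_cancel,
        Complex.ofReal_zero, mul_zero, Complex.exp_zero]
    have err := WKB.err_of hε.1 hT.le tφ pφ sch uA tA (fun x => by
      rw [hinit ε hε x, hA, flow.amp_zero, ← hφ_init x, mul_left_comm, key, mul_one])
    obtain ⟨iQ, bQ⟩ := en ε _ hε.1 hε' err t ht
    have e : ∀ x, ‖R x‖ = ‖WKB.ph ε (φ t) x * ψ ε t x - A t x‖ := fun x => by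
      rw [← one_mul ‖R x‖, ← WKB.norm_ph ε (φ t) x, ← norm_mul, hR x, mul_sub, mul_left_comm, key,
        mul_one]
    rw [eLpNorm_congr_norm_ae (Eventually.of_forall e), eLpNorm_congr_norm_ae
      (Eventually.of_forall e)]
    refine nB _ (err.us.1 t ht) iQ _ (mul_nonneg (Real.sqrt_nonneg _) hε.1.le) (bQ.trans_eq ?_)
    rw [mul_pow, Real.sq_sqrt hC]
  have lim : Tendsto (fun ε : ℝ => B * (√C * ε)) (nhdsWithin 0 (Ioc 0 1)) (nhds 0) := by
    have : Tendsto (fun ε : ℝ => B * (√C * ε)) (nhds 0) (nhds (B * (√C * 0))) :=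
      (continuous_const.mul (continuous_const.mul continuous_id)).tendsto 0
    simp only [mul_zero] at this
    exact this.mono_left nhdsWithin_le_nhds
  refine squeeze_zero' (Eventually.of_forall fun ε => Real.iSup_nonneg fun t =>
    add_nonneg ENNReal.toReal_nonneg ENNReal.toReal_nonneg) ?_ lim
  have ev : ∀ᶠ ε in nhdsWithin (0 : ℝ) (Ioc 0 1), ε ≤ ε₁ :=
    nhdsWithin_le_nhds (Iic_mem_nhds hε₁)
  filter_upwards [ev, self_mem_nhdsWithin] with ε h1 h2
  refine Real.iSup_le (fun t => bound ε h2 h1 t t.2 _ fun x => ?_)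
    (mul_nonneg hB (mul_nonneg (Real.sqrt_nonneg _) h2.1.le))
  rw [hA, flow.amp_eq f a₀ t.2 x]
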